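/- arXiv:2406.06926 — 2 statements merged into one kernel-verified Lean document; each statement's English description precedes it below -/
import Mathlib

section
/- Let d ≥ 2, 0 < s ≤ 1, 1 < γ < ∞, 1 ≤ p, q < ∞, 1 < α < d, and 0 < β₁, β₂ < ∞ be such that β₁p + 2β₂q = 1 and (d − sp)β₁ + (d + α)β₂ = d/γ, and 𝒟 = p(d+α) − 2q(d−sp) ≠ 0. Assume that either β₁γ + ((d+α−2)/(d−1)) β₂γ > 1, or (β₁γ + ((d+α−2)/(d−1)) β₂γ = 1 and q(1−sp) = p). Then there exists a constant C > 0 such that for every radial g ∈ C¹_{c,rad}(ℝ^d): ‖g‖_{L^γ(ℝ^d)} ≤ C ‖g‖_{Ẇ^{s,p}(ℝ^d)}^{β₁p} ( ∫_{ℝ^d}∫_{ℝ^d} |g(x)|^q |g(y)|^q / |x−y|^{d−α} dx dy )^{β₂}. -/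
open MeasureTheory Real

/-- Homogeneous (fractional) Sobolev seminorm `‖g‖_{Ẇ^{s,p}(ℝ^d)}`:
for `0 < s < 1` the Gagliardo seminorm, for `s = 1` the `L^p` norm of the gradient. -/
noncomputable def sobolevSemi (d : ℕ) (s p : ℝ) (g : EuclideanSpace ℝ (Fin d) → ℝ) : ℝ :=
  if s = 1 then (∫ x, ‖fderiv ℝ g x‖ ^ p) ^ (1 / p)
  else if s = 0 then (∫ x, |g x| ^ p) ^ (1 / p)
  else (∫ x, ∫ y, |g x - g y| ^ p / ‖x - y‖ ^ ((d : ℝ) + s * p)) ^ (1 / p)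

/-- The Coulomb energy `∫∫ |g x|^q |g y|^q / |x-y|^{d-α} dx dy`. -/
noncomputable def coulombEnergy (d : ℕ) (q α : ℝ) (g : EuclideanSpace ℝ (Fin d) → ℝ) : ℝ :=
  ∫ x, ∫ y, |g x| ^ q * |g y| ^ q / ‖x - y‖ ^ ((d : ℝ) - α)

section Auxiliary

open Set

lemma ofReal_rpow_le_gagliardo_of_lt {u : ℝ → ℝ} (hu : Measurable u) {p κ s R w N : ℝ}
    (hp : 0 < p) (hs : 0 ≤ s) (hκ : 0 < κ) (hw : 0 < w) (hwR : 2 * w ≤ R)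
    {r : ℝ} (hr : r ∈ Icc R (2 * R)) (hN0 : 0 ≤ N)
    (hN : ∫⁻ ρ in Icc R (2 * R), ENNReal.ofReal (|u ρ| ^ κ) ≤ ENNReal.ofReal N)
    (hlt : 2 ^ (κ + 1) * N < w * |u r| ^ κ) :
    ENNReal.ofReal (|u r| ^ p) ≤ ENNReal.ofReal (2 ^ (p + 1) * w ^ (s * p)) *
      ∫⁻ ρ in Icc R (2 * R), ENNReal.ofReal (|u r - u ρ| ^ p / |r - ρ| ^ (1 + s * p)) := by
  obtain ⟨c, hc1, hc2, hcr⟩ : ∃ c, R ≤ c ∧ c + w ≤ 2 * R ∧ ∀ ρ ∈ Icc c (c + w), |r - ρ| ≤ w := by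
    rcases le_total r (3 / 2 * R) with h | h
    · refine ⟨r, hr.1, by linarith, fun ρ hρ => ?_⟩
      rw [abs_le]; constructor <;> linarith [hρ.1, hρ.2]
    · refine ⟨r - w, by linarith, by linarith [hr.2], fun ρ hρ => ?_⟩
      rw [abs_le]; constructor <;> linarith [hρ.1, hρ.2]
  have hJ : Icc c (c + w) ⊆ Icc R (2 * R) := Icc_subset_Icc hc1 hc2
  have hur : 0 < |u r| := by
    rcases (abs_nonneg (u r)).eq_or_lt with h | h
    · rw [← h, zero_rpow hκ.ne', mul_zero] at hlt
      have : (0 : ℝ) ≤ 2 ^ (κ + 1) * N := by positivity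
      linarith
    · exact h
  have hmeas : MeasurableSet {ρ | |u r| ≤ 2 * |u ρ|} :=
    measurableSet_le measurable_const (hu.abs.const_mul 2)
  set J₁ := Icc c (c + w) ∩ {ρ | |u r| ≤ 2 * |u ρ|} with hJ₁
  set J₂ := Icc c (c + w) \ {ρ | |u r| ≤ 2 * |u ρ|} with hJ₂
  have hvol : volume J₁ + volume J₂ = ENNReal.ofReal w := by
    rw [hJ₁, hJ₂, measure_inter_add_sdiff _ hmeas, Real.volume_Icc]; congr 1; ring
  have hX : 0 < (|u r| / 2) ^ κ := by positivity
  have h1 : ENNReal.ofReal ((|u r| / 2) ^ κ) * volume J₁ ≤ ENNReal.ofReal N := by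
    rw [← setLIntegral_const]
    calc _ ≤ ∫⁻ ρ in J₁, ENNReal.ofReal (|u ρ| ^ κ) := by
          refine setLIntegral_mono' (measurableSet_Icc.inter hmeas) fun ρ hρ => ?_
          apply ENNReal.ofReal_le_ofReal
          have : |u r| ≤ 2 * |u ρ| := hρ.2
          gcongr; linarith
      _ ≤ _ := (lintegral_mono_set (inter_subset_left.trans hJ)).trans hN
  have h1' : volume J₁ ≤ ENNReal.ofReal (w / 2) := by
    have : volume J₁ ≤ ENNReal.ofReal N / ENNReal.ofReal ((|u r| / 2) ^ κ) := by
      rw [ENNReal.le_div_iff_mul_le (by left; simpa using hX) (by left; simp), mul_comm]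
      exact h1
    refine this.trans ?_
    rw [← ENNReal.ofReal_div_of_pos hX]
    apply ENNReal.ofReal_le_ofReal
    rw [div_le_iff₀ hX, div_rpow hur.le (by norm_num)]
    rw [rpow_add (by norm_num), rpow_one] at hlt
    have h2 : (0 : ℝ) < 2 ^ κ := by positivity
    rw [mul_div_assoc', le_div_iff₀ h2]
    linarith
  have h2' : ENNReal.ofReal (w / 2) ≤ volume J₂ := by
    have h3 : ENNReal.ofReal (w / 2) + ENNReal.ofReal (w / 2) ≤
        ENNReal.ofReal (w / 2) + volume J₂ := by
      rw [← ENNReal.ofReal_add (by positivity) (by positivity), add_halves, ← hvol]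
      gcongr
    exact (ENNReal.add_le_add_iff_left (by simp)).1 h3
  have h2 : ENNReal.ofReal ((|u r| / 2) ^ p / w ^ (1 + s * p)) * volume J₂ ≤
      ∫⁻ ρ in Icc R (2 * R), ENNReal.ofReal (|u r - u ρ| ^ p / |r - ρ| ^ (1 + s * p)) := by
    rw [← setLIntegral_const]
    refine le_trans ?_ (lintegral_mono_set (s := J₂) (sdiff_subset.trans hJ))
    refine setLIntegral_mono' (measurableSet_Icc.diff hmeas) fun ρ hρ => ?_
    apply ENNReal.ofReal_le_ofReal
    have h4 : 2 * |u ρ| < |u r| := not_le.1 hρ.2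
    have h5 : |u r| ≤ |u r - u ρ| + |u ρ| := by
      simpa using abs_add_le (u r - u ρ) (u ρ)
    have h6 : r ≠ ρ := by rintro rfl; linarith
    have h7 : 0 < |r - ρ| := abs_pos.2 (sub_ne_zero.2 h6)
    gcongr
    · linarith
    · exact hcr ρ hρ.1
  calc ENNReal.ofReal (|u r| ^ p)
      = ENNReal.ofReal (2 ^ (p + 1) * w ^ (s * p)) *
        (ENNReal.ofReal ((|u r| / 2) ^ p / w ^ (1 + s * p)) * ENNReal.ofReal (w / 2)) := by
        rw [← ENNReal.ofReal_mul (by positivity), ← ENNReal.ofReal_mul (by positivity)]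
        congr 1
        rw [rpow_add (by norm_num), rpow_add hw, div_rpow hur.le (by norm_num)]
        simp only [rpow_one]
        have : (0:ℝ) < 2 ^ p := by positivity
        have : (0:ℝ) < w ^ (s * p) := by positivity
        field_simp
    _ ≤ _ := by
        gcongr
        exact (mul_le_mul_right h2' _).trans h2

lemma measurable_gagliardo_inner {u : ℝ → ℝ} (hu : Measurable u) (p e : ℝ) (S : Set ℝ) :
    Measurable fun r => ∫⁻ ρ in S, ENNReal.ofReal (|u r - u ρ| ^ p / |r - ρ| ^ e) := by
  apply Measurable.lintegral_prod_right' (f := fun z : ℝ × ℝ =>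
    ENNReal.ofReal (|u z.1 - u z.2| ^ p / |z.1 - z.2| ^ e))
  have h1 : Measurable fun z : ℝ × ℝ => u z.1 := hu.comp measurable_fst
  have h2 : Measurable fun z : ℝ × ℝ => u z.2 := hu.comp measurable_snd
  exact (((h1.sub h2).abs.pow_const p).div
    ((measurable_fst.sub measurable_snd).abs.pow_const e)).ennreal_ofReal

lemma interval_gagliardo_nirenberg {s p q κ t : ℝ} (hs : 0 < s) (hp : 1 ≤ p) (hq : 1 ≤ q)
    (hκ : 1 ≤ κ) (ht0 : 0 ≤ t) (ht1 : t ≤ 1) (hκt : κ = (1 - t) * q + t * (p + s * p * κ)) :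
    ∃ C > 0, ∀ u : ℝ → ℝ, Continuous u → ∀ R m a c : ℝ, 0 < R → 0 ≤ m → 0 ≤ a → 0 < c →
      ∫⁻ r in Icc R (2 * R), ENNReal.ofReal |u r| ≤ ENNReal.ofReal (R * c) →
      ∫⁻ r in Icc R (2 * R), ENNReal.ofReal (|u r| ^ q) ≤ ENNReal.ofReal m →
      ∫⁻ r in Icc R (2 * R), ∫⁻ ρ in Icc R (2 * R),
        ENNReal.ofReal (|u r - u ρ| ^ p / |r - ρ| ^ (1 + s * p)) ≤ ENNReal.ofReal a →
      ∫⁻ r in Icc R (2 * R), ENNReal.ofReal (|u r| ^ κ) ≤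
        ENNReal.ofReal (C * (R * c ^ κ + (m ^ (1 - t) * a ^ t) ^ (1 / (1 - t * (s * p))))) := by
  have hpos : 0 < 1 - t * (s * p) := by
    have h1 : κ * (1 - t * (s * p)) = (1 - t) * q + t * p := by linarith
    have h2 : 0 < (1 - t) * q + t * p := by nlinarith
    rw [← h1] at h2
    exact pos_of_mul_pos_right h2 (by linarith)
  set B : ℝ := 2 ^ (p + 1) * (2 ^ (κ + 2)) ^ (s * p) with hB
  have hB0 : 0 < B := by positivity
  have hsp : 0 < s * p := by positivity
  refine ⟨4 * (2 ^ (κ + 4)) ^ κ + (4 * B ^ t) ^ (1 / (1 - t * (s * p))), by positivity, ?_⟩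
  intro u hu R m a c hR hm ha hc h1 h2 h3
  set I := Icc R (2 * R) with hI
  have hint : IntegrableOn (fun r => |u r| ^ κ) I :=
    (hu.abs.rpow_const fun _ => Or.inr (by linarith)).integrableOn_Icc
  set N := ∫ r in I, |u r| ^ κ with hNdef
  have hNeq : ∫⁻ r in I, ENNReal.ofReal (|u r| ^ κ) = ENNReal.ofReal N :=
    (ofReal_integral_eq_lintegral_ofReal hint (ae_of_all _ fun r => by positivity)).symm
  have hN0 : 0 ≤ N := integral_nonneg fun r => by positivity
  rw [hNeq]
  apply ENNReal.ofReal_le_ofReal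
  rcases hN0.eq_or_lt with hNz | hN
  · rw [← hNz]; positivity
  set G : ℝ → ENNReal := fun r => ∫⁻ ρ in I,
    ENNReal.ofReal (|u r - u ρ| ^ p / |r - ρ| ^ (1 + s * p)) with hG
  have hGm : Measurable G := measurable_gagliardo_inner hu.measurable _ _ _
  set L : ℝ := 2 ^ (κ + 4) * c with hL
  have hL0 : 0 < L := by positivity
  have key : ∀ r ∈ I, ENNReal.ofReal (|u r| ^ κ) ≤ ENNReal.ofReal (L ^ κ) +
      (ENNReal.ofReal (2 ^ (κ + 3) * N / (R * L)) * ENNReal.ofReal |u r| +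
      ENNReal.ofReal (|u r| ^ q) ^ (1 - t) * (ENNReal.ofReal (B * N ^ (s * p)) * G r) ^ t) := by
    intro r hr
    rcases le_or_gt |u r| L with hrL | hrL
    · refine le_trans (ENNReal.ofReal_le_ofReal ?_) le_self_add
      gcongr
    have hur : 0 < |u r| := hL0.trans hrL
    have hurκ : 0 < |u r| ^ κ := by positivity
    rcases le_or_gt (|u r| ^ κ) (2 ^ (κ + 3) * N / R) with hlow | hhigh
    · refine le_trans ?_ (le_add_left (le_self_add))
      rw [← ENNReal.ofReal_mul (by positivity)]
      apply ENNReal.ofReal_le_ofReal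
      refine hlow.trans ?_
      rw [div_mul_eq_mul_div, div_le_div_iff₀ hR (by positivity)]
      have : (0:ℝ) ≤ 2 ^ (κ + 3) * N * R := by positivity
      nlinarith
    · refine le_trans ?_ (le_add_left (le_add_left le_rfl))
      have hw := ofReal_rpow_le_gagliardo_of_lt (p := p) (κ := κ) (s := s) (R := R) (N := N)
        (w := 2 ^ (κ + 2) * N / |u r| ^ κ) hu.measurable
        (by linarith) hs.le (by linarith) (by positivity) ?_ hr hN0 hNeq.le ?_
      · have h5 : ENNReal.ofReal (|u r| ^ (p + s * p * κ)) ≤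
            ENNReal.ofReal (B * N ^ (s * p)) * G r := by
          rw [rpow_add hur, mul_comm (|u r| ^ p), ENNReal.ofReal_mul (by positivity)]
          refine (mul_le_mul_right hw _).trans ?_
          rw [← mul_assoc, ← ENNReal.ofReal_mul (by positivity)]
          apply le_of_eq
          congr 2
          rw [div_rpow (by positivity) hurκ.le, mul_rpow (by positivity) hN0, hB, ← rpow_mul hur.le,
            mul_comm κ (s * p)]
          have : 0 < |u r| ^ (s * p * κ) := by positivity
          field_simp
        calc ENNReal.ofReal (|u r| ^ κ)
            = ENNReal.ofReal (|u r| ^ q) ^ (1 - t) *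
              ENNReal.ofReal (|u r| ^ (p + s * p * κ)) ^ t := by
              rw [ENNReal.ofReal_rpow_of_pos (by positivity),
                ENNReal.ofReal_rpow_of_pos (by positivity), ← ENNReal.ofReal_mul (by positivity),
                ← rpow_mul hur.le, ← rpow_mul hur.le, ← rpow_add hur]
              congr 2
              linarith
          _ ≤ _ := by gcongr
      · rw [mul_div_assoc', div_le_iff₀ hurκ]
        rw [div_lt_iff₀ hR] at hhigh
        rw [show κ + 3 = (κ + 2) + 1 by ring, rpow_add (by norm_num), rpow_one] at hhigh
        linarith
      · rw [div_mul_cancel₀ _ hurκ.ne', show κ + 2 = (κ + 1) + 1 by ring,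
          rpow_add (x := 2) (y := κ + 1) (by norm_num), rpow_one]
        have : (0:ℝ) < 2 ^ (κ + 1) * N := by positivity
        linarith
  have hum : Measurable fun r => ENNReal.ofReal |u r| := hu.measurable.abs.ennreal_ofReal
  have huq : Measurable fun r => ENNReal.ofReal (|u r| ^ q) :=
    (hu.measurable.abs.pow_const q).ennreal_ofReal
  have hsum : ENNReal.ofReal N ≤ ENNReal.ofReal (L ^ κ * R) + (ENNReal.ofReal (N / 2) +
      ENNReal.ofReal (m ^ (1 - t) * (B * N ^ (s * p) * a) ^ t)) := by
    rw [← hNeq]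
    refine (setLIntegral_mono' measurableSet_Icc key).trans ?_
    rw [lintegral_add_left measurable_const, lintegral_add_left (hum.const_mul _)]
    refine add_le_add ?_ (add_le_add ?_ ?_)
    · rw [setLIntegral_const, Real.volume_Icc, ← ENNReal.ofReal_mul (by positivity)]
      apply le_of_eq; congr 1; ring
    · rw [lintegral_const_mul _ hum]
      refine (mul_le_mul_right h1 _).trans ?_
      rw [← ENNReal.ofReal_mul (by positivity)]
      apply le_of_eq; congr 1
      rw [hL, show κ + 4 = (κ + 3) + 1 by ring,
          rpow_add (x := 2) (y := κ + 3) (by norm_num), rpow_one]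
      have : (0:ℝ) < 2 ^ (κ + 3) := by positivity
      field_simp
    · refine (ENNReal.lintegral_mul_norm_pow_le huq.aemeasurable
        (hGm.const_mul _).aemeasurable (by linarith) ht0 (by ring)).trans ?_
      rw [lintegral_const_mul _ hGm, ENNReal.ofReal_mul (p := m ^ (1 - t)) (by positivity),
        ← ENNReal.ofReal_rpow_of_nonneg hm (by linarith),
        ← ENNReal.ofReal_rpow_of_nonneg (by positivity) ht0,
        ENNReal.ofReal_mul (p := B * N ^ (s * p)) (by positivity)]
      gcongr
  rw [← ENNReal.ofReal_add (by positivity) (by positivity),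
    ← ENNReal.ofReal_add (by positivity) (by positivity),
    ENNReal.ofReal_le_ofReal_iff (by positivity)] at hsum
  have hLκ : L ^ κ * R = (2 ^ (κ + 4)) ^ κ * (R * c ^ κ) := by
    rw [hL, mul_rpow (by positivity) hc.le]; ring
  have hY : m ^ (1 - t) * (B * N ^ (s * p) * a) ^ t =
      B ^ t * (m ^ (1 - t) * a ^ t) * N ^ (t * (s * p)) := by
    rw [mul_rpow (by positivity) ha, mul_rpow hB0.le (by positivity), ← rpow_mul hN0,
      mul_comm (s * p) t]; ring
  rw [hLκ, hY] at hsum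
  set X := R * c ^ κ with hX
  set Y := m ^ (1 - t) * a ^ t with hYd
  have hX0 : 0 ≤ X := by positivity
  have hY0 : 0 ≤ Y := by positivity
  have hYe : 0 ≤ Y ^ (1 / (1 - t * (s * p))) := by positivity
  set E : ℝ := (4 * B ^ t) ^ (1 / (1 - t * (s * p))) with hE
  have hE0 : 0 ≤ E := by positivity
  set F : ℝ := (2 ^ (κ + 4)) ^ κ with hF
  have hF0 : 0 ≤ F := by positivity
  rcases le_total (F * X) (B ^ t * Y * N ^ (t * (s * p))) with h | h
  · have h6 : N ≤ 4 * B ^ t * Y * N ^ (t * (s * p)) := by linarith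
    have h7 : N ^ (1 - t * (s * p)) ≤ 4 * B ^ t * Y := by
      rw [rpow_sub hN, rpow_one, div_le_iff₀ (by positivity)]
      exact h6
    have h8 : N ≤ E * Y ^ (1 / (1 - t * (s * p))) := by
      rw [hE, ← mul_rpow (by positivity) hY0]
      calc N = (N ^ (1 - t * (s * p))) ^ (1 / (1 - t * (s * p))) := by
            rw [← rpow_mul hN0, mul_one_div_cancel hpos.ne', rpow_one]
        _ ≤ _ := by gcongr
    have := mul_nonneg hE0 hX0
    have := mul_nonneg hF0 hX0
    have := mul_nonneg hF0 hYe
    linarith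
  · have := mul_nonneg hE0 hX0
    have := mul_nonneg hF0 hYe
    have := mul_nonneg hE0 hYe
    linarith

lemma interval_lintegral_rpow_le {s p q γ θ η : ℝ} (hs : 0 < s) (hp : 1 ≤ p) (hq : 1 ≤ q)
    (hγ : 1 ≤ γ) (hθ : 0 ≤ θ) (hη : 0 ≤ η) (hV0 : 0 < (1 - s * p) * θ + η)
    (hV1 : (1 - s * p) * θ + η ≤ 1) (hγeq : p * θ + q * η = γ) :
    ∃ C > 0, ∀ u : ℝ → ℝ, Continuous u → ∀ R m a c : ℝ, 0 < R → 0 ≤ m → 0 ≤ a → 0 < c →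
      ∫⁻ r in Icc R (2 * R), ENNReal.ofReal |u r| ≤ ENNReal.ofReal (R * c) →
      ∫⁻ r in Icc R (2 * R), ENNReal.ofReal (|u r| ^ q) ≤ ENNReal.ofReal m →
      ∫⁻ r in Icc R (2 * R), ∫⁻ ρ in Icc R (2 * R),
        ENNReal.ofReal (|u r - u ρ| ^ p / |r - ρ| ^ (1 + s * p)) ≤ ENNReal.ofReal a →
      ∫⁻ r in Icc R (2 * R), ENNReal.ofReal (|u r| ^ γ) ≤
        ENNReal.ofReal (C * (R * c ^ γ + R ^ (1 - ((1 - s * p) * θ + η)) * (m ^ η * a ^ θ))) := by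
  set V := (1 - s * p) * θ + η with hV
  have hsum : 0 < θ + η := by
    have : 0 ≤ s * p * θ := by positivity
    nlinarith
  set t := θ / (θ + η) with ht
  set κ := γ / V with hκ
  have hκγ : κ * V = γ := by rw [hκ]; field_simp
  have hκ1 : 1 ≤ κ := by
    rw [hκ, le_div_iff₀ hV0]; linarith
  have h1t : 1 - t = η / (θ + η) := by rw [ht]; field_simp; ring
  have hexp : 1 - t * (s * p) = V / (θ + η) := by rw [ht, hV]; field_simp; ring
  obtain ⟨C, hC, H⟩ := interval_gagliardo_nirenberg (t := t) (κ := κ) hs hp hq hκ1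
    (by positivity) (by rw [ht, div_le_one hsum]; linarith) (by
      rw [h1t, ht]
      field_simp
      linear_combination hκγ - hγeq + κ * hV)
  refine ⟨C ^ V, by positivity, ?_⟩
  intro u hu R m a c hR hm ha hc h1 h2 h3
  have h4 := H u hu R m a c hR hm ha hc h1 h2 h3
  have huκ : Measurable fun r => ENNReal.ofReal (|u r| ^ κ) :=
    (hu.measurable.abs.pow_const κ).ennreal_ofReal
  calc ∫⁻ r in Icc R (2 * R), ENNReal.ofReal (|u r| ^ γ)
      = ∫⁻ r in Icc R (2 * R), ENNReal.ofReal (|u r| ^ κ) ^ V * 1 ^ (1 - V) := by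
        refine lintegral_congr fun r => ?_
        rw [ENNReal.one_rpow, mul_one, ENNReal.ofReal_rpow_of_nonneg (by positivity) hV0.le,
          ← rpow_mul (abs_nonneg _), hκγ]
    _ ≤ (∫⁻ r in Icc R (2 * R), ENNReal.ofReal (|u r| ^ κ)) ^ V *
          (∫⁻ r in Icc R (2 * R), 1) ^ (1 - V) :=
        ENNReal.lintegral_mul_norm_pow_le huκ.aemeasurable aemeasurable_const hV0.le
          (by linarith) (by ring)
    _ ≤ (ENNReal.ofReal (C * (R * c ^ κ + (m ^ (1 - t) * a ^ t) ^ (1 / (1 - t * (s * p)))))) ^ V *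
          ENNReal.ofReal R ^ (1 - V) := by
        gcongr
        rw [setLIntegral_one, Real.volume_Icc]
        apply ENNReal.ofReal_le_ofReal; linarith
    _ = ENNReal.ofReal ((C * (R * c ^ κ + (m ^ (1 - t) * a ^ t) ^ (1 / (1 - t * (s * p))))) ^ V *
          R ^ (1 - V)) := by
        rw [ENNReal.ofReal_rpow_of_nonneg (by positivity) hV0.le,
          ENNReal.ofReal_rpow_of_nonneg hR.le (by linarith), ← ENNReal.ofReal_mul (by positivity)]
    _ ≤ _ := by
        apply ENNReal.ofReal_le_ofReal
        rw [mul_rpow hC.le (by positivity), mul_assoc]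
        gcongr
        have h5 : ((m ^ (1 - t) * a ^ t) ^ (1 / (1 - t * (s * p)))) ^ V = m ^ η * a ^ θ := by
          rw [← rpow_mul (by positivity), mul_rpow (by positivity) (by positivity),
            ← rpow_mul hm, ← rpow_mul ha, hexp, h1t, ht]
          congr 2 <;> field_simp
        have h6 : (R * c ^ κ) ^ V * R ^ (1 - V) = R * c ^ γ := by
          rw [mul_rpow hR.le (by positivity), ← rpow_mul hc.le, hκγ, mul_right_comm,
            ← rpow_add hR, add_sub_cancel, rpow_one]
        rw [← h5, ← h6, mul_comm (R ^ (1 - V)), ← add_mul]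
        gcongr
        exact Real.rpow_add_le_add_rpow (by positivity) (by positivity) hV0.le hV1

lemma le_add_rpow_mul {x l p : ℝ} (hx : 0 ≤ x) (hl : 0 < l) (hp : 1 ≤ p) :
    x ≤ l + l ^ (1 - p) * x ^ p := by
  rcases le_or_gt x l with h | h
  · have : 0 ≤ l ^ (1 - p) * x ^ p := by positivity
    linarith
  · have hx0 : 0 < x := hl.trans h
    have h1 : x = x ^ (1 - p) * x ^ p := by rw [← rpow_add hx0]; simp
    have h2 : x ^ (1 - p) ≤ l ^ (1 - p) := rpow_le_rpow_of_nonpos hl h.le (by linarith)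
    calc x = x ^ (1 - p) * x ^ p := h1
      _ ≤ l ^ (1 - p) * x ^ p := by gcongr
      _ ≤ _ := by linarith

/-- The average of `|u|` over `[R, 2R]`. -/
noncomputable def annularMean (u : ℝ → ℝ) (R : ℝ) : ℝ := R⁻¹ * ∫ r in Icc R (2 * R), |u r|

lemma annularMean_nonneg (u : ℝ → ℝ) {R : ℝ} (hR : 0 < R) : 0 ≤ annularMean u R :=
  mul_nonneg (by positivity) (integral_nonneg fun _ => abs_nonneg _)

lemma lintegral_abs_eq_annularMean {u : ℝ → ℝ} (hu : Continuous u) {R : ℝ} (hR : 0 < R) :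
    ∫⁻ r in Icc R (2 * R), ENNReal.ofReal |u r| = ENNReal.ofReal (R * annularMean u R) := by
  rw [annularMean, mul_inv_cancel_left₀ hR.ne',
    ofReal_integral_eq_lintegral_ofReal hu.abs.integrableOn_Icc
      (ae_of_all _ fun r => abs_nonneg _)]

lemma annularMean_le_of_lintegral_rpow {u : ℝ → ℝ} (hu : Continuous u) {q b C R : ℝ} (hR : 0 < R)
    (hq : 1 ≤ q) (hC : 0 ≤ C) (h : ∫⁻ r in Icc R (2 * R), ENNReal.ofReal (|u r| ^ q) ≤
      ENNReal.ofReal (C * R ^ (1 - q * b))) :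
    annularMean u R ≤ (1 + C) * R ^ (-b) := by
  have huq : Measurable fun r => ENNReal.ofReal (|u r| ^ q) :=
    (hu.measurable.abs.pow_const q).ennreal_ofReal
  have h1 : ENNReal.ofReal (R * annularMean u R) ≤ ENNReal.ofReal ((1 + C) * R ^ (1 - b)) := by
    rw [← lintegral_abs_eq_annularMean hu hR]
    calc ∫⁻ r in Icc R (2 * R), ENNReal.ofReal |u r|
        ≤ ∫⁻ r in Icc R (2 * R), (ENNReal.ofReal (R ^ (-b)) +
            ENNReal.ofReal ((R ^ (-b)) ^ (1 - q)) * ENNReal.ofReal (|u r| ^ q)) := by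
          refine lintegral_mono fun r => ?_
          rw [← ENNReal.ofReal_mul (by positivity),
            ← ENNReal.ofReal_add (by positivity) (by positivity)]
          exact ENNReal.ofReal_le_ofReal (le_add_rpow_mul (abs_nonneg _) (by positivity) hq)
      _ ≤ ENNReal.ofReal (R ^ (-b) * R) + ENNReal.ofReal ((R ^ (-b)) ^ (1 - q)) *
            ENNReal.ofReal (C * R ^ (1 - q * b)) := by
          rw [lintegral_add_left measurable_const, lintegral_const_mul _ huq, setLIntegral_const,
            Real.volume_Icc, ← ENNReal.ofReal_mul (by positivity)]
          gcongr
          linarith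
      _ = _ := by
          rw [← ENNReal.ofReal_mul (by positivity),
            ← ENNReal.ofReal_add (by positivity) (by positivity)]
          congr 1
          have e1 : R ^ (-b) * R = R ^ (1 - b) := by
            rw [← rpow_add_one hR.ne']; ring_nf
          have e2 : (R ^ (-b)) ^ (1 - q) * R ^ (1 - q * b) = R ^ (1 - b) := by
            rw [← rpow_mul hR.le, ← rpow_add hR]; ring_nf
          linear_combination e1 + C * e2
  rw [ENNReal.ofReal_le_ofReal_iff (by positivity)] at h1
  have e1 : R ^ (1 - b) = R * R ^ (-b) := by
    rw [sub_eq_add_neg, rpow_add hR, rpow_one]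
  rw [e1] at h1
  exact le_of_mul_le_mul_left (by linarith) hR

lemma annularMean_le_add {u : ℝ → ℝ} (hu : Continuous u) {s p b C R : ℝ} (hR : 0 < R)
    (hs : 0 < s) (hp : 1 ≤ p) (hC : 0 ≤ C)
    (h : ∫⁻ r in Icc R (4 * R), ∫⁻ ρ in Icc R (4 * R),
      ENNReal.ofReal (|u r - u ρ| ^ p / |r - ρ| ^ (1 + s * p)) ≤
        ENNReal.ofReal (C * R ^ (1 - s * p - p * b))) :
    annularMean u R ≤ annularMean u (2 * R) + (1 + 3 ^ (1 + s * p) * C) * R ^ (-b) := by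
  set l := R ^ (-b) with hl
  have hl0 : 0 < l := by positivity
  set Q := l ^ (1 - p) * (3 * R) ^ (1 + s * p) with hQ
  have hQ0 : 0 < Q := by positivity
  set I := Icc R (2 * R) with hI
  set J := Icc (2 * R) (2 * (2 * R)) with hJ
  have hI4 : I ⊆ Icc R (4 * R) := Icc_subset_Icc_right (by linarith)
  have hJ4 : J ⊆ Icc R (4 * R) := Icc_subset_Icc (by linarith) (by linarith)
  have hvI : volume I = ENNReal.ofReal R := by rw [hI, Real.volume_Icc]; congr 1; ring
  have hvJ : volume J = ENNReal.ofReal (2 * R) := by rw [hJ, Real.volume_Icc]; congr 1; ring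
  have hum : Measurable fun r => ENNReal.ofReal |u r| := hu.measurable.abs.ennreal_ofReal
  set k : ℝ → ℝ → ENNReal :=
    fun r ρ => ENNReal.ofReal (|u r - u ρ| ^ p / |r - ρ| ^ (1 + s * p)) with hk
  have hkm : ∀ r, Measurable (k r) := fun r =>
    (((measurable_const.sub hu.measurable).abs.pow_const p).div
      ((measurable_const.sub measurable_id).abs.pow_const _)).ennreal_ofReal
  have hkI : Measurable fun r => ∫⁻ ρ in J, k r ρ :=
    measurable_gagliardo_inner hu.measurable _ _ _
  have key : ∀ r ∈ I, ∀ ρ ∈ J, ENNReal.ofReal |u r| ≤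
      ENNReal.ofReal |u ρ| + (ENNReal.ofReal l + ENNReal.ofReal Q * k r ρ) := by
    intro r hr ρ hρ
    rw [hk, ← ENNReal.ofReal_mul hQ0.le, ← ENNReal.ofReal_add hl0.le (by positivity),
      ← ENNReal.ofReal_add (abs_nonneg _) (by positivity)]
    apply ENNReal.ofReal_le_ofReal
    have h1 : |u r| ≤ |u r - u ρ| + |u ρ| := by simpa using abs_add_le (u r - u ρ) (u ρ)
    have h2 := le_add_rpow_mul (abs_nonneg (u r - u ρ)) hl0 hp
    rcases eq_or_ne r ρ with hrρ | hrρ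
    · have h0 : (0:ℝ) ≤ Q * (|u r - u ρ| ^ p / |r - ρ| ^ (1 + s * p)) := by positivity
      rw [hrρ] at h0 ⊢
      linarith
    · have h3 : 0 < |r - ρ| := abs_pos.2 (sub_ne_zero.2 hrρ)
      have h4 : |r - ρ| ≤ 3 * R := by
        rw [abs_le]; constructor <;> linarith [hr.1, hr.2, hρ.1, hρ.2]
      have h5 : |u r - u ρ| ^ p ≤
          (3 * R) ^ (1 + s * p) * (|u r - u ρ| ^ p / |r - ρ| ^ (1 + s * p)) := by
        rw [mul_div_assoc', le_div_iff₀ (by positivity), mul_comm]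
        gcongr
      have h6 : l ^ (1 - p) * |u r - u ρ| ^ p ≤
          Q * (|u r - u ρ| ^ p / |r - ρ| ^ (1 + s * p)) := by
        rw [hQ, mul_assoc]; gcongr
      linarith
  have h2 : ENNReal.ofReal (2 * R) * ENNReal.ofReal (R * annularMean u R) ≤
      ENNReal.ofReal R * ENNReal.ofReal (2 * R * annularMean u (2 * R)) +
        (ENNReal.ofReal (l * (2 * R) * R) +
          ENNReal.ofReal Q * ENNReal.ofReal (C * R ^ (1 - s * p - p * b))) := by
    calc _ = ∫⁻ r in I, ∫⁻ ρ in J, ENNReal.ofReal |u r| := by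
          simp_rw [setLIntegral_const, hvJ]
          rw [lintegral_mul_const _ hum, lintegral_abs_eq_annularMean hu hR, mul_comm]
      _ ≤ ∫⁻ r in I, ∫⁻ ρ in J, (ENNReal.ofReal |u ρ| +
            (ENNReal.ofReal l + ENNReal.ofReal Q * k r ρ)) :=
          setLIntegral_mono' measurableSet_Icc fun r hr =>
            setLIntegral_mono' measurableSet_Icc fun ρ hρ => key r hr ρ hρ
      _ = ∫⁻ r in I, (ENNReal.ofReal (2 * R * annularMean u (2 * R)) +
            (ENNReal.ofReal (l * (2 * R)) + ENNReal.ofReal Q * ∫⁻ ρ in J, k r ρ)) := by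
          refine lintegral_congr fun r => ?_
          rw [lintegral_add_left hum, lintegral_add_left measurable_const,
            lintegral_const_mul _ (hkm r), setLIntegral_const, hvJ,
            lintegral_abs_eq_annularMean hu (by positivity), ← ENNReal.ofReal_mul hl0.le]
      _ ≤ _ := by
          rw [lintegral_add_left measurable_const, lintegral_add_left measurable_const,
            lintegral_const_mul _ hkI, setLIntegral_const, setLIntegral_const, hvI,
            ← ENNReal.ofReal_mul (p := l * (2 * R)) (by positivity), mul_comm (ENNReal.ofReal R)]
          gcongr
          refine le_trans ?_ h
          exact (lintegral_mono fun r => lintegral_mono_set hJ4).trans (lintegral_mono_set hI4)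
  have hm0 := annularMean_nonneg u hR
  have hm1 := annularMean_nonneg u (R := 2 * R) (by positivity)
  rw [← ENNReal.ofReal_mul (by positivity), ← ENNReal.ofReal_mul (by positivity),
    ← ENNReal.ofReal_mul (by positivity), ← ENNReal.ofReal_add (by positivity) (by positivity),
    ← ENNReal.ofReal_add (by positivity) (by positivity),
    ENNReal.ofReal_le_ofReal_iff (by positivity)] at h2
  have e1 : Q * (C * R ^ (1 - s * p - p * b)) = 3 ^ (1 + s * p) * C * l * (R * R) := by
    have : l ^ (1 - p) * R ^ (1 + s * p) * R ^ (1 - s * p - p * b) = l * (R * R) := by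
      rw [hl, ← rpow_mul hR.le, ← rpow_add hR, ← rpow_add hR, ← sq, ← rpow_natCast R 2,
        ← rpow_add hR]
      congr 1; push_cast; ring
    rw [hQ, mul_rpow (by norm_num) hR.le]
    linear_combination (3 ^ (1 + s * p) * C) * this
  rw [e1] at h2
  have hRR : 0 < 2 * R * R := by positivity
  refine le_of_mul_le_mul_left ?_ hRR
  have h0 : (0:ℝ) ≤ 3 ^ (1 + s * p) * C * l * (R * R) := by positivity
  nlinarith

lemma le_rpow_neg_of_le_doubling {c : ℝ → ℝ} {b C C₁ R₁ : ℝ} (hb : 0 < b) (hR₁ : 0 < R₁)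
    (hC₁ : 0 ≤ C₁)
    (hstep : ∀ R, 0 < R → R ≤ R₁ → c R ≤ c (2 * R) + C * R ^ (-b))
    (h₁ : c R₁ ≤ C₁ * R₁ ^ (-b)) (hC : 0 ≤ C) (n : ℕ) :
    c (R₁ / 2 ^ n) ≤ (C₁ + C / (1 - 2 ^ (-b))) * (R₁ / 2 ^ n) ^ (-b) := by
  have h2b : (2:ℝ) ^ (-b) < 1 := rpow_lt_one_of_one_lt_of_neg (by norm_num) (by linarith)
  have hpos : 0 < 1 - (2:ℝ) ^ (-b) := by linarith
  have hq : 0 ≤ C / (1 - 2 ^ (-b)) := by positivity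
  induction n with
  | zero =>
    have : (0:ℝ) ≤ R₁ ^ (-b) := by positivity
    simp only [pow_zero, div_one]
    nlinarith
  | succ n ih =>
    set S := R₁ / 2 ^ (n + 1) with hS
    have hS0 : 0 < S := by positivity
    have h2S : R₁ / 2 ^ n = 2 * S := by rw [hS, pow_succ]; field_simp
    have hSR : S ≤ R₁ := div_le_self hR₁.le (one_le_pow₀ (by norm_num))
    rw [h2S, mul_rpow (by norm_num) hS0.le] at ih
    have h := hstep S hS0 hSR
    have hp : (0:ℝ) ≤ S ^ (-b) := by positivity
    have e : C = C / (1 - 2 ^ (-b)) * (1 - 2 ^ (-b)) := by field_simp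
    have h3 : C₁ * (2:ℝ) ^ (-b) ≤ C₁ := by nlinarith
    have h4 : (C₁ + C / (1 - 2 ^ (-b))) * 2 ^ (-b) + C ≤ C₁ + C / (1 - 2 ^ (-b)) := by
      nlinarith
    calc c S ≤ ((C₁ + C / (1 - 2 ^ (-b))) * 2 ^ (-b) + C) * S ^ (-b) := by linarith
      _ ≤ _ := by gcongr

lemma exists_annularMean_zpow_bounds {s p q γ D b₁ b₂ C₀ : ℝ} (hs : 0 < s) (hp : 1 ≤ p)
    (hq : 1 ≤ q) (hγ : 0 < γ) (hD : 0 < D) (hC₀ : 0 ≤ C₀) (hb₁ : 0 < b₁)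
    (hb : (b₁ < D / γ ∧ D / γ < b₂) ∨ (b₂ < D / γ ∧ D / γ < b₁)) :
    ∃ M > 0, ∃ bm bp : ℝ, 0 < D - γ * bm ∧ D - γ * bp < 0 ∧
      ∀ u : ℝ → ℝ, Continuous u → (∃ N, ∀ r, N ≤ r → u r = 0) →
      (∀ R, 0 < R → ∫⁻ r in Icc R (4 * R), ∫⁻ ρ in Icc R (4 * R),
        ENNReal.ofReal (|u r - u ρ| ^ p / |r - ρ| ^ (1 + s * p)) ≤
          ENNReal.ofReal (C₀ * R ^ (1 - s * p - p * b₂))) →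
      (∀ R, 0 < R → ∫⁻ r in Icc R (2 * R), ENNReal.ofReal (|u r| ^ q) ≤
        ENNReal.ofReal (C₀ * R ^ (1 - q * b₁))) →
      (∀ k : ℤ, k ≤ 0 → annularMean u (2 ^ k) ≤ M * ((2:ℝ) ^ k) ^ (-bm)) ∧
      (∀ k : ℤ, 0 ≤ k → annularMean u (2 ^ k) ≤ M * ((2:ℝ) ^ k) ^ (-bp)) := by
  set C := 1 + 3 ^ (1 + s * p) * C₀ with hCdef
  have hC : 0 < C := by positivity
  rcases hb with ⟨h1, h2⟩ | ⟨h2, h1⟩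
  · have hb₂ : 0 < b₂ := by linarith
    have h2b : (2:ℝ) ^ (-b₂) < 1 := rpow_lt_one_of_one_lt_of_neg (by norm_num) (by linarith)
    have hpos : 0 < 1 - (2:ℝ) ^ (-b₂) := by linarith
    rw [lt_div_iff₀ hγ] at h1
    rw [div_lt_iff₀ hγ] at h2
    refine ⟨(1 + C₀) + C / (1 - 2 ^ (-b₂)), by positivity, b₁, b₂, by linarith, by linarith,
      fun u hu hN HA HD => ⟨fun k _ => ?_, fun k hk => ?_⟩⟩
    · refine (annularMean_le_of_lintegral_rpow hu (by positivity) hq hC₀ (HD _ (by positivity))).trans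
        ?_
      have : 0 < C / (1 - 2 ^ (-b₂)) := by positivity
      exact mul_le_mul_of_nonneg_right (by linarith) (by positivity)
    · obtain ⟨N, hN⟩ := hN
      obtain ⟨n, hn⟩ := pow_unbounded_of_one_lt N (by norm_num : (1:ℝ) < 2)
      have hR : 0 < (2:ℝ) ^ (k + n) := by positivity
      have hNR : N ≤ (2:ℝ) ^ (k + n) := by
        refine hn.le.trans ?_
        rw [← zpow_natCast]
        exact zpow_le_zpow_right₀ (by norm_num) (by omega)
      have h0 : annularMean u (2 ^ (k + n)) = 0 := by
        rw [annularMean, setIntegral_congr_fun measurableSet_Icc (g := fun _ => 0), integral_zero,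
          mul_zero]
        intro r hr
        simp [hN r (hNR.trans hr.1)]
      have key := le_rpow_neg_of_le_doubling (c := annularMean u) (b := b₂) (C := C) (C₁ := 0) hb₂ hR le_rfl
        (fun R hR _ => annularMean_le_add hu hR hs hp hC₀ (HA R hR)) (by rw [h0]; simp) hC.le n
      have e : (2:ℝ) ^ (k + n) / 2 ^ n = 2 ^ k := by
        rw [zpow_add₀ (by norm_num), zpow_natCast]; field_simp
      rw [e] at key
      refine key.trans ?_
      gcongr
      linarith
  · set b' := max b₂ (D / (2 * γ)) with hb'
    have hb'0 : 0 < b' := lt_max_of_lt_right (by positivity)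
    have hb'1 : b' < D / γ := by
      refine max_lt h2 ?_
      rw [div_lt_div_iff₀ (by positivity) hγ]
      nlinarith [mul_pos hD hγ]
    have h2b : (2:ℝ) ^ (-b') < 1 := rpow_lt_one_of_one_lt_of_neg (by norm_num) (by linarith)
    have hpos : 0 < 1 - (2:ℝ) ^ (-b') := by linarith
    rw [lt_div_iff₀ hγ] at hb'1
    rw [div_lt_iff₀ hγ] at h1
    refine ⟨(1 + C₀) + C / (1 - 2 ^ (-b')), by positivity, b', b₁, by linarith, by linarith,
      fun u hu _ HA HD => ⟨fun k hk => ?_, fun k _ => ?_⟩⟩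
    · have key := le_rpow_neg_of_le_doubling (c := annularMean u) (b := b') (C := C)
        (C₁ := 1 + C₀) (R₁ := 1) hb'0 one_pos (by positivity) (fun R hR hR1 => by
          refine (annularMean_le_add hu hR hs hp hC₀ (HA R hR)).trans ?_
          have : R ^ (-b₂) ≤ R ^ (-b') :=
            rpow_le_rpow_of_exponent_ge hR hR1 (neg_le_neg (le_max_left _ _))
          gcongr) (by
          refine (annularMean_le_of_lintegral_rpow hu (by positivity) hq hC₀
            (HD _ (by positivity))).trans ?_
          simp) hC.le (-k).toNat
      have e : (1:ℝ) / 2 ^ (-k).toNat = 2 ^ k := by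
        rw [← zpow_natCast, Int.toNat_of_nonneg (by omega), zpow_neg]; simp
      rwa [e] at key
    · refine (annularMean_le_of_lintegral_rpow hu (by positivity) hq hC₀ (HD _ (by positivity))).trans
        ?_
      have : 0 < C / (1 - 2 ^ (-b')) := by positivity
      exact mul_le_mul_of_nonneg_right (by linarith) (by positivity)

lemma exists_scale_lintegral_rpow_le {s p q γ θ η D b₁ b₂ C₀ M : ℝ} (hs : 0 < s) (hp : 1 ≤ p)
    (hq : 1 ≤ q) (hγ : 1 ≤ γ) (hθ : 0 ≤ θ) (hη : 0 ≤ η) (hV0 : 0 < (1 - s * p) * θ + η)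
    (hV1 : (1 - s * p) * θ + η ≤ 1) (hγeq : p * θ + q * η = γ) (hC₀ : 0 ≤ C₀) (hM : 0 < M) :
    ∃ K > 0, ∀ u : ℝ → ℝ, Continuous u → ∀ b R : ℝ, 0 < R → annularMean u R ≤ M * R ^ (-b) →
      ∫⁻ r in Icc R (4 * R), ∫⁻ ρ in Icc R (4 * R),
        ENNReal.ofReal (|u r - u ρ| ^ p / |r - ρ| ^ (1 + s * p)) ≤
          ENNReal.ofReal (C₀ * R ^ (1 - s * p - p * b₂)) →
      ∫⁻ r in Icc R (2 * R), ENNReal.ofReal (|u r| ^ q) ≤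
        ENNReal.ofReal (C₀ * R ^ (1 - q * b₁)) →
      ENNReal.ofReal (R ^ (D - 1)) * ∫⁻ r in Icc R (2 * R), ENNReal.ofReal (|u r| ^ γ) ≤
        ENNReal.ofReal (K * (R ^ (D - γ * b) + R ^ (D - q * b₁ * η - p * b₂ * θ))) := by
  obtain ⟨C, hC, h⟩ := interval_lintegral_rpow_le hs hp hq hγ hθ hη hV0 hV1 hγeq
  refine ⟨C * (M ^ γ + C₀ ^ η * C₀ ^ θ), by positivity, fun u hu b R hR hmean HA HD => ?_⟩
  have hsub : Icc R (2 * R) ⊆ Icc R (4 * R) := Icc_subset_Icc_right (by linarith)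
  have h1 := h u hu R (C₀ * R ^ (1 - q * b₁)) (C₀ * R ^ (1 - s * p - p * b₂)) (M * R ^ (-b)) hR
    (by positivity) (by positivity) (by positivity)
    (by rw [lintegral_abs_eq_annularMean hu hR]
        exact ENNReal.ofReal_le_ofReal (by gcongr)) HD
    (le_trans ((lintegral_mono fun r => lintegral_mono_set hsub).trans (lintegral_mono_set hsub)) HA)
  refine (mul_le_mul_right h1 _).trans ?_
  rw [← ENNReal.ofReal_mul (by positivity)]
  apply ENNReal.ofReal_le_ofReal
  have e1 : R ^ (D - 1) * (R * (M * R ^ (-b)) ^ γ) = M ^ γ * R ^ (D - γ * b) := by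
    have : R ^ (D - γ * b) = R ^ (D - 1) * R * R ^ (-b * γ) := by
      rw [← rpow_add_one hR.ne', ← rpow_add hR]; ring_nf
    rw [mul_rpow hM.le (by positivity), ← rpow_mul hR.le, this]; ring
  have e2 : R ^ (D - 1) * (R ^ (1 - ((1 - s * p) * θ + η)) *
      ((C₀ * R ^ (1 - q * b₁)) ^ η * (C₀ * R ^ (1 - s * p - p * b₂)) ^ θ)) =
      C₀ ^ η * C₀ ^ θ * R ^ (D - q * b₁ * η - p * b₂ * θ) := by
    have : R ^ (D - q * b₁ * η - p * b₂ * θ) = R ^ (D - 1) * R ^ (1 - ((1 - s * p) * θ + η)) *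
        R ^ ((1 - q * b₁) * η) * R ^ ((1 - s * p - p * b₂) * θ) := by
      rw [← rpow_add hR, ← rpow_add hR, ← rpow_add hR]; ring_nf
    rw [mul_rpow hC₀ (by positivity), mul_rpow hC₀ (by positivity), ← rpow_mul hR.le,
      ← rpow_mul hR.le, this]
    ring
  set A := R ^ (D - γ * b)
  set B := R ^ (D - q * b₁ * η - p * b₂ * θ)
  have hA : 0 ≤ A := by positivity
  have hB : 0 ≤ B := by positivity
  calc _ = C * (M ^ γ * A + C₀ ^ η * C₀ ^ θ * B) := by rw [← e1, ← e2]; ring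
    _ ≤ _ := by
      have h3 : 0 ≤ M ^ γ * B := by positivity
      have h4 : 0 ≤ C₀ ^ η * C₀ ^ θ * A := by positivity
      rw [mul_assoc C]
      exact mul_le_mul_of_nonneg_left (by linarith) hC.le

lemma summable_pow_natAbs {r : ℝ} (h0 : 0 ≤ r) (h1 : r < 1) :
    Summable fun k : ℤ => r ^ k.natAbs := by
  apply Summable.of_nat_of_neg <;> simpa using summable_geometric_of_lt_one h0 h1

theorem exists_dyadic_sum_le {s p q γ D b₁ b₂ C₀ θ₁ η₁ θ₂ η₂ : ℝ} (hs : 0 < s) (hp : 1 ≤ p)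
    (hq : 1 ≤ q) (hγ : 1 ≤ γ) (hD : 0 < D) (hC₀ : 0 ≤ C₀) (hb₁ : 0 < b₁)
    (hb : (b₁ < D / γ ∧ D / γ < b₂) ∨ (b₂ < D / γ ∧ D / γ < b₁))
    (hθ₁ : 0 ≤ θ₁) (hη₁ : 0 ≤ η₁) (hV₁ : 0 < (1 - s * p) * θ₁ + η₁)
    (hV₁' : (1 - s * p) * θ₁ + η₁ ≤ 1) (hγ₁ : p * θ₁ + q * η₁ = γ)
    (hx₁ : 0 < D - q * b₁ * η₁ - p * b₂ * θ₁)
    (hθ₂ : 0 ≤ θ₂) (hη₂ : 0 ≤ η₂) (hV₂ : 0 < (1 - s * p) * θ₂ + η₂)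
    (hV₂' : (1 - s * p) * θ₂ + η₂ ≤ 1) (hγ₂ : p * θ₂ + q * η₂ = γ)
    (hx₂ : D - q * b₁ * η₂ - p * b₂ * θ₂ < 0) :
    ∃ C : ℝ, ∀ u : ℝ → ℝ, Continuous u → (∃ N, ∀ r, N ≤ r → u r = 0) →
      (∀ R, 0 < R → ∫⁻ r in Icc R (4 * R), ∫⁻ ρ in Icc R (4 * R),
        ENNReal.ofReal (|u r - u ρ| ^ p / |r - ρ| ^ (1 + s * p)) ≤
          ENNReal.ofReal (C₀ * R ^ (1 - s * p - p * b₂))) →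
      (∀ R, 0 < R → ∫⁻ r in Icc R (2 * R), ENNReal.ofReal (|u r| ^ q) ≤
        ENNReal.ofReal (C₀ * R ^ (1 - q * b₁))) →
      ∑' k : ℤ, ENNReal.ofReal (((2:ℝ) ^ k) ^ (D - 1)) *
        ∫⁻ r in Icc ((2:ℝ) ^ k) (2 * 2 ^ k), ENNReal.ofReal (|u r| ^ γ) ≤ ENNReal.ofReal C := by
  obtain ⟨M, hM, bm, bp, hbm, hbp, hmean⟩ :=
    exists_annularMean_zpow_bounds hs hp hq (by linarith) hD hC₀ hb₁ hb
  obtain ⟨K₁, hK₁, h₁⟩ := exists_scale_lintegral_rpow_le (D := D) (b₁ := b₁) (b₂ := b₂) hs hp hq hγ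
    hθ₁ hη₁ hV₁ hV₁' hγ₁ hC₀ hM
  obtain ⟨K₂, hK₂, h₂⟩ := exists_scale_lintegral_rpow_le (D := D) (b₁ := b₁) (b₂ := b₂) hs hp hq hγ
    hθ₂ hη₂ hV₂ hV₂' hγ₂ hC₀ hM
  set x₁ := D - q * b₁ * η₁ - p * b₂ * θ₁
  set x₂ := D - q * b₁ * η₂ - p * b₂ * θ₂
  obtain ⟨δ, hδ, hδ₁, hδ₂, hδ₃, hδ₄⟩ : ∃ δ > 0, δ ≤ D - γ * bm ∧ δ ≤ x₁ ∧ δ ≤ -(D - γ * bp) ∧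
      δ ≤ -x₂ :=
    ⟨min (min (D - γ * bm) x₁) (min (-(D - γ * bp)) (-x₂)),
      lt_min (lt_min hbm hx₁) (lt_min (by linarith) (by linarith)),
      (min_le_left _ _).trans (min_le_left _ _), (min_le_left _ _).trans (min_le_right _ _),
      (min_le_right _ _).trans (min_le_left _ _), (min_le_right _ _).trans (min_le_right _ _)⟩
  set r := (2:ℝ) ^ (-δ) with hr
  have hr0 : 0 < r := by positivity
  have hr1 : r < 1 := rpow_lt_one_of_one_lt_of_neg (by norm_num) (by linarith)
  have hsum := (summable_pow_natAbs hr0.le hr1).mul_left (2 * (K₁ + K₂))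
  refine ⟨∑' k : ℤ, 2 * (K₁ + K₂) * r ^ k.natAbs, fun u hu hN HA HD => ?_⟩
  obtain ⟨hneg, hnonneg⟩ := hmean u hu hN HA HD
  rw [ENNReal.ofReal_tsum_of_nonneg (fun k => by positivity) hsum]
  refine ENNReal.tsum_le_tsum fun k => ?_
  have hR : (0:ℝ) < 2 ^ k := by positivity
  rcases le_total k 0 with hk | hk
  · refine (h₁ u hu bm _ hR (hneg k hk) (HA _ hR) (HD _ hR)).trans (ENNReal.ofReal_le_ofReal ?_)
    have hR1 : (2:ℝ) ^ k ≤ 1 := zpow_le_one_of_nonpos₀ (by norm_num) hk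
    have e : ((2:ℝ) ^ k) ^ δ = r ^ k.natAbs := by
      rw [hr, ← rpow_natCast, ← rpow_intCast, ← rpow_mul (by norm_num), ← rpow_mul (by norm_num)]
      congr 1
      have : ((k.natAbs : ℤ) : ℝ) = -(k : ℝ) := by
        rw [Int.ofNat_natAbs_of_nonpos hk]; push_cast; ring
      rw [Int.cast_natCast] at this
      rw [this]; ring
    have i1 := rpow_le_rpow_of_exponent_ge hR hR1 hδ₁
    have i2 := rpow_le_rpow_of_exponent_ge hR hR1 hδ₂
    rw [e] at i1 i2
    have : 0 < r ^ k.natAbs := by positivity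
    nlinarith
  · refine (h₂ u hu bp _ hR (hnonneg k hk) (HA _ hR) (HD _ hR)).trans (ENNReal.ofReal_le_ofReal ?_)
    have hR1 : 1 ≤ (2:ℝ) ^ k := one_le_zpow₀ (by norm_num) hk
    have e : ((2:ℝ) ^ k) ^ (-δ) = r ^ k.natAbs := by
      rw [hr, ← rpow_natCast, ← rpow_intCast, ← rpow_mul (by norm_num), ← rpow_mul (by norm_num)]
      congr 1
      have : ((k.natAbs : ℤ) : ℝ) = (k : ℝ) := by
        rw [Int.natAbs_of_nonneg hk]
      rw [Int.cast_natCast] at this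
      rw [this]; ring
    have i1 := rpow_le_rpow_of_exponent_le hR1 (show D - γ * bp ≤ -δ by linarith)
    have i2 := rpow_le_rpow_of_exponent_le hR1 (show x₂ ≤ -δ by linarith)
    rw [e] at i1 i2
    have : 0 < r ^ k.natAbs := by positivity
    nlinarith

lemma exists_admissible_exponents {D s γ p q α T₁ T₂ b₁ b₂ : ℝ} (hD : 1 < D) (hs0 : 0 < s)
    (hs1 : s ≤ 1) (hp : 1 ≤ p) (hq : 1 ≤ q) (hT₁ : 0 < T₁) (hT₂ : 0 < T₂)
    (hb₁ : q * b₁ = (D + α) / 2) (hb₂ : p * b₂ = D - s * p)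
    (h1 : p * T₁ + 2 * q * T₂ = γ) (h2 : (D - s * p) * T₁ + (D + α) * T₂ = D)
    (hdisc : p * (D + α) - 2 * q * (D - s * p) ≠ 0)
    (hcon : 1 < T₁ + (D + α - 2) / (D - 1) * T₂ ∨
      (T₁ + (D + α - 2) / (D - 1) * T₂ = 1 ∧ q * (1 - s * p) = p)) :
    ∃ s' θ₁ η₁ θ₂ η₂ : ℝ, 0 < s' ∧ s' ≤ s ∧ s' < 1 ∧
      (0 ≤ θ₁ ∧ 0 ≤ η₁ ∧ 0 < (1 - s' * p) * θ₁ + η₁ ∧ (1 - s' * p) * θ₁ + η₁ ≤ 1 ∧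
        p * θ₁ + q * η₁ = γ ∧ 0 < D - q * b₁ * η₁ - p * b₂ * θ₁) ∧
      (0 ≤ θ₂ ∧ 0 ≤ η₂ ∧ 0 < (1 - s' * p) * θ₂ + η₂ ∧ (1 - s' * p) * θ₂ + η₂ ≤ 1 ∧
        p * θ₂ + q * η₂ = γ ∧ D - q * b₁ * η₂ - p * b₂ * θ₂ < 0) := by
  have hp0 : 0 < p := by linarith
  have hq0 : 0 < q := by linarith
  have hD1 : 0 < D - 1 := by linarith
  rw [hb₁, hb₂]
  rcases hcon with hcon | ⟨hcon, hpq⟩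
  · have hV : (1 - s * p) * T₁ + 2 * T₂ < 1 := by
      rw [div_mul_eq_mul_div, ← sub_lt_iff_lt_add', lt_div_iff₀ hD1] at hcon
      nlinarith
    obtain ⟨v, hv1, hv2⟩ : ∃ v, max 0 ((1 - s * p) * T₁ + 2 * T₂) < v ∧ v < min 1 (T₁ + 2 * T₂) := by
      apply exists_between
      have : 0 < s * p * T₁ := by positivity
      exact max_lt (lt_min one_pos (by linarith)) (lt_min hV (by nlinarith))
    rw [max_lt_iff] at hv1
    rw [lt_min_iff] at hv2
    set s' := (T₁ + 2 * T₂ - v) / (p * T₁) with hs'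
    have hs'e : s' * p * T₁ = T₁ + 2 * T₂ - v := by rw [hs']; field_simp
    have hs'0 : 0 < s' := div_pos (by linarith) (by positivity)
    have hs's : s' < s := by
      rw [hs', div_lt_iff₀ (by positivity)]
      nlinarith
    set L := |(1 - s' * p) * q - p| + 1 with hL
    have hL0 : 0 < L := by positivity
    obtain ⟨δ, hδ, hδ1, hδ2, hδ3, hδ4⟩ : ∃ δ > 0, q * δ ≤ T₁ ∧ p * δ ≤ 2 * T₂ ∧ L * δ < v ∧
        L * δ < 1 - v := by
      have hmin : 0 < min v (1 - v) := lt_min hv1.1 (by linarith)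
      refine ⟨min (min (T₁ / q) (2 * T₂ / p)) (min v (1 - v) / (2 * L)), by positivity, ?_, ?_, ?_, ?_⟩
      · rw [← le_div_iff₀' hq0]; exact (min_le_left _ _).trans (min_le_left _ _)
      · rw [← le_div_iff₀' hp0]; exact (min_le_left _ _).trans (min_le_right _ _)
      · rw [← lt_div_iff₀' hL0]
        refine (min_le_right _ _).trans_lt ?_
        rw [div_lt_div_iff₀ (by positivity) hL0]
        nlinarith [min_le_left v (1 - v)]
      · rw [← lt_div_iff₀' hL0]
        refine (min_le_right _ _).trans_lt ?_
        rw [div_lt_div_iff₀ (by positivity) hL0]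
        nlinarith [min_le_right v (1 - v)]
    have key : ∀ ε : ℝ, |ε| = δ → 0 ≤ T₁ + q * ε ∧ 0 ≤ 2 * T₂ - p * ε ∧
        0 < (1 - s' * p) * (T₁ + q * ε) + (2 * T₂ - p * ε) ∧
        (1 - s' * p) * (T₁ + q * ε) + (2 * T₂ - p * ε) ≤ 1 ∧
        p * (T₁ + q * ε) + q * (2 * T₂ - p * ε) = γ ∧
        D - (D + α) / 2 * (2 * T₂ - p * ε) - (D - s * p) * (T₁ + q * ε) =
          ε * (p * (D + α) - 2 * q * (D - s * p)) / 2 := by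
      intro ε hε
      have i1 : -δ ≤ ε := by rw [← hε]; exact neg_abs_le _
      have i2 : ε ≤ δ := by rw [← hε]; exact le_abs_self _
      have i3 : |((1 - s' * p) * q - p) * ε| ≤ L * δ := by
        rw [abs_mul, hε]; gcongr; linarith
      rw [abs_le] at i3
      have e : (1 - s' * p) * (T₁ + q * ε) + (2 * T₂ - p * ε) =
          v + ((1 - s' * p) * q - p) * ε := by linear_combination -hs'e
      have i4 := mul_le_mul_of_nonneg_left i1 hq0.le
      have i5 := mul_le_mul_of_nonneg_left i2 hp0.le
      rw [e]
      exact ⟨by linarith, by linarith, by linarith, by linarith, by linear_combination h1,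
        by linear_combination -h2⟩
    rcases lt_or_gt_of_ne hdisc with hneg | hposd
    · obtain ⟨a1, a2, a3, a4, a5, a6⟩ := key (-δ) (by rw [abs_neg, abs_of_pos hδ])
      obtain ⟨c1, c2, c3, c4, c5, c6⟩ := key δ (abs_of_pos hδ)
      exact ⟨s', _, _, _, _, hs'0, hs's.le, by linarith, 
          ⟨a1, a2, a3, a4, a5, by rw [a6]; exact div_pos (mul_pos_of_neg_of_neg (neg_lt_zero.2 hδ) hneg) two_pos⟩,
        ⟨c1, c2, c3, c4, c5, by rw [c6]; exact div_neg_of_neg_of_pos (mul_neg_of_pos_of_neg hδ hneg) two_pos⟩⟩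
    · obtain ⟨a1, a2, a3, a4, a5, a6⟩ := key (-δ) (by rw [abs_neg, abs_of_pos hδ])
      obtain ⟨c1, c2, c3, c4, c5, c6⟩ := key δ (abs_of_pos hδ)
      exact ⟨s', _, _, _, _, hs'0, hs's.le, by linarith, 
          ⟨c1, c2, c3, c4, c5, by rw [c6]; exact div_pos (mul_pos hδ hposd) two_pos⟩,
        ⟨a1, a2, a3, a4, a5, by rw [a6]; exact div_neg_of_neg_of_pos (mul_neg_of_neg_of_pos (neg_lt_zero.2 hδ) hposd) two_pos⟩⟩
  · have hV : (1 - s * p) * T₁ + 2 * T₂ = 1 := by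
      field_simp at hcon
      linear_combination h2 - hcon
    have hγq : γ = q := by
      rw [← h1]; linear_combination q * hV - T₁ * hpq
    have hs : s < 1 := by
      have : 0 < 1 - s * p := by
        by_contra h
        nlinarith
      nlinarith
    have hx : T₁ * (p * D - (D - s * p) * q) + 2 * q * T₂ * (D - (D + α) / 2) = 0 := by
      linear_combination (-q) * h2 + D * h1 + D * hγq
    have hd : (p * D - (D - s * p) * q) - p * (D - (D + α) / 2) ≠ 0 := by
      intro h; apply hdisc; linear_combination 2 * h
    have hVa : (1 - s * p) * (q / p) + 0 = 1 := by field_simp; linarith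
    have hVb : (1 - s * p) * 0 + 1 = 1 := by ring
    have hxa : D - (D + α) / 2 * 0 - (D - s * p) * (q / p) = (p * D - (D - s * p) * q) / p := by
      field_simp; ring
    have ha : 0 ≤ q / p := by positivity
    have hga : p * (q / p) + q * 0 = γ := by rw [hγq]; field_simp; ring
    have hgb : p * 0 + q * 1 = γ := by rw [hγq]; ring
    have hqT : 0 < q * T₂ := by positivity
    rcases lt_trichotomy (p * D - (D - s * p) * q) 0 with hlt | heq | hgt
    · refine ⟨s, 0, 1, q / p, 0, hs0, le_rfl, hs, ⟨le_rfl, by simp, by rw [hVb]; simp, hVb.le, hgb, ?_⟩,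
        ⟨ha, le_rfl, by rw [hVa]; simp, hVa.le, hga, ?_⟩⟩
      · nlinarith
      · rw [hxa]; exact div_neg_of_neg_of_pos hlt hp0
    · exfalso
      rw [heq] at hx hd
      have : D - (D + α) / 2 = 0 := by
        rcases mul_eq_zero.1 (by linarith : q * T₂ * (D - (D + α) / 2) = 0) with h | h
        · linarith
        · exact h
      rw [this] at hd
      simp at hd
    · refine ⟨s, q / p, 0, 0, 1, hs0, le_rfl, hs, ⟨ha, le_rfl, by rw [hVa]; simp, hVa.le, hga, ?_⟩,
        ⟨le_rfl, by simp, by rw [hVb]; simp, hVb.le, hgb, ?_⟩⟩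
      · rw [hxa]; exact div_pos hgt hp0
      · nlinarith

lemma div_strictly_between {D γ A B b₁ b₂ : ℝ} (hγ : 0 < γ) (hA : 0 < A) (hB : 0 < B)
    (h1 : A + B = γ) (h2 : b₂ * A + b₁ * B = D) (hne : b₁ ≠ b₂) :
    (b₁ < D / γ ∧ D / γ < b₂) ∨ (b₂ < D / γ ∧ D / γ < b₁) := by
  rw [lt_div_iff₀ hγ, div_lt_iff₀ hγ, lt_div_iff₀ hγ, div_lt_iff₀ hγ, ← h1, ← h2]
  rcases lt_or_gt_of_ne hne with h | h
  · left; constructor <;> nlinarith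
  · right; constructor <;> nlinarith

section Polar

variable {E : Type*} [NormedAddCommGroup E] [NormedSpace ℝ E] [MeasurableSpace E] [BorelSpace E]
  [FiniteDimensional ℝ E] (μ : Measure E) [μ.IsAddHaarMeasure]

lemma lintegral_eq_lintegral_toSphere [Nontrivial E] {f : E → ENNReal} (hf : Measurable f) :
    ∫⁻ x, f x ∂μ = ∫⁻ ξ : Metric.sphere (0 : E) 1, ∫⁻ r in Ioi (0 : ℝ),
      ENNReal.ofReal (r ^ (Module.finrank ℝ E - 1)) * f (r • (ξ : E)) ∂volume ∂μ.toSphere := by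
  have hmeas : Measurable fun z : Metric.sphere (0 : E) 1 × Ioi (0 : ℝ) =>
      f ((z.2 : ℝ) • (z.1 : E)) := by
    apply hf.comp
    exact (measurable_subtype_coe.comp measurable_snd).smul
      (measurable_subtype_coe.comp measurable_fst)
  calc ∫⁻ x, f x ∂μ = ∫⁻ x in ({0}ᶜ : Set E), f x ∂μ := by
        rw [restrict_compl_singleton]
    _ = ∫⁻ x : ({0}ᶜ : Set E), f x ∂(μ.comap (↑)) :=
        (lintegral_subtype_comap (measurableSet_singleton _).compl f).symm
    _ = ∫⁻ z, f ((z.2 : ℝ) • (z.1 : E)) ∂(μ.toSphere.prod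
          (Measure.volumeIoiPow (Module.finrank ℝ E - 1))) := by
        rw [← (Measure.measurePreserving_homeomorphUnitSphereProd μ).lintegral_comp_emb
          (Homeomorph.measurableEmbedding _)]
        refine lintegral_congr fun x => ?_
        have hx : ‖(x : E)‖ ≠ 0 := norm_ne_zero_iff.2 x.2
        simp [smul_smul, hx]
    _ = ∫⁻ ξ, ∫⁻ r, f ((r : ℝ) • (ξ : E)) ∂(Measure.volumeIoiPow (Module.finrank ℝ E - 1))
          ∂μ.toSphere := lintegral_prod _ hmeas.aemeasurable
    _ = _ := by
        refine lintegral_congr fun ξ => ?_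
        rw [Measure.volumeIoiPow, lintegral_withDensity_eq_lintegral_mul]
        · rw [← lintegral_subtype_comap measurableSet_Ioi]
          rfl
        · fun_prop
        · exact hf.comp (measurable_subtype_coe.smul_const _)

lemma lintegral_fun_norm_eq [Nontrivial E] {f : ℝ → ENNReal} (hf : Measurable f) :
    ∫⁻ x, f ‖x‖ ∂μ = μ.toSphere univ * ∫⁻ r in Ioi (0 : ℝ),
      ENNReal.ofReal (r ^ (Module.finrank ℝ E - 1)) * f r := by
  rw [lintegral_eq_lintegral_toSphere μ (f := fun x => f ‖x‖) (hf.comp measurable_norm), mul_comm, ← lintegral_const]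
  refine lintegral_congr fun ξ => setLIntegral_congr_fun measurableSet_Ioi fun r hr => ?_
  rw [mem_Ioi] at hr
  simp [norm_smul, abs_of_pos hr]

lemma le_toSphere_ball [Nontrivial E] {δ : ℝ} (hδ : 0 < δ) (hδ1 : δ ≤ 1)
    (ω : Metric.sphere (0 : E) 1) :
    ENNReal.ofReal (δ ^ (Module.finrank ℝ E - 1)) * (μ (Metric.ball 0 1) / 2 ^ Module.finrank ℝ E) ≤
      μ.toSphere (Metric.ball ω (2 * δ)) := by
  set n := Module.finrank ℝ E with hn
  have hn0 : 0 < n := Module.finrank_pos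
  have hball : μ (Metric.ball (ω : E) δ) = ENNReal.ofReal (δ ^ n) * μ (Metric.ball 0 1) :=
    Measure.addHaar_ball μ _ hδ.le
  have h1 : μ (Metric.ball (ω : E) δ) ≤
      μ.toSphere (Metric.ball ω (2 * δ)) * ENNReal.ofReal (2 ^ (n - 1) * (2 * δ)) := by
    have hmeas : MeasurableSet (Metric.ball (ω : E) δ) := measurableSet_ball
    rw [← lintegral_indicator_one hmeas,
      lintegral_eq_lintegral_toSphere μ (measurable_one.indicator hmeas)]
    calc _ ≤ ∫⁻ ξ, (Metric.ball ω (2 * δ)).indicator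
          (fun _ => ENNReal.ofReal (2 ^ (n - 1) * (2 * δ))) ξ ∂μ.toSphere := by
          refine lintegral_mono fun ξ => ?_
          by_cases hξ : ξ ∈ Metric.ball ω (2 * δ)
          · rw [indicator_of_mem hξ]
            calc _ ≤ ∫⁻ r in Ioi (0:ℝ), (Ioo (1 - δ) (1 + δ)).indicator
                    (fun _ => ENNReal.ofReal (2 ^ (n - 1))) r := by
                  refine setLIntegral_mono' measurableSet_Ioi fun r hr => ?_
                  rw [mem_Ioi] at hr
                  by_cases hb : r • (ξ : E) ∈ Metric.ball (ω : E) δ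
                  · have h1 : |r - 1| < δ := by
                      rw [mem_ball_iff_norm] at hb
                      refine lt_of_le_of_lt ?_ hb
                      have := abs_norm_sub_norm_le (r • (ξ : E)) ω
                      simpa [norm_smul, abs_of_pos hr] using this
                    rw [abs_lt] at h1
                    rw [indicator_of_mem hb, indicator_of_mem (by constructor <;> linarith)]
                    simp only [Pi.one_apply, mul_one]
                    apply ENNReal.ofReal_le_ofReal
                    gcongr
                    linarith
                  · rw [indicator_of_notMem hb]; simp
              _ ≤ ∫⁻ r, (Ioo (1 - δ) (1 + δ)).indicator
                    (fun _ => ENNReal.ofReal (2 ^ (n - 1))) r := setLIntegral_le_lintegral _ _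
              _ = _ := by
                  rw [lintegral_indicator_const measurableSet_Ioo, Real.volume_Ioo,
                    ENNReal.ofReal_mul (by positivity)]
                  congr 2; ring
          · rw [indicator_of_notMem hξ]
            refine le_of_eq ?_
            rw [setLIntegral_congr_fun (g := fun _ => 0) measurableSet_Ioi, lintegral_zero]
            intro r hr
            rw [mem_Ioi] at hr
            have hb : r • (ξ : E) ∉ Metric.ball (ω : E) δ := by
              intro hb
              apply hξ
              rw [mem_ball_iff_norm] at hb
              have h1 : |r - 1| < δ := by
                refine lt_of_le_of_lt ?_ hb
                have := abs_norm_sub_norm_le (r • (ξ : E)) ω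
                simpa [norm_smul, abs_of_pos hr] using this
              rw [Metric.mem_ball, Subtype.dist_eq, dist_eq_norm]
              have h2 : ‖(ξ : E) - ω‖ ≤ ‖(1 - r) • (ξ : E)‖ + ‖r • (ξ : E) - ω‖ := by
                refine le_trans (le_of_eq ?_) (norm_add_le _ _)
                congr 1
                rw [sub_smul, one_smul]; abel
              rw [norm_smul, norm_eq_of_mem_sphere ξ, Real.norm_eq_abs, abs_sub_comm] at h2
              linarith
            simp [indicator_of_notMem hb]
      _ = _ := by
          rw [lintegral_indicator_const measurableSet_ball, mul_comm]
  rw [hball] at h1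
  have e : ENNReal.ofReal (2 ^ (n - 1) * (2 * δ)) = 2 ^ n * ENNReal.ofReal δ := by
    rw [← mul_assoc, ENNReal.ofReal_mul (by positivity), ← pow_succ, Nat.sub_add_cancel hn0,
      ENNReal.ofReal_pow (by norm_num), ENNReal.ofReal_ofNat]
  have e2 : ENNReal.ofReal (δ ^ n) = ENNReal.ofReal (δ ^ (n - 1)) * ENNReal.ofReal δ := by
    rw [← ENNReal.ofReal_mul (by positivity), ← pow_succ, Nat.sub_add_cancel hn0]
  rw [e, e2] at h1
  have hδ' : ENNReal.ofReal δ ≠ 0 := by simpa using hδ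
  rw [← mul_div_assoc]
  refine ENNReal.div_le_of_le_mul ?_
  rw [← ENNReal.mul_le_mul_iff_left hδ' ENNReal.ofReal_ne_top]
  calc _ = ENNReal.ofReal (δ ^ (n - 1)) * ENNReal.ofReal δ * μ (Metric.ball 0 1) := by ring
    _ ≤ _ := h1
    _ = _ := by ring

end Polar

section Radial

variable {E : Type*} [NormedAddCommGroup E] [NormedSpace ℝ E] [MeasurableSpace E] [BorelSpace E]
  [FiniteDimensional ℝ E] [Nontrivial E] (μ : Measure E) [μ.IsAddHaarMeasure]

lemma toSphere_mul_lintegral_Icc_le {F : ℝ → ENNReal} (hF : Measurable F) {R S : ℝ} (hR : 0 < R) :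
    μ.toSphere univ * ENNReal.ofReal (R ^ (Module.finrank ℝ E - 1)) * ∫⁻ r in Icc R S, F r ≤
      ∫⁻ x in {x : E | ‖x‖ ∈ Icc R S}, F ‖x‖ ∂μ := by
  have hm : MeasurableSet {x : E | ‖x‖ ∈ Icc R S} := measurableSet_Icc.preimage measurable_norm
  have e : ∫⁻ x in {x : E | ‖x‖ ∈ Icc R S}, F ‖x‖ ∂μ = ∫⁻ x : E, (Icc R S).indicator F ‖x‖ ∂μ := by
    rw [← lintegral_indicator hm]; rfl
  rw [e, lintegral_fun_norm_eq μ (hF.indicator measurableSet_Icc), mul_assoc]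
  gcongr
  rw [← lintegral_const_mul _ hF]
  calc _ ≤ ∫⁻ r in Icc R S, ENNReal.ofReal (r ^ (Module.finrank ℝ E - 1)) *
        (Icc R S).indicator F r := by
        refine setLIntegral_mono' measurableSet_Icc fun r hr => ?_
        rw [indicator_of_mem hr]
        gcongr
        exact hr.1
    _ ≤ _ := lintegral_mono_set fun r hr => hR.trans_le hr.1

lemma toSphere_univ_pos : 0 < μ.toSphere.real univ := by
  rw [Measure.toSphere_real_apply_univ]
  exact mul_pos (by exact_mod_cast Module.finrank_pos)
    (ENNReal.toReal_pos (Metric.measure_ball_pos _ _ one_pos).ne' measure_ball_lt_top.ne)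

lemma exists_lintegral_Icc_le_of_energy_le {q α : ℝ} (hα : α < Module.finrank ℝ E) :
    ∃ C > 0, ∀ u : ℝ → ℝ, Continuous u →
      ∫⁻ x, ∫⁻ y, ENNReal.ofReal (|u ‖x‖| ^ q * |u ‖y‖| ^ q /
        ‖x - y‖ ^ ((Module.finrank ℝ E : ℝ) - α)) ∂μ ∂μ ≤ 1 → 0 ≤ q →
      ∀ R, 0 < R → ∫⁻ r in Icc R (2 * R), ENNReal.ofReal (|u r| ^ q) ≤
        ENNReal.ofReal (C * R ^ (1 - ((Module.finrank ℝ E : ℝ) + α) / 2)) := by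
  set n := Module.finrank ℝ E with hn
  have hn0 : 0 < n := Module.finrank_pos
  set σ := μ.toSphere.real univ with hσ
  have hσ0 : 0 < σ := toSphere_univ_pos μ
  have hσe : μ.toSphere univ = ENNReal.ofReal σ :=
    (ofReal_measureReal (measure_ne_top _ _)).symm
  set e := (n : ℝ) - α with he
  have he0 : 0 < e := by linarith
  refine ⟨2 ^ e / σ, by positivity, fun u hu h hq R hR => ?_⟩
  set A := {x : E | ‖x‖ ∈ Icc R (2 * R)} with hA
  have hm : MeasurableSet A := measurableSet_Icc.preimage measurable_norm
  have huq : Measurable fun r => ENNReal.ofReal (|u r| ^ q) :=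
    (hu.measurable.abs.pow_const q).ennreal_ofReal
  have hun : Measurable fun x : E => ENNReal.ofReal (|u ‖x‖| ^ q) := huq.comp measurable_norm
  have hfin : ∫⁻ r in Icc R (2 * R), ENNReal.ofReal (|u r| ^ q) =
      ENNReal.ofReal (∫ r in Icc R (2 * R), |u r| ^ q) := by
    rw [ofReal_integral_eq_lintegral_ofReal _ (ae_of_all _ fun r => by positivity)]
    exact (hu.abs.rpow_const fun _ => Or.inr hq).integrableOn_Icc
  set m := ∫ r in Icc R (2 * R), |u r| ^ q with hmdef
  have hm0 : 0 ≤ m := integral_nonneg fun r => by positivity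
  have hann := toSphere_mul_lintegral_Icc_le μ huq (S := 2 * R) hR
  rw [hfin, hσe, ← ENNReal.ofReal_mul hσ0.le, ← ENNReal.ofReal_mul (by positivity)] at hann
  have hpt : ∀ x ∈ A, ENNReal.ofReal (|u ‖x‖| ^ q) *
      (ENNReal.ofReal (((4 * R) ^ e)⁻¹) * ∫⁻ y in A, ENNReal.ofReal (|u ‖y‖| ^ q) ∂μ) ≤
      ∫⁻ y, ENNReal.ofReal (|u ‖x‖| ^ q * |u ‖y‖| ^ q / ‖x - y‖ ^ e) ∂μ := by
    intro x hx
    rw [← lintegral_const_mul _ hun, ← lintegral_const_mul _ (hun.const_mul _)]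
    refine le_trans (lintegral_mono_ae ?_) (setLIntegral_le_lintegral A _)
    have hne : ∀ᵐ y ∂(μ.restrict A), y ≠ x := by
      apply ae_restrict_of_ae
      simp [ae_iff]
    filter_upwards [ae_restrict_mem hm, hne] with y hy hyx
    rw [← ENNReal.ofReal_mul (by positivity), ← ENNReal.ofReal_mul (by positivity)]
    apply ENNReal.ofReal_le_ofReal
    have h1 : 0 < ‖x - y‖ := norm_pos_iff.2 (sub_ne_zero.2 hyx.symm)
    have h2 : ‖x - y‖ ≤ 4 * R := by
      refine (norm_sub_le x y).trans ?_
      have := hx.2; have := hy.2; linarith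
    calc _ = |u ‖x‖| ^ q * |u ‖y‖| ^ q / (4 * R) ^ e := by
          rw [div_eq_mul_inv]; ring
      _ ≤ _ := by gcongr
  set N := σ * R ^ (n - 1) * m with hN
  have hN0 : 0 ≤ N := by positivity
  set B := ∫⁻ x in A, ENNReal.ofReal (|u ‖x‖| ^ q) ∂μ with hB
  have h1 : ENNReal.ofReal (N * ((4 * R) ^ e)⁻¹ * N) ≤ 1 := by
    calc _ ≤ B * (ENNReal.ofReal (((4 * R) ^ e)⁻¹) * B) := by
          rw [ENNReal.ofReal_mul (by positivity), ENNReal.ofReal_mul hN0, mul_assoc]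
          gcongr
      _ = ∫⁻ x in A, ENNReal.ofReal (|u ‖x‖| ^ q) *
            (ENNReal.ofReal (((4 * R) ^ e)⁻¹) * B) ∂μ := by
          rw [lintegral_mul_const _ hun]
      _ ≤ _ := (setLIntegral_mono' hm hpt).trans ((setLIntegral_le_lintegral _ _).trans h)
  rw [ENNReal.ofReal_le_one] at h1
  have h2 : N ^ 2 ≤ ((4 * R) ^ (e / 2)) ^ 2 := by
    rw [← rpow_natCast ((4 * R) ^ (e / 2)), ← rpow_mul (by positivity)]
    have : e / 2 * ((2:ℕ) : ℝ) = e := by push_cast; ring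
    rw [this]
    have hp : 0 < (4 * R) ^ e := by positivity
    rw [mul_right_comm, ← div_eq_mul_inv, div_le_one hp] at h1
    linarith
  have h3 : N ≤ (4 * R) ^ (e / 2) := le_of_sq_le_sq h2 (by positivity)
  rw [hfin]
  apply ENNReal.ofReal_le_ofReal
  have h4 : (4 * R) ^ (e / 2) = 2 ^ e / σ * R ^ (1 - ((n : ℝ) + α) / 2) * (σ * R ^ (n - 1)) := by
    have e1 : (4:ℝ) ^ (e / 2) = 2 ^ e := by
      rw [show (4:ℝ) = 2 ^ (2:ℝ) by norm_num, ← rpow_mul (by norm_num)]; congr 1; ring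
    have e2 : R ^ (1 - ((n : ℝ) + α) / 2) * R ^ (n - 1) = R ^ (e / 2) := by
      rw [← rpow_natCast, ← rpow_add hR, Nat.cast_sub hn0, he]; congr 1; push_cast; ring
    rw [mul_rpow (by norm_num) hR.le, e1, ← e2]
    field_simp
  rw [h4, hN, mul_comm] at h3
  exact le_of_mul_le_mul_right h3 (by positivity)

end Radial

section Radial

variable {E : Type*} [NormedAddCommGroup E] [NormedSpace ℝ E] [MeasurableSpace E] [BorelSpace E]
  [FiniteDimensional ℝ E] [Nontrivial E] (μ : Measure E) [μ.IsAddHaarMeasure]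

lemma exists_mul_inner_gagliardo_le {s p : ℝ} (hs : 0 < s) (hp : 1 ≤ p) :
    ∃ c > 0, ∀ u : ℝ → ℝ, Continuous u → ∀ R, 0 < R → ∀ x : E, ‖x‖ ∈ Icc R (4 * R) →
      ENNReal.ofReal c * ∫⁻ ρ in Icc R (4 * R),
        ENNReal.ofReal (|u ‖x‖ - u ρ| ^ p / |‖x‖ - ρ| ^ (1 + s * p)) ≤
      ∫⁻ y, ENNReal.ofReal (|u ‖x‖ - u ‖y‖| ^ p /
        ‖x - y‖ ^ ((Module.finrank ℝ E : ℝ) + s * p)) ∂μ := by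
  set n := Module.finrank ℝ E with hn
  have hn0 : 0 < n := Module.finrank_pos
  set V := μ.real (Metric.ball 0 1) / 2 ^ n with hV
  have hV0 : 0 < V := div_pos (ENNReal.toReal_pos (Metric.measure_ball_pos _ _ one_pos).ne'
    measure_ball_lt_top.ne) (by positivity)
  have hVe : μ (Metric.ball 0 1) / 2 ^ n = ENNReal.ofReal V := by
    rw [hV, ENNReal.ofReal_div_of_pos (by positivity), ENNReal.ofReal_pow (by norm_num),
      ENNReal.ofReal_ofNat, ofReal_measureReal measure_ball_lt_top.ne]
  set e := (n : ℝ) + s * p with he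
  have he0 : 0 < e := by positivity
  refine ⟨V * (8 ^ (n - 1) * 2 ^ e)⁻¹, by positivity, fun u hu R hR x hx => ?_⟩
  set r := ‖x‖ with hr
  have hr0 : 0 < r := hR.trans_le hx.1
  obtain ⟨ω, hxω⟩ : ∃ ω : Metric.sphere (0 : E) 1, x = r • (ω : E) :=
    ⟨⟨r⁻¹ • x, by
      rw [mem_sphere_zero_iff_norm, norm_smul, norm_inv, norm_norm, inv_mul_cancel₀ hr0.ne']⟩, by
      simp [smul_smul, hr0.ne']⟩
  have hK : Measurable fun y : E => ENNReal.ofReal (|u r - u ‖y‖| ^ p / ‖x - y‖ ^ e) := by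
    refine (Measurable.div ?_ ?_).ennreal_ofReal
    · exact ((measurable_const.sub (hu.measurable.comp measurable_norm)).abs.pow_const p)
    · exact (measurable_const.sub measurable_id).norm.pow_const e
  have hk : Measurable fun ρ : ℝ => ENNReal.ofReal (|u r - u ρ| ^ p / |r - ρ| ^ (1 + s * p)) :=
    (((measurable_const.sub hu.measurable).abs.pow_const p).div
      ((measurable_const.sub measurable_id).abs.pow_const _)).ennreal_ofReal
  have hsub : Icc R (4 * R) ⊆ Ioi (0 : ℝ) := fun ρ hρ => hR.trans_le hρ.1
  have hjoint : Measurable (Function.uncurry fun (ξ : Metric.sphere (0 : E) 1) (ρ : ℝ) =>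
      ENNReal.ofReal (ρ ^ (n - 1)) *
        ENNReal.ofReal (|u r - u ‖ρ • (ξ : E)‖| ^ p / ‖x - ρ • (ξ : E)‖ ^ e)) := by
    refine Measurable.mul (measurable_snd.pow_const _).ennreal_ofReal ?_
    exact hK.comp (measurable_snd.smul (measurable_subtype_coe.comp measurable_fst))
  calc ENNReal.ofReal (V * (8 ^ (n - 1) * 2 ^ e)⁻¹) * ∫⁻ ρ in Icc R (4 * R),
        ENNReal.ofReal (|u r - u ρ| ^ p / |r - ρ| ^ (1 + s * p))
      ≤ ∫⁻ ρ in Icc R (4 * R), ∫⁻ ξ : Metric.sphere (0 : E) 1, ENNReal.ofReal (ρ ^ (n - 1)) *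
        ENNReal.ofReal (|u r - u ‖ρ • (ξ : E)‖| ^ p / ‖x - ρ • (ξ : E)‖ ^ e) ∂μ.toSphere := by
        rw [← lintegral_const_mul _ hk]
        refine setLIntegral_mono' measurableSet_Icc fun ρ hρ => ?_
        have hρ0 : 0 < ρ := hsub hρ
        rcases eq_or_ne r ρ with hrρ | hrρ
        · rw [hrρ, sub_self, abs_zero, zero_rpow (by linarith)]
          simp
        set t := |r - ρ| with ht
        have ht0 : 0 < t := abs_pos.2 (sub_ne_zero.2 hrρ)
        have ht3 : t ≤ 3 * R := by
          rw [ht, abs_le]; constructor <;> linarith [hx.1, hx.2, hρ.1, hρ.2]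
        set δ := t / (8 * R) with hδ
        have hδ0 : 0 < δ := by positivity
        have hδ1 : δ ≤ 1 := by rw [hδ, div_le_one (by positivity)]; linarith
        have hcap := le_toSphere_ball μ hδ0 hδ1 ω
        rw [hVe, ← ENNReal.ofReal_mul (by positivity)] at hcap
        calc _ ≤ ENNReal.ofReal (R ^ (n - 1) * (|u r - u ρ| ^ p / (2 * t) ^ e)) *
              ENNReal.ofReal (δ ^ (n - 1) * V) := by
              rw [← ENNReal.ofReal_mul (by positivity), ← ENNReal.ofReal_mul (by positivity)]
              apply ENNReal.ofReal_le_ofReal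
              apply le_of_eq
              have e1 : t ^ e = t ^ (n - 1) * t ^ (1 + s * p) := by
                rw [← rpow_natCast, ← rpow_add ht0, Nat.cast_sub hn0, he]
                congr 1; push_cast; ring
              rw [mul_rpow (by norm_num) ht0.le, e1, hδ, div_pow, mul_pow]
              field_simp
          _ ≤ ENNReal.ofReal (R ^ (n - 1) * (|u r - u ρ| ^ p / (2 * t) ^ e)) *
              μ.toSphere (Metric.ball ω (2 * δ)) := by gcongr
          _ = ∫⁻ ξ in Metric.ball ω (2 * δ),
              ENNReal.ofReal (R ^ (n - 1) * (|u r - u ρ| ^ p / (2 * t) ^ e)) ∂μ.toSphere := by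
              rw [setLIntegral_const]
          _ ≤ ∫⁻ ξ in Metric.ball ω (2 * δ), ENNReal.ofReal (ρ ^ (n - 1)) *
              ENNReal.ofReal (|u r - u ‖ρ • (ξ : E)‖| ^ p / ‖x - ρ • (ξ : E)‖ ^ e) ∂μ.toSphere := by
              refine setLIntegral_mono' measurableSet_ball fun ξ hξ => ?_
              rw [← ENNReal.ofReal_mul (by positivity)]
              have hnorm : ‖ρ • (ξ : E)‖ = ρ := by
                rw [norm_smul, norm_eq_of_mem_sphere ξ, mul_one, Real.norm_eq_abs, abs_of_pos hρ0]
              have hlow : 0 < ‖x - ρ • (ξ : E)‖ := by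
                refine ht0.trans_le ?_
                have := abs_norm_sub_norm_le x (ρ • (ξ : E))
                rwa [hnorm] at this
              have hup : ‖x - ρ • (ξ : E)‖ ≤ 2 * t := by
                rw [Metric.mem_ball, Subtype.dist_eq, dist_eq_norm, norm_sub_rev] at hξ
                have e1 : x - ρ • (ξ : E) = (r - ρ) • (ω : E) + ρ • ((ω : E) - ξ) := by
                  rw [hxω, sub_smul, smul_sub]; abel
                rw [e1]
                refine (norm_add_le _ _).trans ?_
                rw [norm_smul, norm_smul, norm_eq_of_mem_sphere ω, mul_one, Real.norm_eq_abs,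
                  Real.norm_eq_abs, abs_of_pos hρ0, ← ht]
                have : ρ * ‖(ω : E) - ξ‖ ≤ 4 * R * (2 * δ) :=
                  mul_le_mul hρ.2 hξ.le (norm_nonneg _) (by positivity)
                have e2 : 4 * R * (2 * δ) = t := by rw [hδ]; field_simp; norm_num
                linarith
              rw [hnorm]
              apply ENNReal.ofReal_le_ofReal
              gcongr
              exact hρ.1
          _ ≤ _ := setLIntegral_le_lintegral _ _
    _ = ∫⁻ ξ : Metric.sphere (0 : E) 1, ∫⁻ ρ in Icc R (4 * R), ENNReal.ofReal (ρ ^ (n - 1)) *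
        ENNReal.ofReal (|u r - u ‖ρ • (ξ : E)‖| ^ p / ‖x - ρ • (ξ : E)‖ ^ e) ∂volume ∂μ.toSphere :=
        (lintegral_lintegral_swap hjoint.aemeasurable).symm
    _ ≤ _ := by
        rw [lintegral_eq_lintegral_toSphere μ hK]
        exact lintegral_mono fun ξ => lintegral_mono_set hsub

lemma exists_gagliardo_Icc_le {s p : ℝ} (hs : 0 < s) (hp : 1 ≤ p) :
    ∃ C > 0, ∀ u : ℝ → ℝ, Continuous u →
      ∫⁻ x, ∫⁻ y, ENNReal.ofReal (|u ‖x‖ - u ‖y‖| ^ p /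
        ‖x - y‖ ^ ((Module.finrank ℝ E : ℝ) + s * p)) ∂μ ∂μ ≤ 1 →
      ∀ R, 0 < R → ∫⁻ r in Icc R (4 * R), ∫⁻ ρ in Icc R (4 * R),
        ENNReal.ofReal (|u r - u ρ| ^ p / |r - ρ| ^ (1 + s * p)) ≤
        ENNReal.ofReal (C * R ^ (1 - (Module.finrank ℝ E : ℝ))) := by
  obtain ⟨c, hc, h⟩ := exists_mul_inner_gagliardo_le μ hs hp
  set n := Module.finrank ℝ E with hn
  have hn0 : 0 < n := Module.finrank_pos
  set σ := μ.toSphere.real univ with hσ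
  have hσ0 : 0 < σ := toSphere_univ_pos μ
  have hσe : μ.toSphere univ = ENNReal.ofReal σ :=
    (ofReal_measureReal (measure_ne_top _ _)).symm
  refine ⟨(σ * c)⁻¹, by positivity, fun u hu hA R hR => ?_⟩
  have hm : MeasurableSet {x : E | ‖x‖ ∈ Icc R (4 * R)} :=
    measurableSet_Icc.preimage measurable_norm
  have hF := measurable_gagliardo_inner hu.measurable p (1 + s * p) (Icc R (4 * R))
  have h1 := toSphere_mul_lintegral_Icc_le μ (hF.const_mul (ENNReal.ofReal c)) (S := 4 * R) hR
  have h2 := h1.trans (setLIntegral_mono' hm fun x hx => h u hu R hR x hx)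
  have h3 := h2.trans ((setLIntegral_le_lintegral _ _).trans hA)
  rw [lintegral_const_mul _ hF, hσe, ← ENNReal.ofReal_mul hσ0.le, ← mul_assoc,
    ← ENNReal.ofReal_mul (by positivity), mul_comm] at h3
  have hpos : 0 < σ * R ^ (n - 1) * c := by positivity
  have h4 := ENNReal.le_div_iff_mul_le (b := ENNReal.ofReal (σ * R ^ (n - 1) * c)) (c := 1)
    (Or.inl (by simpa using hpos)) (Or.inl ENNReal.ofReal_ne_top) |>.2 h3
  refine h4.trans ?_
  rw [← ENNReal.ofReal_one, ← ENNReal.ofReal_div_of_pos hpos]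
  apply ENNReal.ofReal_le_ofReal
  have e1 : R ^ (1 - (n : ℝ)) = (R ^ (n - 1))⁻¹ := by
    rw [← rpow_natCast, ← rpow_neg hR.le, Nat.cast_sub hn0]; congr 1; push_cast; ring
  rw [e1]
  apply le_of_eq
  field_simp

end Radial

lemma lintegral_Icc_abs_sub_rpow_le {κ a b t : ℝ} (hκ : 0 < κ) (ht : t ∈ Icc a b) :
    ∫⁻ r in Icc a b, ENNReal.ofReal (|r - t| ^ (κ - 1)) ≤
      ENNReal.ofReal (2 * ((b - a) ^ κ / κ)) := by
  have hab : 0 ≤ b - a := by linarith [ht.1, ht.2]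
  set L := b - a with hL
  set f : ℝ → ENNReal := (Iic L).indicator fun h => ENNReal.ofReal (h ^ (κ - 1)) with hf
  have hfm : Measurable f :=
    (measurable_id.pow_const (κ - 1)).ennreal_ofReal.indicator measurableSet_Iic
  have h1 : ∫⁻ r in Icc a b, ENNReal.ofReal (|r - t| ^ (κ - 1)) ≤ ∫⁻ r, f ‖r - t‖ := by
    rw [← lintegral_indicator measurableSet_Icc]
    refine lintegral_mono fun r => ?_
    by_cases hr : r ∈ Icc a b
    · have : |r - t| ≤ L := by
        rw [abs_le]; constructor <;> linarith [hr.1, hr.2, ht.1, ht.2]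
      rw [indicator_of_mem hr, hf, indicator_of_mem (by simpa using this), Real.norm_eq_abs]
    · rw [indicator_of_notMem hr]; exact zero_le
  refine h1.trans ?_
  rw [lintegral_sub_right_eq_self (fun r => f ‖r‖) t, lintegral_fun_norm_eq volume hfm,
    Measure.toSphere_apply_univ, Module.finrank_self]
  have h2 : (∫⁻ r in Ioi (0 : ℝ), ENNReal.ofReal (r ^ (1 - 1)) * f r) =
      ENNReal.ofReal (L ^ κ / κ) := by
    have e1 : ∀ r : ℝ, ENNReal.ofReal (r ^ (1 - 1)) * f r = f r := fun r => by simp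
    simp_rw [e1]
    rw [hf, lintegral_indicator measurableSet_Iic, Measure.restrict_restrict measurableSet_Iic,
      inter_comm, Ioi_inter_Iic]
    have hint : IntegrableOn (fun r : ℝ => r ^ (κ - 1)) (Ioc 0 L) :=
      (intervalIntegrable_iff_integrableOn_Ioc_of_le hab).1
        (intervalIntegral.intervalIntegrable_rpow' (by linarith))
    rw [← ofReal_integral_eq_lintegral_ofReal hint
      ((ae_restrict_mem measurableSet_Ioc).mono fun r hr => rpow_nonneg hr.1.le _),
      ← intervalIntegral.integral_of_le hab, integral_rpow (Or.inl (by linarith))]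
    rw [sub_add_cancel, zero_rpow hκ.ne', sub_zero]
  rw [h2, Real.volume_ball, ENNReal.ofReal_mul (by norm_num)]
  simp

lemma ofReal_abs_sub_rpow_le_mul_lintegral {u u' : ℝ → ℝ} (hu : ∀ r, HasDerivAt u (u' r) r)
    (hu' : Continuous u') {p : ℝ} (hp : 1 ≤ p) (r ρ : ℝ) :
    ENNReal.ofReal (|u r - u ρ| ^ p) ≤ ENNReal.ofReal (|r - ρ| ^ (p - 1)) *
      ∫⁻ t in Ioc (min r ρ) (max r ρ), ENNReal.ofReal (|u' t| ^ p) := by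
  have hp0 : 0 < p := by linarith
  set ν := volume.restrict (Ioc (min r ρ) (max r ρ)) with hν
  have hν1 : ν univ = ENNReal.ofReal |r - ρ| := by
    rw [hν, Measure.restrict_apply_univ, Real.volume_Ioc, max_sub_min_eq_abs']
  have h1 : ENNReal.ofReal |u r - u ρ| ≤ ∫⁻ t, ‖u' t‖ₑ ∂ν := by
    have e1 : ∫ t in ρ..r, u' t = u r - u ρ :=
      intervalIntegral.integral_eq_sub_of_hasDerivAt (fun x _ => hu x)
        (hu'.intervalIntegrable _ _)
    rw [← e1, intervalIntegral.abs_intervalIntegral_eq, uIoc, min_comm, max_comm,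
      ← Real.enorm_eq_ofReal_abs]
    exact enorm_integral_le_lintegral_enorm _
  have h2 := eLpNorm'_le_eLpNorm'_mul_rpow_measure_univ (μ := ν) (f := u') one_pos hp
    hu'.aestronglyMeasurable
  simp only [eLpNorm', ENNReal.rpow_one, div_one] at h2
  have h3 := ENNReal.rpow_le_rpow (h1.trans h2) hp0.le
  rw [ENNReal.ofReal_rpow_of_nonneg (abs_nonneg _) hp0.le, ENNReal.mul_rpow_of_nonneg _ _ hp0.le,
    ← ENNReal.rpow_mul, ← ENNReal.rpow_mul, one_div_mul_cancel hp0.ne', ENNReal.rpow_one, hν1,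
    sub_mul, one_mul, one_div_mul_cancel hp0.ne',
    ENNReal.ofReal_rpow_of_nonneg (abs_nonneg _) (by linarith), mul_comm] at h3
  refine h3.trans (le_of_eq ?_)
  congr 1
  refine lintegral_congr fun t => ?_
  rw [Real.enorm_eq_ofReal_abs, ENNReal.ofReal_rpow_of_nonneg (abs_nonneg _) hp0.le]

lemma lintegral_gagliardo_le_lintegral_deriv {u u' : ℝ → ℝ} (hu : ∀ r, HasDerivAt u (u' r) r)
    (hu' : Continuous u') {p κ a b : ℝ} (hp : 1 ≤ p) (hκ : 0 < κ) (hκ1 : κ ≤ 1) :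
    ∫⁻ r in Icc a b, ∫⁻ ρ in Icc a b,
      ENNReal.ofReal (|u r - u ρ| ^ p / |r - ρ| ^ (1 + p - 2 * κ)) ≤
    ENNReal.ofReal (2 * ((b - a) ^ κ / κ)) * (ENNReal.ofReal (2 * ((b - a) ^ κ / κ)) *
      ∫⁻ t in Icc a b, ENNReal.ofReal (|u' t| ^ p)) := by
  set K := ENNReal.ofReal (2 * ((b - a) ^ κ / κ)) with hK
  set w : ℝ → ENNReal := fun t => ENNReal.ofReal (|u' t| ^ p) with hw
  have hwm : Measurable w := (hu'.measurable.abs.pow_const p).ennreal_ofReal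
  set A : ℝ → ℝ → ENNReal := fun r t => ENNReal.ofReal (|r - t| ^ (κ - 1)) with hA
  have hAm : Measurable (Function.uncurry A) :=
    ((measurable_fst.sub measurable_snd).abs.pow_const (κ - 1)).ennreal_ofReal
  have hAr : ∀ r, Measurable (A r) := fun r => hAm.comp (measurable_const.prodMk measurable_id)
  have hAt : ∀ t, Measurable fun r => A r t := fun t =>
    hAm.comp (measurable_id.prodMk measurable_const)
  have hpt : ∀ r ∈ Icc a b, ∀ ρ ∈ Icc a b,
      ENNReal.ofReal (|u r - u ρ| ^ p / |r - ρ| ^ (1 + p - 2 * κ)) ≤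
        ∫⁻ t in Icc a b, A ρ t * (A r t * w t) := by
    intro r hr ρ hρ
    rcases eq_or_ne r ρ with hrρ | hrρ
    · rw [hrρ, sub_self, abs_zero, zero_rpow (by linarith)]
      simp
    have ht0 : 0 < |r - ρ| := abs_pos.2 (sub_ne_zero.2 hrρ)
    have e1 : |u r - u ρ| ^ p / |r - ρ| ^ (1 + p - 2 * κ) =
        |r - ρ| ^ (-(1 + p - 2 * κ)) * |u r - u ρ| ^ p := by
      rw [rpow_neg ht0.le, div_eq_mul_inv, mul_comm]
    have e2 : |r - ρ| ^ (-(1 + p - 2 * κ)) * |r - ρ| ^ (p - 1) =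
        |r - ρ| ^ (κ - 1) * |r - ρ| ^ (κ - 1) := by
      rw [← rpow_add ht0, ← rpow_add ht0]; congr 1; ring
    rw [e1, ENNReal.ofReal_mul (by positivity)]
    refine (mul_le_mul_right (ofReal_abs_sub_rpow_le_mul_lintegral hu hu' hp r ρ) _).trans ?_
    rw [← mul_assoc, ← ENNReal.ofReal_mul (by positivity), e2, ← lintegral_const_mul _ hwm]
    have hsub : Ioc (min r ρ) (max r ρ) ⊆ Icc a b := fun t ht =>
      ⟨(le_min hr.1 hρ.1).trans ht.1.le, ht.2.trans (max_le hr.2 hρ.2)⟩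
    refine le_trans (lintegral_mono_ae ?_) (lintegral_mono_set hsub)
    have n1 : ∀ᵐ t ∂(volume.restrict (Ioc (min r ρ) (max r ρ))), t ≠ r := by
      apply ae_restrict_of_ae
      simp [ae_iff]
    have n2 : ∀ᵐ t ∂(volume.restrict (Ioc (min r ρ) (max r ρ))), t ≠ ρ := by
      apply ae_restrict_of_ae
      simp [ae_iff]
    filter_upwards [ae_restrict_mem measurableSet_Ioc, n1, n2] with t ht htr htρ
    rw [hA, ← mul_assoc]
    have m1 : |r - t| ≤ |r - ρ| := by
      rcases le_total r ρ with h | h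
      · rw [min_eq_left h, max_eq_right h] at ht
        rw [abs_of_nonpos (by linarith [ht.1]), abs_of_nonpos (by linarith)]; linarith [ht.2]
      · rw [min_eq_right h, max_eq_left h] at ht
        rw [abs_of_nonneg (by linarith [ht.2]), abs_of_nonneg (by linarith)]; linarith [ht.1]
    have m2 : |ρ - t| ≤ |r - ρ| := by
      rcases le_total r ρ with h | h
      · rw [min_eq_left h, max_eq_right h] at ht
        rw [abs_of_nonneg (by linarith [ht.2]), abs_of_nonpos (by linarith)]; linarith [ht.1]
      · rw [min_eq_right h, max_eq_left h] at ht
        rw [abs_of_nonpos (by linarith [ht.1]), abs_of_nonneg (by linarith)]; linarith [ht.2]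
    have p1 : 0 < |r - t| := abs_pos.2 (sub_ne_zero.2 htr.symm)
    have p2 : 0 < |ρ - t| := abs_pos.2 (sub_ne_zero.2 htρ.symm)
    gcongr ?_ * _
    rw [← ENNReal.ofReal_mul (by positivity)]
    apply ENNReal.ofReal_le_ofReal
    exact mul_le_mul (rpow_le_rpow_of_nonpos p2 m2 (by linarith))
      (rpow_le_rpow_of_nonpos p1 m1 (by linarith)) (by positivity) (by positivity)
  have hswap1 : ∀ r, ∫⁻ ρ in Icc a b, ∫⁻ t in Icc a b, A ρ t * (A r t * w t) ≤
      K * ∫⁻ t in Icc a b, A r t * w t := by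
    intro r
    have hm : Measurable fun t => A r t * w t := (hAr r).mul hwm
    rw [lintegral_lintegral_swap
      (hAm.mul (hm.comp measurable_snd)).aemeasurable, ← lintegral_const_mul _ hm]
    refine setLIntegral_mono' measurableSet_Icc fun t ht => ?_
    rw [lintegral_mul_const _ (hAt t)]
    gcongr
    exact lintegral_Icc_abs_sub_rpow_le hκ ht
  calc _ ≤ ∫⁻ r in Icc a b, ∫⁻ ρ in Icc a b, ∫⁻ t in Icc a b, A ρ t * (A r t * w t) :=
        setLIntegral_mono' measurableSet_Icc fun r hr =>
          setLIntegral_mono' measurableSet_Icc fun ρ hρ => hpt r hr ρ hρ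
    _ ≤ ∫⁻ r in Icc a b, K * ∫⁻ t in Icc a b, A r t * w t := lintegral_mono fun r => hswap1 r
    _ = K * ∫⁻ r in Icc a b, ∫⁻ t in Icc a b, A r t * w t := by
        refine lintegral_const_mul _ ?_
        exact (hAm.mul (hwm.comp measurable_snd)).lintegral_prod_right'
    _ ≤ _ := by
        gcongr
        rw [lintegral_lintegral_swap (hAm.mul (hwm.comp measurable_snd)).aemeasurable,
          ← lintegral_const_mul _ hwm]
        refine setLIntegral_mono' measurableSet_Icc fun t ht => ?_
        rw [lintegral_mul_const _ (hAt t)]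
        gcongr
        exact lintegral_Icc_abs_sub_rpow_le hκ ht

lemma lintegral_gagliardo_le_of_exponent_le {u : ℝ → ℝ} (hu : Measurable u) {p c c' R : ℝ}
    (hp : 0 < p) (hc : c' ≤ c) (hR : 0 < R) :
    ∫⁻ r in Icc R (4 * R), ∫⁻ ρ in Icc R (4 * R), ENNReal.ofReal (|u r - u ρ| ^ p / |r - ρ| ^ c') ≤
      ENNReal.ofReal ((3 * R) ^ (c - c')) * ∫⁻ r in Icc R (4 * R), ∫⁻ ρ in Icc R (4 * R),
        ENNReal.ofReal (|u r - u ρ| ^ p / |r - ρ| ^ c) := by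
  rw [← lintegral_const_mul _ (measurable_gagliardo_inner hu p c _)]
  refine setLIntegral_mono' measurableSet_Icc fun r hr => ?_
  rw [← lintegral_const_mul]
  · refine setLIntegral_mono' measurableSet_Icc fun ρ hρ => ?_
    rw [← ENNReal.ofReal_mul (by positivity)]
    apply ENNReal.ofReal_le_ofReal
    rcases eq_or_ne r ρ with hrρ | hrρ
    · rw [hrρ, sub_self, abs_zero, zero_rpow hp.ne']; simp
    have ht0 : 0 < |r - ρ| := abs_pos.2 (sub_ne_zero.2 hrρ)
    have ht3 : |r - ρ| ≤ 3 * R := by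
      rw [abs_le]; constructor <;> linarith [hr.1, hr.2, hρ.1, hρ.2]
    have e : |r - ρ| ^ c = |r - ρ| ^ (c - c') * |r - ρ| ^ c' := by
      rw [← rpow_add ht0]; congr 1; ring
    have h1 : |r - ρ| ^ (c - c') ≤ (3 * R) ^ (c - c') := by
      gcongr
    rw [e, ← mul_div_assoc, div_le_div_iff₀ (by positivity) (by positivity)]
    have : 0 ≤ |u r - u ρ| ^ p * |r - ρ| ^ c' := by positivity
    nlinarith
  · exact (((measurable_const.sub hu).abs.pow_const p).div
      ((measurable_const.sub measurable_id).abs.pow_const _)).ennreal_ofReal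

section Radial

variable {E : Type*} [NormedAddCommGroup E] [NormedSpace ℝ E] [MeasurableSpace E] [BorelSpace E]
  [FiniteDimensional ℝ E] [Nontrivial E] (μ : Measure E) [μ.IsAddHaarMeasure]

lemma exists_gagliardo_Icc_le_of_gagliardo {s s' p : ℝ} (hs : 0 < s) (hp : 1 ≤ p) (hs' : s' ≤ s) :
    ∃ C > 0, ∀ u : ℝ → ℝ, Continuous u →
      ∫⁻ x, ∫⁻ y, ENNReal.ofReal (|u ‖x‖ - u ‖y‖| ^ p /
        ‖x - y‖ ^ ((Module.finrank ℝ E : ℝ) + s * p)) ∂μ ∂μ ≤ 1 →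
      ∀ R, 0 < R → ∫⁻ r in Icc R (4 * R), ∫⁻ ρ in Icc R (4 * R),
        ENNReal.ofReal (|u r - u ρ| ^ p / |r - ρ| ^ (1 + s' * p)) ≤
        ENNReal.ofReal (C * R ^ (1 - s' * p - ((Module.finrank ℝ E : ℝ) - s * p))) := by
  obtain ⟨C, hC, h⟩ := exists_gagliardo_Icc_le μ hs hp
  refine ⟨3 ^ ((s - s') * p) * C, by positivity, fun u hu hA R hR => ?_⟩
  refine (lintegral_gagliardo_le_of_exponent_le hu.measurable (c := 1 + s * p) (by linarith)
    (by nlinarith) hR).trans ((mul_le_mul_right (h u hu hA R hR) _).trans ?_)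
  rw [← ENNReal.ofReal_mul (by positivity)]
  apply ENNReal.ofReal_le_ofReal
  apply le_of_eq
  have e1 : 1 + s * p - (1 + s' * p) = (s - s') * p := by ring
  have e2 : 1 - s' * p - ((Module.finrank ℝ E : ℝ) - s * p) =
      (s - s') * p + (1 - (Module.finrank ℝ E : ℝ)) := by ring
  rw [e1, e2, rpow_add hR, mul_rpow (by norm_num) hR.le]
  ring

lemma exists_gagliardo_Icc_le_of_gradient {s' p : ℝ} (hp : 1 ≤ p) (hs' : s' < 1) :
    ∃ C > 0, ∀ u u' : ℝ → ℝ, (∀ r, HasDerivAt u (u' r) r) → Continuous u' →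
      ∫⁻ x, ENNReal.ofReal (|u' ‖x‖| ^ p) ∂μ ≤ 1 →
      ∀ R, 0 < R → ∫⁻ r in Icc R (4 * R), ∫⁻ ρ in Icc R (4 * R),
        ENNReal.ofReal (|u r - u ρ| ^ p / |r - ρ| ^ (1 + s' * p)) ≤
        ENNReal.ofReal (C * R ^ (1 - s' * p - ((Module.finrank ℝ E : ℝ) - 1 * p))) := by
  set n := Module.finrank ℝ E with hn
  have hn0 : 0 < n := Module.finrank_pos
  set σ := μ.toSphere.real univ with hσ
  have hσ0 : 0 < σ := toSphere_univ_pos μ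
  have hσe : μ.toSphere univ = ENNReal.ofReal σ :=
    (ofReal_measureReal (measure_ne_top _ _)).symm
  set ε := (1 - s') * p with hε
  have hε0 : 0 < ε := mul_pos (by linarith) (by linarith)
  set κ := min (ε / 2) 1 with hκ
  have hκ0 : 0 < κ := by positivity
  have hκ1 : κ ≤ 1 := min_le_right _ _
  have hκε : 2 * κ ≤ ε := by linarith [min_le_left (ε / 2) 1]
  refine ⟨3 ^ (ε - 2 * κ) * (2 * (3 ^ κ / κ)) ^ 2 * σ⁻¹, by positivity,
    fun u u' hu hu' hA R hR => ?_⟩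
  have hcont : Continuous u := continuous_iff_continuousAt.2 fun r => (hu r).continuousAt
  have hF : Measurable fun r => ENNReal.ofReal (|u' r| ^ p) :=
    (hu'.measurable.abs.pow_const p).ennreal_ofReal
  have h1 := (toSphere_mul_lintegral_Icc_le μ hF (S := 4 * R) hR).trans
    ((setLIntegral_le_lintegral _ _).trans hA)
  rw [hσe, ← ENNReal.ofReal_mul hσ0.le, mul_comm] at h1
  have hpos : 0 < σ * R ^ (n - 1) := by positivity
  have h2 := ENNReal.le_div_iff_mul_le (b := ENNReal.ofReal (σ * R ^ (n - 1))) (c := 1)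
    (Or.inl (by simpa using hpos)) (Or.inl ENNReal.ofReal_ne_top) |>.2 h1
  rw [← ENNReal.ofReal_one, ← ENNReal.ofReal_div_of_pos hpos] at h2
  refine (lintegral_gagliardo_le_of_exponent_le hcont.measurable (c := 1 + p - 2 * κ) (by linarith)
    (by linarith) hR).trans ?_
  refine (mul_le_mul_right ((lintegral_gagliardo_le_lintegral_deriv hu hu' hp hκ0 hκ1).trans
    (mul_le_mul_right (mul_le_mul_right h2 _) _)) _).trans ?_
  have e0 : 4 * R - R = 3 * R := by ring
  rw [e0, ← ENNReal.ofReal_mul (by positivity)]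
  rw [← ENNReal.ofReal_mul (by positivity), ← ENNReal.ofReal_mul (by positivity)]
  apply ENNReal.ofReal_le_ofReal
  apply le_of_eq
  have e1 : 1 + p - 2 * κ - (1 + s' * p) = ε - 2 * κ := by rw [hε]; ring
  have e2 : 1 - s' * p - ((n : ℝ) - 1 * p) = (ε - 2 * κ) + κ + κ + (1 - n) := by rw [hε]; ring
  have e3 : R ^ (1 - (n : ℝ)) = (R ^ (n - 1))⁻¹ := by
    rw [← rpow_natCast, ← rpow_neg hR.le, Nat.cast_sub hn0]; congr 1; push_cast; ring
  rw [e1, e2, rpow_add hR _ (1 - (n : ℝ)), rpow_add hR _ κ, rpow_add hR _ κ, e3,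
    mul_rpow (by norm_num) hR.le, mul_rpow (by norm_num) hR.le]
  field_simp

lemma lintegral_fun_norm_le_tsum {D : ℝ} (hD : D = Module.finrank ℝ E) {F : ℝ → ENNReal}
    (hF : Measurable F) :
    ∫⁻ x, F ‖x‖ ∂μ ≤ μ.toSphere univ * (ENNReal.ofReal (2 ^ (D - 1)) *
      ∑' k : ℤ, ENNReal.ofReal (((2:ℝ) ^ k) ^ (D - 1)) *
        ∫⁻ r in Icc ((2:ℝ) ^ k) (2 * 2 ^ k), F r) := by
  set n := Module.finrank ℝ E with hn
  have hn0 : 0 < n := Module.finrank_pos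
  rw [lintegral_fun_norm_eq μ hF]
  gcongr
  have hcover : Ioi (0:ℝ) ⊆ ⋃ k : ℤ, Icc ((2:ℝ) ^ k) (2 * 2 ^ k) := by
    intro r hr
    obtain ⟨k, hk⟩ := exists_mem_Ico_zpow hr (one_lt_two (α := ℝ))
    refine mem_iUnion.2 ⟨k, hk.1, ?_⟩
    have := hk.2.le
    rwa [zpow_add_one₀ (by norm_num), mul_comm] at this
  refine (lintegral_mono_set hcover).trans ((lintegral_iUnion_le _ _).trans ?_)
  rw [← ENNReal.tsum_mul_left]
  refine ENNReal.tsum_le_tsum fun k => ?_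
  rw [← mul_assoc, ← ENNReal.ofReal_mul (by positivity), ← lintegral_const_mul _ hF]
  refine setLIntegral_mono' measurableSet_Icc fun r hr => ?_
  gcongr ENNReal.ofReal ?_ * _
  have hr0 : (0:ℝ) ≤ r := le_trans (by positivity) hr.1
  have e : D - 1 = ((n - 1 : ℕ) : ℝ) := by rw [hD, Nat.cast_sub hn0, Nat.cast_one]
  rw [← mul_rpow (by norm_num) (by positivity), e, rpow_natCast]
  gcongr
  exact hr.2

end Radial

lemma exists_radial_profile {d : ℕ} (hd : 1 ≤ d) {g : EuclideanSpace ℝ (Fin d) → ℝ}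
    (hrad : ∀ x y : EuclideanSpace ℝ (Fin d), ‖x‖ = ‖y‖ → g x = g y)
    (hg : ContDiff ℝ 1 g) (hc : HasCompactSupport g) :
    ∃ u u' : ℝ → ℝ, (∀ x, g x = u ‖x‖) ∧ (∃ N, ∀ r, N ≤ r → u r = 0) ∧
      (∀ r, HasDerivAt u (u' r) r) ∧ Continuous u' ∧ ∀ x, |u' ‖x‖| ≤ ‖fderiv ℝ g x‖ := by
  have : Nonempty (Fin d) := ⟨⟨0, hd⟩⟩
  obtain ⟨e, he⟩ := exists_norm_eq (EuclideanSpace ℝ (Fin d)) zero_le_one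
  have hdiff : Differentiable ℝ g := hg.differentiable (by norm_num)
  have hderiv : ∀ (ω : EuclideanSpace ℝ (Fin d)) (r : ℝ),
      HasDerivAt (fun t : ℝ => g (t • ω)) (fderiv ℝ g (r • ω) ω) r := fun ω r =>
    ((hdiff (r • ω)).hasFDerivAt.comp_hasDerivAt r
      (by simpa using (hasDerivAt_id r).smul_const ω))
  refine ⟨fun t => g (t • e), fun r => fderiv ℝ g (r • e) e, fun x => hrad _ _ ?_, ?_,
    hderiv e, ?_, fun x => ?_⟩
  · simp [norm_smul, he]
  · obtain ⟨N, hN⟩ := hc.isCompact.isBounded.exists_norm_le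
    refine ⟨|N| + 1, fun r hr => image_eq_zero_of_notMem_tsupport fun hmem => ?_⟩
    have := hN _ hmem
    rw [norm_smul, he, mul_one, Real.norm_eq_abs] at this
    linarith [le_abs_self N, le_abs_self r]
  · exact ((hg.continuous_fderiv (by norm_num)).comp
      (continuous_id.smul continuous_const)).clm_apply continuous_const
  · obtain ⟨ω, hω, hx⟩ : ∃ ω : EuclideanSpace ℝ (Fin d), ‖ω‖ = 1 ∧ ‖x‖ • ω = x := by
      rcases eq_or_ne x 0 with rfl | hx
      · exact ⟨e, he, by simp⟩
      · have := norm_ne_zero_iff.2 hx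
        exact ⟨‖x‖⁻¹ • x, by simp [norm_smul, this], by simp [smul_smul, this]⟩
    have h1 : (fun t : ℝ => g (t • e)) = fun t : ℝ => g (t • ω) :=
      funext fun t => hrad _ _ (by simp [norm_smul, he, hω])
    have h2 : fderiv ℝ g (‖x‖ • e) e = fderiv ℝ g (‖x‖ • ω) ω :=
      (hderiv e ‖x‖).unique (by rw [h1]; exact hderiv ω ‖x‖)
    show |fderiv ℝ g (‖x‖ • e) e| ≤ _
    rw [h2, hx, ← Real.norm_eq_abs]
    simpa [hω] using (fderiv ℝ g x).le_opNorm ω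

lemma exists_lintegral_le_of_energies_le_one {d : ℕ} (hd : 2 ≤ d) {s γ p q α β₁ β₂ : ℝ}
    (hs0 : 0 < s) (hs1 : s ≤ 1) (hγ1 : 1 < γ) (hp1 : 1 ≤ p) (hq1 : 1 ≤ q)
    (hα1 : 1 < α) (hαd : α < d) (hβ₁ : 0 < β₁) (hβ₂ : 0 < β₂)
    (heq1 : β₁ * p + 2 * β₂ * q = 1)
    (heq2 : ((d : ℝ) - s * p) * β₁ + ((d : ℝ) + α) * β₂ = d / γ)
    (hD : p * ((d : ℝ) + α) - 2 * q * ((d : ℝ) - s * p) ≠ 0)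
    (hcon : 1 < β₁ * γ + ((d : ℝ) + α - 2) / ((d : ℝ) - 1) * (β₂ * γ) ∨
      (β₁ * γ + ((d : ℝ) + α - 2) / ((d : ℝ) - 1) * (β₂ * γ) = 1 ∧
        q * (1 - s * p) = p)) :
    ∃ C, ∀ g : EuclideanSpace ℝ (Fin d) → ℝ,
      (∀ x y : EuclideanSpace ℝ (Fin d), ‖x‖ = ‖y‖ → g x = g y) →
      ContDiff ℝ 1 g → HasCompactSupport g →
      ((s = 1 ∧ ∫⁻ x, ENNReal.ofReal (‖fderiv ℝ g x‖ ^ p) ≤ 1) ∨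
        ∫⁻ x, ∫⁻ y, ENNReal.ofReal (|g x - g y| ^ p / ‖x - y‖ ^ ((d : ℝ) + s * p)) ≤ 1) →
      ∫⁻ x, ∫⁻ y, ENNReal.ofReal (|g x| ^ q * |g y| ^ q / ‖x - y‖ ^ ((d : ℝ) - α)) ≤ 1 →
      ∫⁻ x, ENNReal.ofReal (|g x| ^ γ) ≤ ENNReal.ofReal C := by
  have : Nonempty (Fin d) := ⟨⟨0, by omega⟩⟩
  have hp0 : 0 < p := by linarith
  have hq0 : 0 < q := by linarith
  have hγ0 : 0 < γ := by linarith
  have hd1 : (1:ℝ) < d := by exact_mod_cast hd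
  have hfr : Module.finrank ℝ (EuclideanSpace ℝ (Fin d)) = d := by simp
  set b₁ : ℝ := (d + α) / (2 * q) with hb₁def
  set b₂ : ℝ := (d - s * p) / p with hb₂def
  have hb₁ : q * b₁ = (d + α) / 2 := by rw [hb₁def]; field_simp
  have hb₂ : p * b₂ = d - s * p := by rw [hb₂def]; field_simp
  have hT₁ : 0 < β₁ * γ := by positivity
  have hT₂ : 0 < β₂ * γ := by positivity
  have h1 : p * (β₁ * γ) + 2 * q * (β₂ * γ) = γ := by linear_combination γ * heq1
  have h2 : ((d:ℝ) - s * p) * (β₁ * γ) + (d + α) * (β₂ * γ) = d := by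
    have : (d:ℝ) / γ * γ = d := by field_simp
    linear_combination γ * heq2 + this
  have hb₁0 : 0 < b₁ := by rw [hb₁def]; apply div_pos <;> nlinarith
  have hne : b₁ ≠ b₂ := by
    intro h
    apply hD
    have : q * p * b₁ = q * p * b₂ := by rw [h]
    linear_combination 2 * this - 2 * p * hb₁ + 2 * q * hb₂
  have hb := div_strictly_between (D := d) (b₁ := b₁) (b₂ := b₂) hγ0 (mul_pos hp0 hT₁)
    (mul_pos (mul_pos two_pos hq0) hT₂) h1
    (by linear_combination h2 + (β₁ * γ) * hb₂ + 2 * (β₂ * γ) * hb₁) hne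
  obtain ⟨s', θ₁, η₁, θ₂, η₂, hs'0, hs's, hs'1, A, B⟩ :=
    exists_admissible_exponents hd1 hs0 hs1 hp1 hq1 hT₁ hT₂ hb₁ hb₂ h1 h2 hD hcon
  obtain ⟨C₁, hC₁, H₁⟩ := exists_gagliardo_Icc_le_of_gagliardo
    (volume : Measure (EuclideanSpace ℝ (Fin d))) hs0 hp1 hs's
  obtain ⟨C₂, hC₂, H₂⟩ := exists_gagliardo_Icc_le_of_gradient
    (volume : Measure (EuclideanSpace ℝ (Fin d))) hp1 hs'1
  obtain ⟨C₃, hC₃, H₃⟩ := exists_lintegral_Icc_le_of_energy_le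
    (volume : Measure (EuclideanSpace ℝ (Fin d))) (q := q) (α := α) (by rw [hfr]; exact hαd)
  rw [hfr] at H₁ H₂ H₃
  set C₀ := max C₁ (max C₂ C₃) with hC₀
  have hC₀0 : 0 ≤ C₀ := hC₁.le.trans (le_max_left _ _)
  obtain ⟨C, H⟩ := exists_dyadic_sum_le hs'0 hp1 hq1 hγ1.le (by linarith : (0:ℝ) < d) hC₀0 hb₁0 hb
    A.1 A.2.1 A.2.2.1 A.2.2.2.1 A.2.2.2.2.1 A.2.2.2.2.2
    B.1 B.2.1 B.2.2.1 B.2.2.2.1 B.2.2.2.2.1 B.2.2.2.2.2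
  refine ⟨((volume : Measure (EuclideanSpace ℝ (Fin d))).toSphere univ).toReal *
    (2 ^ ((d:ℝ) - 1) * C), fun g hrad hg hc hS hE => ?_⟩
  obtain ⟨u, u', hgu, hN, hu, hu', hle⟩ := exists_radial_profile (by omega) hrad hg hc
  have hcont : Continuous u := continuous_iff_continuousAt.2 fun r => (hu r).continuousAt
  simp only [hgu] at hE hS ⊢
  refine (lintegral_fun_norm_le_tsum volume (D := d) (by rw [hfr])
    (F := fun r => ENNReal.ofReal (|u r| ^ γ))
    ((hcont.measurable.abs.pow_const γ).ennreal_ofReal)).trans ?_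
  rw [ENNReal.ofReal_mul ENNReal.toReal_nonneg, ENNReal.ofReal_toReal (measure_ne_top _ _),
    ENNReal.ofReal_mul (by positivity)]
  gcongr
  refine H u hcont hN (fun R hR => ?_) (fun R hR => ?_)
  · rw [hb₂]
    have hpow : ∀ C', C' ≤ C₀ → ENNReal.ofReal (C' * R ^ (1 - s' * p - (d - s * p))) ≤
        ENNReal.ofReal (C₀ * R ^ (1 - s' * p - (d - s * p))) := fun C' h => by gcongr
    rcases hS with ⟨rfl, hS⟩ | hS
    · refine (H₂ u u' hu hu' ((lintegral_mono fun x => ?_).trans hS) R hR).trans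
        (hpow _ ((le_max_left _ _).trans (le_max_right _ _)))
      have := hle x
      gcongr
    · exact (H₁ u hcont hS R hR).trans (hpow _ (le_max_left _ _))
  · rw [hb₁]
    refine (H₃ u hcont hE hq0.le R hR).trans ?_
    gcongr
    exact (le_max_right _ _).trans (le_max_right _ _)

section Conversion

lemma ofReal_iterated_integral_eq {E : Type*} [MeasurableSpace E] {μ : Measure E} [SFinite μ]
    {F : E → E → ℝ} (hF : Measurable (Function.uncurry F)) (h0 : ∀ x y, 0 ≤ F x y)
    (hfin : ∫⁻ x, ∫⁻ y, ENNReal.ofReal (F x y) ∂μ ∂μ ≠ ⊤) :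
    ENNReal.ofReal (∫ x, ∫ y, F x y ∂μ ∂μ) = ∫⁻ x, ∫⁻ y, ENNReal.ofReal (F x y) ∂μ ∂μ := by
  have e : ∫⁻ x, ∫⁻ y, ENNReal.ofReal (F x y) ∂μ ∂μ =
      ∫⁻ z, ENNReal.ofReal (Function.uncurry F z) ∂(μ.prod μ) :=
    (lintegral_prod (fun z => ENNReal.ofReal (Function.uncurry F z))
      hF.ennreal_ofReal.aemeasurable).symm
  have h0' : ∀ z, 0 ≤ Function.uncurry F z := fun z => h0 _ _
  have hint : Integrable (Function.uncurry F) (μ.prod μ) :=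
    ⟨hF.aestronglyMeasurable, (hasFiniteIntegral_iff_ofReal (ae_of_all _ h0')).2
      (by rw [← e]; exact hfin.lt_top)⟩
  rw [e, ← ofReal_integral_eq_lintegral_ofReal hint (ae_of_all _ h0'), integral_prod _ hint]
  rfl

lemma lintegral_lintegral_ne_top_of_le_convolution {E : Type*} [NormedAddCommGroup E]
    [MeasurableSpace E] [BorelSpace E] [SecondCountableTopology E] (μ : Measure E)
    [μ.IsAddHaarMeasure] [μ.IsNegInvariant] [SFinite μ] {F : E → E → ENNReal} {φ : E → ENNReal} (hφ : Measurable φ)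
    (hφfin : ∫⁻ z, φ z ∂μ ≠ ⊤) {K : Set E} (hK : MeasurableSet K) (hKfin : μ K ≠ ⊤)
    (hF : ∀ x y, F x y ≤ φ (x - y) * (K.indicator 1 x + K.indicator 1 y)) :
    ∫⁻ x, ∫⁻ y, F x y ∂μ ∂μ ≠ ⊤ := by
  have hK1 : Measurable (K.indicator (1 : E → ENNReal)) := measurable_one.indicator hK
  have hφ2 : Measurable fun z : E × E => φ (z.1 - z.2) := hφ.comp (measurable_fst.sub measurable_snd)
  have hφ1 : ∀ x, Measurable fun y => φ (x - y) := fun x =>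
    hφ.comp (measurable_const.sub measurable_id)
  have hφ3 : ∀ y, Measurable fun x => φ (x - y) := fun y =>
    hφ.comp (measurable_id.sub measurable_const)
  refine ne_top_of_le_ne_top (b := (∫⁻ z, φ z ∂μ) * μ K + (∫⁻ z, φ z ∂μ) * μ K)
    (by finiteness) ?_
  refine (lintegral_mono fun x => lintegral_mono fun y => hF x y).trans ?_
  have h1 : ∀ x, ∫⁻ y, φ (x - y) * (K.indicator 1 x + K.indicator 1 y) ∂μ =
      ∫⁻ y, φ (x - y) * K.indicator 1 x ∂μ + ∫⁻ y, φ (x - y) * K.indicator 1 y ∂μ := fun x => by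
    simp_rw [mul_add]
    exact lintegral_add_left ((hφ1 x).mul_const _) _
  simp_rw [h1]
  rw [lintegral_add_left (Measurable.lintegral_prod_right'
    (f := fun z : E × E => φ (z.1 - z.2) * K.indicator 1 z.1)
    (hφ2.mul (hK1.comp measurable_fst)))]
  apply le_of_eq
  congr 1
  · have : ∀ x, ∫⁻ y, φ (x - y) * K.indicator 1 x ∂μ = (∫⁻ z, φ z ∂μ) * K.indicator 1 x := fun x => by
      rw [lintegral_mul_const _ (hφ1 x),
        lintegral_sub_left_eq_self φ x]
    simp_rw [this]
    rw [lintegral_const_mul _ hK1, lintegral_indicator_one hK]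
  · rw [lintegral_lintegral_swap (hφ2.mul (hK1.comp measurable_snd)).aemeasurable]
    have : ∀ y, ∫⁻ x, φ (x - y) * K.indicator 1 y ∂μ = (∫⁻ z, φ z ∂μ) * K.indicator 1 y := fun y => by
      rw [lintegral_mul_const _ (hφ3 y),
        lintegral_sub_right_eq_self φ y]
    simp_rw [this]
    rw [lintegral_const_mul _ hK1, lintegral_indicator_one hK]

lemma ofReal_integral_norm_rpow_eq {E F : Type*} [TopologicalSpace E] [MeasurableSpace E]
    [OpensMeasurableSpace E] (μ : Measure E) [IsFiniteMeasureOnCompacts μ]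
    [NormedAddCommGroup F] {h : E → F}
    (hh : Continuous h) (hc : HasCompactSupport h) {p : ℝ} (hp : 0 < p) :
    ENNReal.ofReal (∫ x, ‖h x‖ ^ p ∂μ) = ∫⁻ x, ENNReal.ofReal (‖h x‖ ^ p) ∂μ := by
  refine ofReal_integral_eq_lintegral_ofReal ?_ (ae_of_all _ fun x => by positivity)
  refine (hh.norm.rpow_const fun _ => Or.inr hp.le).integrable_of_hasCompactSupport ?_
  exact hc.comp_left (g := fun v => ‖v‖ ^ p) (by simp [zero_rpow hp.ne'])

variable {E : Type*} [NormedAddCommGroup E] [NormedSpace ℝ E] [MeasurableSpace E] [BorelSpace E]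
  [FiniteDimensional ℝ E] [Nontrivial E] (μ : Measure E) [μ.IsAddHaarMeasure]


lemma lintegral_ofReal_fun_norm_ne_top {f : ℝ → ℝ} (hf : Measurable f)
    (h1 : ∃ c M : ℝ, -1 < c ∧ ∀ r ∈ Ioo (0:ℝ) 1, r ^ (Module.finrank ℝ E - 1) * f r ≤ M * r ^ c)
    (h2 : ∃ c M : ℝ, c < -1 ∧ ∀ r, 1 ≤ r → r ^ (Module.finrank ℝ E - 1) * f r ≤ M * r ^ c) :
    ∫⁻ x, ENNReal.ofReal (f ‖x‖) ∂μ ≠ ⊤ := by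
  obtain ⟨c₁, M₁, hc₁, h1⟩ := h1
  obtain ⟨c₂, M₂, hc₂, h2⟩ := h2
  rw [lintegral_fun_norm_eq μ hf.ennreal_ofReal]
  refine ENNReal.mul_ne_top (measure_ne_top _ _) ?_
  have hI₁ : ∫⁻ r in Ioo (0:ℝ) 1, ENNReal.ofReal (M₁ * r ^ c₁) ≠ ⊤ :=
    (((intervalIntegral.integrableOn_Ioo_rpow_iff one_pos).2 hc₁).const_mul M₁).lintegral_lt_top.ne
  have hI₂ : ∫⁻ r in Ici (1:ℝ), ENNReal.ofReal (M₂ * r ^ c₂) ≠ ⊤ :=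
    (((integrableOn_Ici_iff_integrableOn_Ioi).2
      (integrableOn_Ioi_rpow_of_lt hc₂ one_pos)).const_mul M₂).lintegral_lt_top.ne
  refine ne_top_of_le_ne_top (ENNReal.add_ne_top.2 ⟨hI₁, hI₂⟩) ?_
  have : Ioi (0:ℝ) = Ioo 0 1 ∪ Ici 1 := (Ioo_union_Ici_eq_Ioi one_pos).symm
  rw [this]
  refine (lintegral_union_le _ _ _).trans (add_le_add ?_ ?_)
  · refine setLIntegral_mono' measurableSet_Ioo fun r hr => ?_
    rw [← ENNReal.ofReal_mul (pow_nonneg hr.1.le _)]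
    exact ENNReal.ofReal_le_ofReal (h1 r hr)
  · refine setLIntegral_mono' measurableSet_Ici fun r hr => ?_
    have hr0 : (0:ℝ) < r := one_pos.trans_le hr
    rw [← ENNReal.ofReal_mul (pow_nonneg hr0.le _)]
    exact ENNReal.ofReal_le_ofReal (h2 r hr)

lemma ofReal_integral_gagliardo_eq {g : E → ℝ} (hg : ContDiff ℝ 1 g) (hc : HasCompactSupport g)
    {s p : ℝ} (hs0 : 0 < s) (hs1 : s < 1) (hp : 1 ≤ p) :
    ENNReal.ofReal (∫ x, ∫ y, |g x - g y| ^ p /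
        ‖x - y‖ ^ ((Module.finrank ℝ E : ℝ) + s * p) ∂μ ∂μ) =
      ∫⁻ x, ∫⁻ y, ENNReal.ofReal (|g x - g y| ^ p /
        ‖x - y‖ ^ ((Module.finrank ℝ E : ℝ) + s * p)) ∂μ ∂μ := by
  have hn0 : 0 < Module.finrank ℝ E := Module.finrank_pos
  set n := Module.finrank ℝ E with hn
  have hp0 : 0 < p := by linarith
  have hgm : Measurable g := hg.continuous.measurable
  refine ofReal_iterated_integral_eq ?_ (fun x y => by positivity) ?_
  · have h1 : Measurable fun z : E × E => g z.1 - g z.2 :=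
      (hgm.comp measurable_fst).sub (hgm.comp measurable_snd)
    exact (h1.abs.pow_const p).div ((measurable_fst.sub measurable_snd).norm.pow_const _)
  obtain ⟨L, hL⟩ := hg.lipschitzWith_of_hasCompactSupport hc (by norm_num)
  obtain ⟨B, hB⟩ := hg.continuous.bounded_above_of_compact_support hc
  have hB0 : 0 ≤ B := (norm_nonneg _).trans (hB 0)
  set Q : ℝ := max L (2 * B) with hQ
  have hQ0 : 0 ≤ Q := L.2.trans (le_max_left _ _)
  have hdiff : ∀ x y, |g x - g y| ≤ Q * min 1 ‖x - y‖ := fun x y => by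
    rcases min_cases 1 ‖x - y‖ with ⟨h, -⟩ | ⟨h, -⟩ <;> rw [h]
    · have := abs_sub (g x) (g y)
      have h1 := hB x
      have h2 := hB y
      rw [Real.norm_eq_abs] at h1 h2
      linarith [le_max_right (L:ℝ) (2 * B)]
    · have h1 := hL.dist_le_mul x y
      rw [Real.dist_eq, dist_eq_norm] at h1
      exact h1.trans (by gcongr; exact le_max_left _ _)
  set f : ℝ → ℝ := fun r => (Q * min 1 r) ^ p / r ^ ((n:ℝ) + s * p) with hf
  have hfm : Measurable f :=
    ((measurable_const.mul (measurable_const.min measurable_id)).pow_const p).div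
      (measurable_id.pow_const _)
  have hpow : ∀ r : ℝ, 0 < r → r ^ (n - 1) * (r ^ ((n:ℝ) + s * p))⁻¹ = r ^ (-1 - s * p) :=
    fun r hr => by
      rw [← rpow_natCast, ← rpow_neg hr.le, ← rpow_add hr, Nat.cast_sub hn0]
      congr 1
      push_cast
      ring
  have hφfin := lintegral_ofReal_fun_norm_ne_top μ hfm
    ⟨p - 1 - s * p, Q ^ p, by nlinarith, fun r hr => by
      have e : p - 1 - s * p = p + (-1 - s * p) := by ring
      rw [hf, e, rpow_add hr.1, ← hpow r hr.1, ← hn]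
      simp only
      rw [min_eq_right hr.2.le, mul_rpow hQ0 hr.1.le, div_eq_mul_inv]
      exact le_of_eq (by ring)⟩
    ⟨-1 - s * p, Q ^ p, by nlinarith, fun r hr => by
      rw [hf, ← hpow r (by linarith), ← hn]
      simp only
      rw [min_eq_left hr, mul_one, div_eq_mul_inv]
      exact le_of_eq (by ring)⟩
  refine lintegral_lintegral_ne_top_of_le_convolution μ (φ := fun z => ENNReal.ofReal (f ‖z‖))
    (hfm.comp measurable_norm).ennreal_ofReal hφfin
    (hc.isCompact.isClosed.measurableSet) hc.isCompact.measure_ne_top fun x y => ?_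
  have hle : ENNReal.ofReal (|g x - g y| ^ p / ‖x - y‖ ^ ((n:ℝ) + s * p)) ≤
      ENNReal.ofReal (f ‖x - y‖) := by
    simp only [hf]
    gcongr
    exact hdiff x y
  by_cases hx : x ∈ tsupport g
  · refine hle.trans ?_
    rw [indicator_of_mem hx, Pi.one_apply, mul_add, mul_one]
    exact le_self_add
  by_cases hy : y ∈ tsupport g
  · refine hle.trans ?_
    rw [indicator_of_mem hy, Pi.one_apply, mul_add, mul_one]
    exact le_add_self
  · rw [image_eq_zero_of_notMem_tsupport hx, image_eq_zero_of_notMem_tsupport hy]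
    simp [zero_rpow hp0.ne']

lemma ofReal_integral_riesz_eq {g : E → ℝ} (hg : Continuous g) (hc : HasCompactSupport g)
    {q α : ℝ} (hq : 0 < q) (hα0 : 0 < α) :
    ENNReal.ofReal (∫ x, ∫ y, |g x| ^ q * |g y| ^ q /
        ‖x - y‖ ^ ((Module.finrank ℝ E : ℝ) - α) ∂μ ∂μ) =
      ∫⁻ x, ∫⁻ y, ENNReal.ofReal (|g x| ^ q * |g y| ^ q /
        ‖x - y‖ ^ ((Module.finrank ℝ E : ℝ) - α)) ∂μ ∂μ := by
  have hn0 : 0 < Module.finrank ℝ E := Module.finrank_pos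
  set n := Module.finrank ℝ E with hn
  have hgm : Measurable g := hg.measurable
  refine ofReal_iterated_integral_eq ?_ (fun x y => by positivity) ?_
  · exact (((hgm.comp measurable_fst).abs.pow_const q).mul
      ((hgm.comp measurable_snd).abs.pow_const q)).div
      ((measurable_fst.sub measurable_snd).norm.pow_const _)
  obtain ⟨B, hB⟩ := hg.bounded_above_of_compact_support hc
  have hB0 : 0 ≤ B := (norm_nonneg _).trans (hB 0)
  obtain ⟨R, hR⟩ := hc.isCompact.isBounded.exists_norm_le
  set f : ℝ → ℝ := (Iic (2 * R)).indicator fun r => B ^ q * B ^ q / r ^ ((n:ℝ) - α) with hf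
  have hfm : Measurable f :=
    (measurable_const.div (measurable_id.pow_const _)).indicator measurableSet_Iic
  have hpow : ∀ r : ℝ, 0 < r → r ^ (n - 1) * (r ^ ((n:ℝ) - α))⁻¹ = r ^ (α - 1) :=
    fun r hr => by
      rw [← rpow_natCast, ← rpow_neg hr.le, ← rpow_add hr, Nat.cast_sub hn0]
      congr 1
      push_cast
      ring
  have hfle : ∀ r : ℝ, 0 < r → r ^ (n - 1) * f r ≤ B ^ q * B ^ q * r ^ (α - 1) := fun r hr => by
    rw [← hpow r hr, hf, indicator_apply]
    split_ifs
    · rw [div_eq_mul_inv]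
      exact le_of_eq (by ring)
    · rw [mul_zero]; positivity
  have hφfin := lintegral_ofReal_fun_norm_ne_top μ hfm
    ⟨α - 1, B ^ q * B ^ q, by linarith, fun r hr => hfle r hr.1⟩
    ⟨-2, B ^ q * B ^ q * |2 * R| ^ (α + 1), by norm_num, fun r hr => by
      have hr0 : 0 < r := by linarith
      by_cases hrR : r ≤ 2 * R
      · refine (hfle r hr0).trans ?_
        have e : α - 1 = (α + 1) + -2 := by ring
        rw [e, rpow_add hr0, ← mul_assoc]
        gcongr
        exact hrR.trans (le_abs_self _)
      · rw [hf, indicator_of_notMem (mem_Iic.not.2 hrR), mul_zero]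
        positivity⟩
  refine lintegral_lintegral_ne_top_of_le_convolution μ (φ := fun z => ENNReal.ofReal (f ‖z‖))
    (hfm.comp measurable_norm).ennreal_ofReal hφfin
    (hc.isCompact.isClosed.measurableSet) hc.isCompact.measure_ne_top fun x y => ?_
  by_cases hx : x ∈ tsupport g
  · by_cases hy : y ∈ tsupport g
    · have hxy : ‖x - y‖ ∈ Iic (2 * R) :=
        (norm_sub_le x y).trans (by linarith [hR x hx, hR y hy])
      rw [indicator_of_mem hx, Pi.one_apply, mul_add, mul_one]
      refine le_trans ?_ le_self_add
      rw [hf, indicator_of_mem hxy]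
      gcongr
      · exact hB x
      · exact hB y
    · rw [image_eq_zero_of_notMem_tsupport hy]
      simp [zero_rpow hq.ne']
  · rw [image_eq_zero_of_notMem_tsupport hx]
    simp [zero_rpow hq.ne']

end Conversion

section Scaling

variable {d : ℕ} {g : EuclideanSpace ℝ (Fin d) → ℝ} {c ρ : ℝ}

lemma integral_integral_comp_smul_eq (F : EuclideanSpace ℝ (Fin d) → EuclideanSpace ℝ (Fin d) → ℝ)
    (hρ : 0 < ρ) :
    ∫ x, ∫ y, F (ρ • x) (ρ • y) = ρ ^ (-(2 * d) : ℝ) * ∫ x, ∫ y, F x y := by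
  have h1 : ∀ x, ∫ y, F (ρ • x) (ρ • y) = (ρ ^ d)⁻¹ * ∫ y, F (ρ • x) y := fun x => by
    rw [Measure.integral_comp_smul volume (F (ρ • x)) ρ, abs_of_nonneg (by positivity), smul_eq_mul]
    simp
  simp_rw [h1]
  rw [integral_const_mul, Measure.integral_comp_smul volume (fun x => ∫ y, F x y) ρ,
    abs_of_nonneg (by positivity), smul_eq_mul, ← mul_assoc]
  congr 1
  rw [rpow_neg hρ.le, two_mul, rpow_add hρ, rpow_natCast]
  simp

lemma coulombEnergy_scale (q α : ℝ) (hc : 0 < c) (hρ : 0 < ρ) :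
    coulombEnergy d q α (fun x => c * g (ρ • x)) =
      c ^ (2 * q) * ρ ^ (-(d + α)) * coulombEnergy d q α g := by
  have h : ∀ x y : EuclideanSpace ℝ (Fin d),
      |c * g (ρ • x)| ^ q * |c * g (ρ • y)| ^ q / ‖x - y‖ ^ ((d : ℝ) - α) =
        c ^ (2 * q) * ρ ^ (d - α) *
          (|g (ρ • x)| ^ q * |g (ρ • y)| ^ q / ‖ρ • x - ρ • y‖ ^ ((d : ℝ) - α)) := fun x y => by
    rw [← smul_sub, norm_smul, Real.norm_eq_abs, abs_of_pos hρ, mul_rpow hρ.le (norm_nonneg _),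
      abs_mul, abs_mul, abs_of_pos hc, mul_rpow hc.le (abs_nonneg _),
      mul_rpow hc.le (abs_nonneg _), two_mul, rpow_add hc]
    have := (rpow_pos_of_pos hρ (d - α)).ne'
    field_simp
  unfold coulombEnergy
  simp_rw [h, integral_const_mul]
  rw [integral_integral_comp_smul_eq
    (fun x y => |g x| ^ q * |g y| ^ q / ‖x - y‖ ^ ((d : ℝ) - α)) hρ, ← mul_assoc, mul_assoc (c ^ _),
    ← rpow_add hρ]
  congr 3
  ring

lemma sobolevSemi_scale {s p : ℝ} (hs0 : 0 < s) (hg : ContDiff ℝ 1 g)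
    (hc : 0 < c) (hρ : 0 < ρ) :
    sobolevSemi d s p (fun x => c * g (ρ • x)) =
      (c ^ p * ρ ^ (s * p - d)) ^ (1 / p) * sobolevSemi d s p g := by
  unfold sobolevSemi
  have hρd : (0:ℝ) ≤ c ^ p * ρ ^ (s * p - d) := by positivity
  rcases eq_or_ne s 1 with rfl | hs
  · rw [if_pos rfl, if_pos rfl, ← mul_rpow hρd (integral_nonneg fun x => by positivity)]
    congr 1
    have h : ∀ x, ‖fderiv ℝ (fun x => c * g (ρ • x)) x‖ ^ p =
        c ^ p * ρ ^ p * ‖fderiv ℝ g (ρ • x)‖ ^ p := fun x => by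
      have hd : DifferentiableAt ℝ (fun x => g (ρ • x)) x :=
        (hg.differentiable (by norm_num) _).comp x (differentiableAt_id.const_smul ρ)
      rw [fderiv_const_mul hd c, fderiv_comp_smul, norm_smul, norm_smul, Real.norm_eq_abs, Real.norm_eq_abs, abs_of_pos hc,
        abs_of_pos hρ, mul_rpow hc.le (by positivity), mul_rpow hρ.le (by positivity), mul_assoc]
    simp_rw [h]
    rw [integral_const_mul, Measure.integral_comp_smul volume (fun x => ‖fderiv ℝ g x‖ ^ p) ρ,
      abs_of_nonneg (by positivity), smul_eq_mul, ← mul_assoc, mul_assoc (c ^ _), one_mul,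
      rpow_sub hρ, rpow_natCast]
    simp [div_eq_mul_inv]
  · rw [if_neg hs, if_neg hs0.ne', if_neg hs, if_neg hs0.ne',
      ← mul_rpow hρd (integral_nonneg fun x => integral_nonneg fun y => by positivity)]
    congr 1
    have h : ∀ x y : EuclideanSpace ℝ (Fin d),
        |c * g (ρ • x) - c * g (ρ • y)| ^ p / ‖x - y‖ ^ ((d : ℝ) + s * p) =
          c ^ p * ρ ^ (d + s * p) *
            (|g (ρ • x) - g (ρ • y)| ^ p / ‖ρ • x - ρ • y‖ ^ ((d : ℝ) + s * p)) := fun x y => by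
      rw [← smul_sub, norm_smul, Real.norm_eq_abs, abs_of_pos hρ, mul_rpow hρ.le (norm_nonneg _),
        ← mul_sub, abs_mul, abs_of_pos hc, mul_rpow hc.le (abs_nonneg _)]
      have := (rpow_pos_of_pos hρ (d + s * p)).ne'
      field_simp
    simp_rw [h, integral_const_mul]
    rw [integral_integral_comp_smul_eq
      (fun x y => |g x - g y| ^ p / ‖x - y‖ ^ ((d : ℝ) + s * p)) hρ, ← mul_assoc,
      mul_assoc (c ^ _), ← rpow_add hρ]
    congr 3
    ring

lemma integral_abs_rpow_scale (γ : ℝ) (hc : 0 < c) (hρ : 0 < ρ) :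
    ∫ x, |c * g (ρ • x)| ^ γ = c ^ γ * ρ ^ (-d : ℝ) * ∫ x, |g x| ^ γ := by
  simp_rw [abs_mul, abs_of_pos hc, mul_rpow hc.le (abs_nonneg _)]
  rw [integral_const_mul, Measure.integral_comp_smul volume (fun x => |g x| ^ γ) ρ,
    abs_of_nonneg (by positivity), smul_eq_mul, ← mul_assoc, rpow_neg hρ.le, rpow_natCast]
  simp

end Scaling

lemma le_mul_rpow_mul_rpow_of_forall_gt {X K A D a b : ℝ} (ha : 0 < a) (hb : 0 < b)
    (h : ∀ A' D', A < A' → D < D' → X ≤ K * A' ^ a * D' ^ b) : X ≤ K * A ^ a * D ^ b := by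
  have hcont : Continuous fun ε : ℝ => K * (A + ε) ^ a * (D + ε) ^ b :=
    (continuous_const.mul ((continuous_const.add continuous_id).rpow_const fun _ => Or.inr ha.le)).mul
      ((continuous_const.add continuous_id).rpow_const fun _ => Or.inr hb.le)
  have hlim := (hcont.tendsto 0).mono_left (nhdsWithin_le_nhds (s := Ioi 0))
  simp only [add_zero] at hlim
  exact ge_of_tendsto hlim (Filter.eventually_of_mem self_mem_nhdsWithin fun ε hε =>
    h _ _ (lt_add_of_pos_right _ hε) (lt_add_of_pos_right _ hε))

lemma exists_scale {a b e f A D : ℝ} (hdet : a * f - b * e ≠ 0) (hA : 0 < A) (hD : 0 < D) :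
    ∃ c ρ : ℝ, 0 < c ∧ 0 < ρ ∧ c ^ a * ρ ^ b = A ∧ c ^ e * ρ ^ f = D := by
  refine ⟨exp ((f * log A - b * log D) / (a * f - b * e)),
    exp ((a * log D - e * log A) / (a * f - b * e)), exp_pos _, exp_pos _, ?_, ?_⟩
  · rw [← exp_mul, ← exp_mul, ← exp_add]
    conv_rhs => rw [← exp_log hA]
    rw [div_mul_eq_mul_div, div_mul_eq_mul_div, ← add_div, exp_eq_exp, div_eq_iff hdet]
    ring
  · rw [← exp_mul, ← exp_mul, ← exp_add]
    conv_rhs => rw [← exp_log hD]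
    rw [div_mul_eq_mul_div, div_mul_eq_mul_div, ← add_div, exp_eq_exp, div_eq_iff hdet]
    ring

lemma sobolevSemi_nonneg {d : ℕ} (s p : ℝ) (g : EuclideanSpace ℝ (Fin d) → ℝ) :
    0 ≤ sobolevSemi d s p g := by
  unfold sobolevSemi
  split_ifs
  · exact rpow_nonneg (integral_nonneg fun x => by positivity) _
  · exact rpow_nonneg (integral_nonneg fun x => by positivity) _
  · exact rpow_nonneg (integral_nonneg fun x => integral_nonneg fun y => by positivity) _

lemma coulombEnergy_nonneg {d : ℕ} (q α : ℝ) (g : EuclideanSpace ℝ (Fin d) → ℝ) :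
    0 ≤ coulombEnergy d q α g :=
  integral_nonneg fun x => integral_nonneg fun y => by positivity

lemma exists_integral_le_of_energies_le_one {d : ℕ} (hd : 2 ≤ d) {s γ p q α β₁ β₂ : ℝ}
    (hs0 : 0 < s) (hs1 : s ≤ 1) (hγ1 : 1 < γ) (hp1 : 1 ≤ p) (hq1 : 1 ≤ q)
    (hα1 : 1 < α) (hαd : α < d) (hβ₁ : 0 < β₁) (hβ₂ : 0 < β₂)
    (heq1 : β₁ * p + 2 * β₂ * q = 1)
    (heq2 : ((d : ℝ) - s * p) * β₁ + ((d : ℝ) + α) * β₂ = d / γ)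
    (hD : p * ((d : ℝ) + α) - 2 * q * ((d : ℝ) - s * p) ≠ 0)
    (hcon : 1 < β₁ * γ + ((d : ℝ) + α - 2) / ((d : ℝ) - 1) * (β₂ * γ) ∨
      (β₁ * γ + ((d : ℝ) + α - 2) / ((d : ℝ) - 1) * (β₂ * γ) = 1 ∧
        q * (1 - s * p) = p)) :
    ∃ C > 0, ∀ g : EuclideanSpace ℝ (Fin d) → ℝ,
      (∀ x y : EuclideanSpace ℝ (Fin d), ‖x‖ = ‖y‖ → g x = g y) →
      ContDiff ℝ 1 g → HasCompactSupport g → sobolevSemi d s p g ≤ 1 →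
      coulombEnergy d q α g ≤ 1 → ∫ x, |g x| ^ γ ≤ C := by
  obtain ⟨C, H⟩ := exists_lintegral_le_of_energies_le_one hd hs0 hs1 hγ1 hp1 hq1 hα1 hαd hβ₁ hβ₂
    heq1 heq2 hD hcon
  have : Nonempty (Fin d) := ⟨⟨0, by omega⟩⟩
  have hp0 : 0 < p := by linarith
  refine ⟨max C 1, by positivity, fun g hrad hg hc hS hE => ?_⟩
  have hle : ∀ A : ℝ, 0 ≤ A → A ^ (1 / p) ≤ 1 → A ≤ 1 := fun A hA h => by
    by_contra! h1
    exact absurd h (not_le.2 (one_lt_rpow h1 (by positivity)))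
  have hfr : Module.finrank ℝ (EuclideanSpace ℝ (Fin d)) = d := by simp
  have hγ := ofReal_integral_norm_rpow_eq volume hg.continuous hc (by linarith : 0 < γ)
  simp only [Real.norm_eq_abs] at hγ
  rw [← ENNReal.ofReal_le_ofReal_iff (by positivity), hγ]
  refine (H g hrad hg hc ?_ ?_).trans (ENNReal.ofReal_le_ofReal (le_max_left _ _))
  · unfold sobolevSemi at hS
    rcases eq_or_ne s 1 with rfl | hs
    · rw [if_pos rfl] at hS
      refine Or.inl ⟨rfl, ?_⟩
      rw [← ofReal_integral_norm_rpow_eq volume (hg.continuous_fderiv (by norm_num))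
        (hc.fderiv ℝ) hp0]
      exact ENNReal.ofReal_le_one.2 (hle _ (integral_nonneg fun x => by positivity) hS)
    · rw [if_neg hs, if_neg hs0.ne'] at hS
      right
      have h := ofReal_integral_gagliardo_eq volume hg hc hs0 (lt_of_le_of_ne hs1 hs) hp1
      rw [hfr] at h
      rw [← h]
      exact ENNReal.ofReal_le_one.2
        (hle _ (integral_nonneg fun x => integral_nonneg fun y => by positivity) hS)
  · have h := ofReal_integral_riesz_eq volume hg.continuous hc (by linarith : 0 < q)
      (by linarith : 0 < α)
    rw [hfr] at h
    rw [← h]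
    exact ENNReal.ofReal_le_one.2 hE

end Auxiliary

theorem stmt2 (d : ℕ) (hd : 2 ≤ d) (s γ p q α β₁ β₂ : ℝ)
    (hs0 : 0 < s) (hs1 : s ≤ 1) (hγ1 : 1 < γ) (hp1 : 1 ≤ p) (hq1 : 1 ≤ q)
    (hα1 : 1 < α) (hαd : α < d) (hβ₁ : 0 < β₁) (hβ₂ : 0 < β₂)
    (heq1 : β₁ * p + 2 * β₂ * q = 1)
    (heq2 : ((d : ℝ) - s * p) * β₁ + ((d : ℝ) + α) * β₂ = d / γ)
    (hD : p * ((d : ℝ) + α) - 2 * q * ((d : ℝ) - s * p) ≠ 0)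
    (hcon : 1 < β₁ * γ + ((d : ℝ) + α - 2) / ((d : ℝ) - 1) * (β₂ * γ) ∨
      (β₁ * γ + ((d : ℝ) + α - 2) / ((d : ℝ) - 1) * (β₂ * γ) = 1 ∧
        q * (1 - s * p) = p)) :
    ∃ C > 0, ∀ g : EuclideanSpace ℝ (Fin d) → ℝ,
      (∀ x y : EuclideanSpace ℝ (Fin d), ‖x‖ = ‖y‖ → g x = g y) →
      ContDiff ℝ 1 g → HasCompactSupport g →
      (∫ x, |g x| ^ γ) ^ (1 / γ) ≤
        C * sobolevSemi d s p g ^ (β₁ * p) * coulombEnergy d q α g ^ β₂ := by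
  obtain ⟨C, hC, H⟩ := exists_integral_le_of_energies_le_one hd hs0 hs1 hγ1 hp1 hq1 hα1 hαd hβ₁ hβ₂
    heq1 heq2 hD hcon
  have hp0 : 0 < p := by linarith
  have hγ0 : 0 < γ := by linarith
  refine ⟨C ^ (1 / γ), by positivity, fun g hrad hg hc => ?_⟩
  refine le_mul_rpow_mul_rpow_of_forall_gt (by positivity) hβ₂ fun A D hA hE => ?_
  have hA0 : 0 < A := (sobolevSemi_nonneg s p g).trans_lt hA
  have hD0 : 0 < D := (coulombEnergy_nonneg q α g).trans_lt hE
  obtain ⟨c, ρ, hc0, hρ0, h1, h2⟩ := exists_scale (a := p) (b := s * p - d) (e := 2 * q)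
    (f := -(d + α)) (A := (A ^ p)⁻¹) (D := D⁻¹) (fun h => hD (by linear_combination -h))
    (by positivity) (by positivity)
  have key := H (fun x => c * g (ρ • x))
    (fun x y hxy => by rw [hrad (ρ • x) (ρ • y) (by simp [norm_smul, hxy])])
    (contDiff_const.mul (hg.comp (contDiff_const_smul ρ)))
    ((hc.comp_smul hρ0.ne').mul_left)
    (by
      rw [sobolevSemi_scale hs0 hg hc0 hρ0, h1, inv_rpow (by positivity), ← rpow_mul hA0.le,
        mul_one_div_cancel hp0.ne', rpow_one, inv_mul_le_iff₀ hA0, mul_one]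
      exact hA.le)
    (by
      rw [coulombEnergy_scale q α hc0 hρ0, h2, inv_mul_le_iff₀ hD0, mul_one]
      exact hE.le)
  rw [integral_abs_rpow_scale γ hc0 hρ0] at key
  have hscale : (c ^ γ * ρ ^ (-d : ℝ)) = ((A ^ (β₁ * p) * D ^ β₂) ^ γ)⁻¹ := by
    have e1 : γ = p * (β₁ * γ) + 2 * q * (β₂ * γ) := by linear_combination -γ * heq1
    have e2 : (-d : ℝ) = (s * p - d) * (β₁ * γ) + (-(d + α)) * (β₂ * γ) := by
      have : (d:ℝ) / γ * γ = d := by field_simp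
      linear_combination γ * heq2 + this
    have : c ^ γ * ρ ^ (-d : ℝ) =
        (c ^ p * ρ ^ (s * p - d)) ^ (β₁ * γ) * (c ^ (2 * q) * ρ ^ (-(d + α))) ^ (β₂ * γ) := by
      rw [mul_rpow (by positivity) (by positivity), mul_rpow (by positivity) (by positivity),
        ← rpow_mul hc0.le, ← rpow_mul hc0.le, ← rpow_mul hρ0.le, ← rpow_mul hρ0.le,
        mul_mul_mul_comm, ← rpow_add hc0, ← rpow_add hρ0, ← e1, ← e2]
    rw [this, h1, h2, inv_rpow (by positivity), inv_rpow hD0.le,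
      mul_rpow (by positivity) (by positivity), ← rpow_mul hA0.le, ← rpow_mul hA0.le,
      ← rpow_mul hD0.le, mul_inv, ← mul_assoc p, mul_comm p]
  rw [hscale, inv_mul_le_iff₀ (by positivity)] at key
  calc (∫ x, |g x| ^ γ) ^ (1 / γ) ≤ ((A ^ (β₁ * p) * D ^ β₂) ^ γ * C) ^ (1 / γ) :=
        rpow_le_rpow (integral_nonneg fun x => by positivity) key (by positivity)
    _ = C ^ (1 / γ) * A ^ (β₁ * p) * D ^ β₂ := by
        rw [mul_rpow (by positivity) hC.le, ← rpow_mul (by positivity),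
          mul_one_div_cancel hγ0.ne', rpow_one]
        ring
end

section
/- Let d ≥ 1, 1 ≤ q < ∞, 0 < α < d, and let η ∈ C_c^∞(ℝ \ {0}) be a nonnegative function with support contained in (−1, 1). For λ > 0 and R ≥ 2S > 0 define g_{λ,R,S}(x) = λ η((|x| − R)/S) for x ∈ ℝ^d. Then there exists a constant C > 0 (depending on d, q, α, η) such that for all R ≥ 2S > 0 and λ > 0: ∫_{ℝ^d}∫_{ℝ^d} |g_{λ,R,S}(x)|^q |g_{λ,R,S}(y)|^q / |x−y|^{d−α} dx dy ≤ C λ^{2q} R^{d+α−2} S^2 if 1 < α < d; ≤ C λ^{2q} R^{d−1} S^2 log(R/S) if α = 1; and ≤ C λ^{2q} R^{d−1} S^{1+α} if 0 < α < 1. -/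
open MeasureTheory Real

/-- The open spherical shell of radius `R` and half-width `S` centred at the origin. -/
def shell (d : ℕ) (R S : ℝ) : Set (EuclideanSpace ℝ (Fin d)) :=
  {x | R - S < ‖x‖ ∧ ‖x‖ < R + S}

theorem measurableSet_shell (d : ℕ) (R S : ℝ) : MeasurableSet (shell d R S) :=
  (measurableSet_lt measurable_const measurable_norm).inter
    (measurableSet_lt measurable_norm measurable_const)

section Dilation

open scoped Pointwise

theorem volume_real_le_smul {d : ℕ} {t : ℝ} (ht : 1 ≤ t)
    (s : Set (EuclideanSpace ℝ (Fin d))) :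
    volume.real s ≤ volume.real (t • s) := by
  have h1 : 1 ≤ |t ^ Module.finrank ℝ (EuclideanSpace ℝ (Fin d))| :=
    (one_le_pow₀ ht).trans (le_abs_self _)
  rw [measureReal_def, measureReal_def, Measure.addHaar_smul, ENNReal.toReal_mul,
    ENNReal.toReal_ofReal (abs_nonneg _)]
  exact le_mul_of_one_le_left ENNReal.toReal_nonneg h1

/-- If `N` dilates of `s` with ratios at least one are disjoint and lie in a bounded set `B`, then
`N` times the volume of `s` is at most that of `B`. -/
theorem card_mul_volume_real_le {d N : ℕ} {s B : Set (EuclideanSpace ℝ (Fin d))} {t : ℕ → ℝ}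
    (hs : MeasurableSet s) (hB : volume B ≠ ⊤) (ht : ∀ k < N, 1 ≤ t k)
    (hsub : ∀ k < N, t k • s ⊆ B)
    (hdisj : ∀ j k, j < k → k < N → Disjoint (t j • s) (t k • s)) :
    N * volume.real s ≤ volume.real B := by
  have hpd : ((Finset.range N : Finset ℕ) : Set ℕ).PairwiseDisjoint fun k => t k • s := by
    intro j hj k hk hjk
    simp only [Finset.coe_range, Set.mem_Iio] at hj hk
    rcases lt_or_gt_of_ne hjk with h | h
    · exact hdisj j k h hk
    · exact (hdisj k j h hj).symm
  have hU : volume.real (⋃ k ∈ Finset.range N, t k • s) =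
      ∑ k ∈ Finset.range N, volume.real (t k • s) :=
    measureReal_biUnion_finset hpd (fun k _ => hs.const_smul₀ _)
      (fun k hk => measure_ne_top_of_subset (hsub k (Finset.mem_range.1 hk)) hB)
  calc (N : ℝ) * volume.real s = ∑ _k ∈ Finset.range N, volume.real s := by simp
    _ ≤ ∑ k ∈ Finset.range N, volume.real (t k • s) :=
        Finset.sum_le_sum fun k hk => volume_real_le_smul (ht k (Finset.mem_range.1 hk)) s
    _ = volume.real (⋃ k ∈ Finset.range N, t k • s) := hU.symm
    _ ≤ volume.real B :=
        measureReal_mono (Set.iUnion₂_subset fun k hk => hsub k (Finset.mem_range.1 hk)) hB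

theorem volume_real_ball_eq {d : ℕ} (x : EuclideanSpace ℝ (Fin d)) {r : ℝ} (hr : 0 < r) :
    volume.real (Metric.ball x r) =
      r ^ d * volume.real (Metric.ball (0 : EuclideanSpace ℝ (Fin d)) 1) := by
  rw [measureReal_def, measureReal_def, Measure.addHaar_ball_of_pos _ _ hr, ENNReal.toReal_mul,
    ENNReal.toReal_ofReal (by positivity)]
  simp

theorem volume_real_shell_inter_ball_le {d : ℕ} (x : EuclideanSpace ℝ (Fin d)) {R S r : ℝ}
    (hS : 0 < S) (hR : 2 * S ≤ R) (hr : 0 < r) (hrR : r ≤ 3 * R) :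
    volume.real (shell d R S ∩ Metric.ball x r) ≤
      16 * 3 ^ d * volume.real (Metric.ball (0 : EuclideanSpace ℝ (Fin d)) 1) *
        S * r ^ ((d : ℝ) - 1) := by
  have hR0 : 0 < R := by linarith
  set N := ⌈r / (16 * S)⌉₊ with hN
  set ω := volume.real (Metric.ball (0 : EuclideanSpace ℝ (Fin d)) 1)
  set E := shell d R S ∩ Metric.ball x r
  have hkr : ∀ k < N, 16 * k * S < r := by
    intro k hk
    have := Nat.lt_ceil.1 hk
    rw [lt_div_iff₀ (by positivity)] at this
    linarith
  have key : N * volume.real E ≤ volume.real (Metric.ball x (3 * r)) := by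
    refine card_mul_volume_real_le (t := fun k => 1 + 16 * k * S / R)
      ((measurableSet_shell d R S).inter measurableSet_ball) measure_ball_lt_top.ne
      (fun k _ => by simp only [le_add_iff_nonneg_right]; positivity) ?_ ?_
    · rintro k hk _ ⟨y, ⟨⟨-, hy⟩, hyx⟩, rfl⟩
      have h1 : 16 * k * S / R < r / R := div_lt_div_of_pos_right (hkr k hk) hR0
      have h0 : 0 ≤ 16 * k * S / R := by positivity
      rw [Metric.mem_ball, dist_eq_norm] at hyx ⊢
      have e : (1 + 16 * k * S / R) • y - x = (y - x) + (16 * k * S / R) • y := by module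
      have h2 : 16 * k * S / R * ‖y‖ ≤ r / R * (2 * R) := by
        gcongr
        linarith
      have h3 : r / R * (2 * R) = 2 * r := by field_simp
      calc ‖(1 + 16 * k * S / R) • y - x‖ ≤ ‖y - x‖ + ‖(16 * k * S / R) • y‖ := by
            rw [e]; exact norm_add_le _ _
        _ = ‖y - x‖ + 16 * k * S / R * ‖y‖ := by rw [norm_smul, Real.norm_of_nonneg h0]
        _ < 3 * r := by linarith
    · intro j k hjk hk
      rw [Set.disjoint_left]
      rintro _ ⟨y, ⟨⟨-, hy⟩, -⟩, rfl⟩ ⟨z, ⟨⟨hz, -⟩, -⟩, hzy⟩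
      have hj := hkr j (hjk.trans hk)
      have hjk' : (j : ℝ) + 1 ≤ k := by exact_mod_cast hjk
      set a := 16 * j * S / R with ha
      set b := 16 * k * S / R with hb
      have ha0 : 0 ≤ a := by positivity
      have hb0 : 0 ≤ b := by positivity
      have ha3 : a ≤ 3 := by
        rw [ha, div_le_iff₀ hR0]; linarith
      have hab : 16 * S ≤ (b - a) * R := by
        rw [ha, hb, sub_mul, div_mul_cancel₀ _ hR0.ne', div_mul_cancel₀ _ hR0.ne']
        nlinarith
      have hn : (1 + b) * ‖z‖ = (1 + a) * ‖y‖ := by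
        have := congrArg norm hzy
        simpa only [norm_smul, Real.norm_of_nonneg (by positivity : 0 ≤ 1 + b),
          Real.norm_of_nonneg (by positivity : 0 ≤ 1 + a)] using this
      have hba : 0 ≤ b - a := by
        by_contra h
        nlinarith
      nlinarith [mul_lt_mul_of_pos_left hy (by positivity : 0 < 1 + a),
        mul_lt_mul_of_pos_left hz (by positivity : 0 < 1 + b),
        mul_le_mul_of_nonneg_left hR hba]
  rw [volume_real_ball_eq x (by positivity : 0 < 3 * r)] at key
  have hN' : r / (16 * S) ≤ N := Nat.le_ceil _
  have h4 : r / (16 * S) * volume.real E ≤ (3 * r) ^ d * ω :=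
    (mul_le_mul_of_nonneg_right hN' measureReal_nonneg).trans key
  rw [div_mul_eq_mul_div, div_le_iff₀ (by positivity)] at h4
  rw [rpow_sub hr, rpow_one, rpow_natCast, mul_div_assoc', le_div_iff₀ hr]
  calc _ = r * volume.real E := mul_comm _ _
    _ ≤ _ := h4
    _ = _ := by rw [mul_pow]; ring

end Dilation

theorem volume_real_shell_inter_le {d : ℕ} (T : Set (EuclideanSpace ℝ (Fin d))) {R S : ℝ}
    (hS : 0 < S) (hR : 2 * S ≤ R) :
    volume.real (shell d R S ∩ T) ≤
      16 * 3 ^ d * volume.real (Metric.ball (0 : EuclideanSpace ℝ (Fin d)) 1) *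
        S * (3 * R) ^ ((d : ℝ) - 1) := by
  have hsub : shell d R S ∩ T ⊆ shell d R S ∩ Metric.ball 0 (3 * R) := by
    refine fun y hy => ⟨hy.1, ?_⟩
    have := hy.1.2
    rw [mem_ball_zero_iff]
    linarith
  exact (measureReal_mono hsub
    (measure_ne_top_of_subset Set.inter_subset_right measure_ball_lt_top.ne)).trans
    (volume_real_shell_inter_ball_le 0 hS hR (by linarith) le_rfl)

theorem volume_shell_ne_top (d : ℕ) (R S : ℝ) : volume (shell d R S) ≠ ⊤ := by
  have hsub : shell d R S ⊆ Metric.ball 0 (R + S) := fun y hy => by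
    rw [mem_ball_zero_iff]; exact hy.2
  exact measure_ne_top_of_subset hsub measure_ball_lt_top.ne

/-- A constant for which the volume of the part of a shell inside a ball obeys the three natural
bounds. -/
theorem exists_volume_shell_inter_ball_le (d : ℕ) (hd : 1 ≤ d) :
    ∃ C > 0, ∀ R S r : ℝ, 0 < S → 2 * S ≤ R → 0 < r → ∀ x : EuclideanSpace ℝ (Fin d),
      volume.real (shell d R S ∩ Metric.ball x r) ≤ C * r ^ (d : ℝ) ∧
      volume.real (shell d R S ∩ Metric.ball x r) ≤ C * S * r ^ ((d : ℝ) - 1) ∧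
      volume.real (shell d R S ∩ Metric.ball x r) ≤ C * S * R ^ ((d : ℝ) - 1) ∧
      volume.real (shell d R S) ≤ C * S * R ^ ((d : ℝ) - 1) := by
  set ω := volume.real (Metric.ball (0 : EuclideanSpace ℝ (Fin d)) 1)
  have hω : 0 < ω := ENNReal.toReal_pos (Metric.measure_ball_pos _ _ one_pos).ne'
    measure_ball_lt_top.ne
  have hd1 : (0 : ℝ) ≤ d - 1 := by
    rw [sub_nonneg]; exact_mod_cast hd
  set K : ℝ := 3 ^ ((d : ℝ) - 1)
  have hK : 1 ≤ K := one_le_rpow (by norm_num) hd1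
  have h3 : (1 : ℝ) ≤ 16 * 3 ^ d := by
    have : (1 : ℝ) ≤ 3 ^ d := one_le_pow₀ (by norm_num)
    linarith
  refine ⟨16 * 3 ^ d * ω * K, by positivity, fun R S r hS hR hr x => ?_⟩
  have hR0 : 0 < R := by linarith
  have hbig : 16 * 3 ^ d * ω * S * (3 * R) ^ ((d : ℝ) - 1) =
      16 * 3 ^ d * ω * K * S * R ^ ((d : ℝ) - 1) := by
    rw [mul_rpow (by norm_num) hR0.le]; ring
  refine ⟨?_, ?_, ?_, ?_⟩
  · calc _ ≤ volume.real (Metric.ball x r) :=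
          measureReal_mono Set.inter_subset_right measure_ball_lt_top.ne
      _ = 1 * 1 * ω * r ^ (d : ℝ) := by
          rw [volume_real_ball_eq x hr, rpow_natCast]; ring
      _ ≤ 16 * 3 ^ d * K * ω * r ^ (d : ℝ) := by gcongr
      _ = _ := by ring
  · rcases le_total r (3 * R) with h | h
    · calc _ ≤ _ := volume_real_shell_inter_ball_le x hS hR hr h
        _ = 16 * 3 ^ d * ω * 1 * S * r ^ ((d : ℝ) - 1) := by ring
        _ ≤ _ := by gcongr
    · calc _ ≤ _ := volume_real_shell_inter_le _ hS hR
        _ ≤ 16 * 3 ^ d * ω * S * r ^ ((d : ℝ) - 1) := by gcongr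
        _ = 16 * 3 ^ d * ω * 1 * S * r ^ ((d : ℝ) - 1) := by ring
        _ ≤ _ := by gcongr
  · exact (volume_real_shell_inter_le _ hS hR).trans hbig.le
  · have := volume_real_shell_inter_le (Set.univ : Set (EuclideanSpace ℝ (Fin d))) hS hR
    rw [Set.inter_univ] at this
    exact this.trans hbig.le

theorem lintegral_Ioi_rpow {a c s : ℝ} (ha : 0 < a) (hc : 0 ≤ c) (hs : s < -1) :
    ∫⁻ t in Set.Ioi a, ENNReal.ofReal (c * t ^ s) =
      ENNReal.ofReal (c * (a ^ (s + 1) / (-(s + 1)))) := by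
  rw [← ofReal_integral_eq_lintegral_ofReal ((integrableOn_Ioi_rpow_of_lt hs ha).const_mul c),
    integral_const_mul, integral_Ioi_rpow_of_lt hs ha, div_neg, neg_div]
  filter_upwards [ae_restrict_mem measurableSet_Ioi] with t ht
  have : 0 < t := ha.trans ht
  simp only [Pi.zero_apply]
  positivity

theorem lintegral_Ioc_zero_rpow {a c s : ℝ} (ha : 0 < a) (hc : 0 ≤ c) (hs : -1 < s) :
    ∫⁻ t in Set.Ioc 0 a, ENNReal.ofReal (c * t ^ s) =
      ENNReal.ofReal (c * (a ^ (s + 1) / (s + 1))) := by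
  have hi : IntegrableOn (fun t : ℝ => t ^ s) (Set.Ioc 0 a) :=
    (intervalIntegrable_iff_integrableOn_Ioc_of_le ha.le).1
      (intervalIntegral.intervalIntegrable_rpow' hs)
  rw [← ofReal_integral_eq_lintegral_ofReal (hi.const_mul c), integral_const_mul,
    ← intervalIntegral.integral_of_le ha.le, integral_rpow (Or.inl hs),
    zero_rpow (by linarith), sub_zero]
  filter_upwards [ae_restrict_mem measurableSet_Ioc] with t ht
  have : 0 < t := ht.1
  simp only [Pi.zero_apply]
  positivity

theorem lintegral_Ioc_inv {a b c : ℝ} (ha : 0 < a) (hab : a ≤ b) (hc : 0 ≤ c) :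
    ∫⁻ t in Set.Ioc a b, ENNReal.ofReal (c * t ^ (-1 : ℝ)) =
      ENNReal.ofReal (c * log (b / a)) := by
  have hb : 0 < b := ha.trans_le hab
  have hi : IntegrableOn (fun t : ℝ => t ^ (-1 : ℝ)) (Set.Ioc a b) := by
    refine (intervalIntegrable_iff_integrableOn_Ioc_of_le hab).1
      (intervalIntegral.intervalIntegrable_rpow (Or.inr ?_))
    rw [Set.uIcc_of_le hab]
    exact fun h => ha.not_ge h.1
  have he : ∫ t in a..b, t ^ (-1 : ℝ) = log (b / a) := by
    simp_rw [rpow_neg_one]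
    exact integral_inv_of_pos ha hb
  rw [← ofReal_integral_eq_lintegral_ofReal (hi.const_mul c), integral_const_mul,
    ← intervalIntegral.integral_of_le hab, he]
  filter_upwards [ae_restrict_mem measurableSet_Ioc] with t ht
  have : 0 < t := ha.trans ht.1
  simp only [Pi.zero_apply]
  positivity

section RadialIntegrals

variable {G : ℝ → ENNReal} {C R S α D : ℝ}

theorem lintegral_le_of_lt_one (hC : 0 ≤ C) (hS : 0 < S) (hα : 0 < α) (hα1 : α < 1)
    (h1 : ∀ t > 0, G t ≤ ENNReal.ofReal (C * t ^ (-α - 1)))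
    (h2 : ∀ t > 0, G t ≤ ENNReal.ofReal (C * S * t ^ (-α))) :
    ∫⁻ t in Set.Ioi 0, G t ≤ ENNReal.ofReal (C * (1 / α + 1 / (1 - α)) * S ^ α) := by
  have hS' : 0 < S⁻¹ := inv_pos.2 hS
  have hα1' : 0 < 1 - α := by linarith
  calc ∫⁻ t in Set.Ioi 0, G t
      ≤ (∫⁻ t in Set.Ioc 0 S⁻¹, G t) + ∫⁻ t in Set.Ioi S⁻¹, G t := by
        rw [← Set.Ioc_union_Ioi_eq_Ioi hS'.le]
        exact lintegral_union_le _ _ _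
    _ ≤ (∫⁻ t in Set.Ioc 0 S⁻¹, ENNReal.ofReal (C * S * t ^ (-α))) +
          ∫⁻ t in Set.Ioi S⁻¹, ENNReal.ofReal (C * t ^ (-α - 1)) :=
        add_le_add (setLIntegral_mono' measurableSet_Ioc fun t ht => h2 t ht.1)
          (setLIntegral_mono' measurableSet_Ioi fun t ht => h1 t (hS'.trans ht))
    _ = ENNReal.ofReal (C * (1 / α + 1 / (1 - α)) * S ^ α) := by
        rw [lintegral_Ioc_zero_rpow hS' (by positivity) (by linarith),
          lintegral_Ioi_rpow hS' hC (by linarith), ← ENNReal.ofReal_add]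
        · congr 1
          rw [inv_rpow hS.le, inv_rpow hS.le, ← rpow_neg hS.le, ← rpow_neg hS.le,
            show -(-α + 1) = α - 1 by ring, show -(-α - 1 + 1) = α by ring,
            show -α + 1 = 1 - α by ring, rpow_sub_one hS.ne']
          field_simp
          ring
        · rw [show -α + 1 = 1 - α by ring]; positivity
        · rw [show -(-α - 1 + 1) = α by ring]; positivity

theorem lintegral_le_of_eq_one (hC : 0 ≤ C) (hS : 0 < S) (hR : 2 * S ≤ R) (hD : 1 < D)
    (h1 : ∀ t > 0, G t ≤ ENNReal.ofReal (C * t ^ (-2 : ℝ)))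
    (h2 : ∀ t > 0, G t ≤ ENNReal.ofReal (C * S * t ^ (-1 : ℝ)))
    (h3 : ∀ t > 0, G t ≤ ENNReal.ofReal (C * S * R ^ (D - 1) * t ^ (D - 2))) :
    ∫⁻ t in Set.Ioi 0, G t ≤
      ENNReal.ofReal (C * (1 + (1 + 1 / (D - 1)) / log 2) * (S * log (R / S))) := by
  have hR0 : 0 < R := by linarith
  have hS' : 0 < S⁻¹ := inv_pos.2 hS
  have hR' : 0 < R⁻¹ := inv_pos.2 hR0
  have hRS : R⁻¹ ≤ S⁻¹ := inv_anti₀ hS (by linarith)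
  have hD' : 0 < D - 1 := by linarith
  have hl2 : 0 < log 2 := log_pos (by norm_num)
  have hl : log 2 ≤ log (R / S) := by
    apply log_le_log (by norm_num)
    rwa [le_div_iff₀ hS]
  have hl0 : 0 < log (R / S) := hl2.trans_le hl
  calc ∫⁻ t in Set.Ioi 0, G t
      ≤ ((∫⁻ t in Set.Ioc 0 R⁻¹, G t) + ∫⁻ t in Set.Ioc R⁻¹ S⁻¹, G t) +
          ∫⁻ t in Set.Ioi S⁻¹, G t := by
        rw [← Set.Ioc_union_Ioi_eq_Ioi hS'.le, ← Set.Ioc_union_Ioc_eq_Ioc hR'.le hRS]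
        exact (lintegral_union_le _ _ _).trans (add_le_add_left (lintegral_union_le _ _ _) _)
    _ ≤ ((∫⁻ t in Set.Ioc 0 R⁻¹, ENNReal.ofReal (C * S * R ^ (D - 1) * t ^ (D - 2))) +
          ∫⁻ t in Set.Ioc R⁻¹ S⁻¹, ENNReal.ofReal (C * S * t ^ (-1 : ℝ))) +
          ∫⁻ t in Set.Ioi S⁻¹, ENNReal.ofReal (C * t ^ (-2 : ℝ)) :=
        add_le_add (add_le_add (setLIntegral_mono' measurableSet_Ioc fun t ht => h3 t ht.1)
          (setLIntegral_mono' measurableSet_Ioc fun t ht => h2 t (hR'.trans ht.1)))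
          (setLIntegral_mono' measurableSet_Ioi fun t ht => h1 t (hS'.trans ht))
    _ = ENNReal.ofReal (C * S * (1 / (D - 1) + log (R / S) + 1)) := by
        rw [lintegral_Ioc_zero_rpow hR' (by positivity) (by linarith),
          lintegral_Ioc_inv hR' hRS (by positivity),
          lintegral_Ioi_rpow hS' hC (by norm_num), inv_div_inv,
          show D - 2 + 1 = D - 1 by ring, inv_rpow hR0.le,
          show (-2 + 1 : ℝ) = -1 by norm_num, rpow_neg_one, inv_inv,
          ← ENNReal.ofReal_add (by positivity) (by positivity),
          ← ENNReal.ofReal_add (by positivity) (by positivity)]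
        congr 1
        have : R ^ (D - 1) ≠ 0 := (rpow_pos_of_pos hR0 _).ne'
        field_simp
    _ ≤ _ := by
        apply ENNReal.ofReal_le_ofReal
        have h4 : (1 + 1 / (D - 1)) ≤ (1 + 1 / (D - 1)) / log 2 * log (R / S) := by
          rw [div_mul_eq_mul_div, le_div_iff₀ hl2]
          gcongr
        calc C * S * (1 / (D - 1) + log (R / S) + 1)
            = C * S * (log (R / S) + (1 + 1 / (D - 1))) := by ring
          _ ≤ C * S * (log (R / S) + (1 + 1 / (D - 1)) / log 2 * log (R / S)) := by gcongr
          _ = _ := by ring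

theorem lintegral_le_of_one_lt (hC : 0 ≤ C) (hS : 0 < S) (hR : 0 < R) (hα : 1 < α) (hαD : α < D)
    (h2 : ∀ t > 0, G t ≤ ENNReal.ofReal (C * S * t ^ (-α)))
    (h3 : ∀ t > 0, G t ≤ ENNReal.ofReal (C * S * R ^ (D - 1) * t ^ (D - α - 1))) :
    ∫⁻ t in Set.Ioi 0, G t ≤
      ENNReal.ofReal (C * (1 / (D - α) + 1 / (α - 1)) * (S * R ^ (α - 1))) := by
  have hR' : 0 < R⁻¹ := inv_pos.2 hR
  have hα' : 0 < α - 1 := by linarith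
  have hD' : 0 < D - α := by linarith
  calc ∫⁻ t in Set.Ioi 0, G t
      ≤ (∫⁻ t in Set.Ioc 0 R⁻¹, G t) + ∫⁻ t in Set.Ioi R⁻¹, G t := by
        rw [← Set.Ioc_union_Ioi_eq_Ioi hR'.le]
        exact lintegral_union_le _ _ _
    _ ≤ (∫⁻ t in Set.Ioc 0 R⁻¹, ENNReal.ofReal (C * S * R ^ (D - 1) * t ^ (D - α - 1))) +
          ∫⁻ t in Set.Ioi R⁻¹, ENNReal.ofReal (C * S * t ^ (-α)) :=
        add_le_add (setLIntegral_mono' measurableSet_Ioc fun t ht => h3 t ht.1)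
          (setLIntegral_mono' measurableSet_Ioi fun t ht => h2 t (hR'.trans ht))
    _ = _ := by
        rw [lintegral_Ioc_zero_rpow hR' (by positivity) (by linarith),
          lintegral_Ioi_rpow hR' (by positivity) (by linarith),
          show D - α - 1 + 1 = D - α by ring, show -(-α + 1) = α - 1 by ring,
          ← ENNReal.ofReal_add (by positivity) (by positivity),
          inv_rpow hR.le, inv_rpow hR.le, ← rpow_neg hR.le, ← rpow_neg hR.le,
          show -(-α + 1) = α - 1 by ring]
        congr 1
        have : R ^ (α - 1) = R ^ (D - 1) * R ^ (-(D - α)) := by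
          rw [← rpow_add hR]; congr 1; ring
        rw [this]
        ring

end RadialIntegrals

theorem lintegral_shell_inv_norm_rpow_le {d : ℕ} {R S p K : ℝ} (hp : 0 < p)
    (x : EuclideanSpace ℝ (Fin d))
    (hK : ∫⁻ t in Set.Ioi (0 : ℝ), ENNReal.ofReal
      (volume.real (shell d R S ∩ Metric.ball x t⁻¹) * t ^ (p - 1)) ≤ ENNReal.ofReal K) :
    ∫⁻ y in shell d R S, ENNReal.ofReal (‖x - y‖⁻¹ ^ p) ≤ ENNReal.ofReal (p * K) := by
  rw [lintegral_rpow_eq_lintegral_meas_lt_mul _ (Filter.Eventually.of_forall fun y => by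
    simp only [Pi.zero_apply]; positivity) (by fun_prop) hp, ENNReal.ofReal_mul hp.le]
  gcongr
  refine (setLIntegral_mono' measurableSet_Ioi fun t ht => ?_).trans hK
  have ht0 : (0 : ℝ) < t := ht
  have hm : MeasurableSet {y | t < ‖x - y‖⁻¹} :=
    measurableSet_lt measurable_const (by fun_prop)
  have hsub : {y | t < ‖x - y‖⁻¹} ∩ shell d R S ⊆ shell d R S ∩ Metric.ball x t⁻¹ := by
    rintro y ⟨hy, hyA⟩
    refine ⟨hyA, ?_⟩
    rw [Metric.mem_ball, dist_comm, dist_eq_norm]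
    have hy' : t < ‖x - y‖⁻¹ := hy
    exact (lt_inv_comm₀ ht0 (inv_pos.1 (ht0.trans hy'))).1 hy'
  rw [Measure.restrict_apply hm, ENNReal.ofReal_mul measureReal_nonneg,
    ofReal_measureReal (measure_ne_top_of_subset Set.inter_subset_right measure_ball_lt_top.ne)]
  gcongr

theorem integral_integral_div_norm_rpow_le {d : ℕ} {A : Set (EuclideanSpace ℝ (Fin d))}
    {u : EuclideanSpace ℝ (Fin d) → ℝ} {B J V p : ℝ} (hA : MeasurableSet A)
    (hAfin : volume A ≠ ⊤) (hV : volume.real A ≤ V) (hu0 : ∀ x, 0 ≤ u x) (huB : ∀ x, u x ≤ B)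
    (hu : ∀ x ∉ A, u x = 0) (hJ0 : 0 ≤ J)
    (hJ : ∀ x, ∫⁻ y in A, ENNReal.ofReal (‖x - y‖⁻¹ ^ p) ≤ ENNReal.ofReal J) :
    ∫ x, ∫ y, u x * u y / ‖x - y‖ ^ p ≤ B ^ 2 * J * V := by
  have hB : 0 ≤ B := (hu0 0).trans (huB 0)
  have inner : ∀ x, ‖∫ y, u x * u y / ‖x - y‖ ^ p‖ ≤ B ^ 2 * J := by
    intro x
    rw [← ENNReal.ofReal_le_ofReal_iff (by positivity), ofReal_norm]
    calc ‖∫ y, u x * u y / ‖x - y‖ ^ p‖ₑ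
        ≤ ∫⁻ y, ‖u x * u y / ‖x - y‖ ^ p‖ₑ := enorm_integral_le_lintegral_enorm _
      _ ≤ ∫⁻ y, A.indicator
            (fun y => ENNReal.ofReal (B ^ 2) * ENNReal.ofReal (‖x - y‖⁻¹ ^ p)) y := by
          refine lintegral_mono fun y => ?_
          by_cases hy : y ∈ A
          · rw [Set.indicator_of_mem hy, ← ENNReal.ofReal_mul (by positivity),
              Real.enorm_of_nonneg (div_nonneg (mul_nonneg (hu0 x) (hu0 y)) (by positivity)),
              inv_rpow (norm_nonneg _), ← div_eq_mul_inv, sq]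
            apply ENNReal.ofReal_le_ofReal
            gcongr
            · exact hu0 y
            · exact huB x
            · exact huB y
          · simp [hu y hy]
      _ = ENNReal.ofReal (B ^ 2) * ∫⁻ y in A, ENNReal.ofReal (‖x - y‖⁻¹ ^ p) := by
          rw [lintegral_indicator hA, lintegral_const_mul' _ _ ENNReal.ofReal_ne_top]
      _ ≤ ENNReal.ofReal (B ^ 2 * J) := by
          rw [ENNReal.ofReal_mul (by positivity)]
          gcongr
          exact hJ x
  rw [← setIntegral_eq_integral_of_forall_compl_eq_zero (s := A) fun x hx => by simp [hu x hx]]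
  calc _ ≤ ‖∫ x in A, ∫ y, u x * u y / ‖x - y‖ ^ p‖ := le_norm_self _
    _ ≤ B ^ 2 * J * volume.real A :=
        norm_setIntegral_le_of_norm_le_const hAfin.lt_top fun x _ => inner x
    _ ≤ B ^ 2 * J * V := by gcongr

/-- The Coulomb energy of a bump function on a shell is controlled by any bound `K` for the
Coulomb potential of the shell, written as an integral over the radii `t⁻¹`. -/
theorem coulomb_energy_le {d : ℕ} {q α M V K l R S : ℝ} {η : ℝ → ℝ} (hq : 0 < q) (hαd : α < d)
    (hM : ∀ t, |η t| ≤ M) (hη : ∀ t, 1 ≤ |t| → η t = 0) (hl : 0 < l) (hS : 0 < S) (hK0 : 0 ≤ K)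
    (hV : volume.real (shell d R S) ≤ V)
    (hK : ∀ x, ∫⁻ t in Set.Ioi (0 : ℝ), ENNReal.ofReal
      (volume.real (shell d R S ∩ Metric.ball x t⁻¹) * t ^ ((d : ℝ) - α - 1)) ≤
        ENNReal.ofReal K) :
    (∫ x : EuclideanSpace ℝ (Fin d), ∫ y : EuclideanSpace ℝ (Fin d),
        |l * η ((‖x‖ - R) / S)| ^ q * |l * η ((‖y‖ - R) / S)| ^ q / ‖x - y‖ ^ ((d : ℝ) - α)) ≤
      M ^ (2 * q) * (d - α) * l ^ (2 * q) * (K * V) := by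
  have hM0 : 0 ≤ M := (abs_nonneg _).trans (hM 0)
  have hp : 0 < (d : ℝ) - α := sub_pos.2 hαd
  refine (integral_integral_div_norm_rpow_le (u := fun x => |l * η ((‖x‖ - R) / S)| ^ q)
    (B := (l * M) ^ q) (measurableSet_shell d R S) (volume_shell_ne_top d R S) hV
    (fun x => by positivity) (fun x => ?_) (fun x hx => ?_) (by positivity)
    (fun x => lintegral_shell_inv_norm_rpow_le hp x (hK x))).trans_eq ?_
  · rw [abs_mul, abs_of_pos hl]
    gcongr
    exact hM _
  · rw [hη, mul_zero, abs_zero, zero_rpow hq.ne']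
    by_contra h
    rw [not_le, abs_div, abs_of_pos hS, div_lt_one hS, abs_lt] at h
    exact hx ⟨by linarith [h.1], by linarith [h.2]⟩
  · rw [← rpow_natCast, ← rpow_mul (by positivity), mul_rpow hl.le hM0,
      show q * ((2 : ℕ) : ℝ) = 2 * q by push_cast; ring]
    ring

theorem stmt19 (d : ℕ) (hd : 1 ≤ d) (q α : ℝ)
    (hq1 : 1 ≤ q) (hα0 : 0 < α) (hαd : α < d)
    (η : ℝ → ℝ) (hη : ContDiff ℝ (⊤ : ℕ∞) η) (hηc : HasCompactSupport η)
    (hηsupp : tsupport η ⊆ Set.Ioo (-1 : ℝ) 1) (hη0 : 0 ∉ tsupport η)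
    (hηnonneg : ∀ t, 0 ≤ η t) :
    ∃ C > 0, ∀ l R S : ℝ, 0 < l → 0 < S → 2 * S ≤ R →
      (1 < α →
        (∫ x : EuclideanSpace ℝ (Fin d), ∫ y : EuclideanSpace ℝ (Fin d),
            |l * η ((‖x‖ - R) / S)| ^ q * |l * η ((‖y‖ - R) / S)| ^ q /
              ‖x - y‖ ^ ((d : ℝ) - α)) ≤
          C * l ^ (2 * q) * R ^ ((d : ℝ) + α - 2) * S ^ (2 : ℝ)) ∧
      (α = 1 →
        (∫ x : EuclideanSpace ℝ (Fin d), ∫ y : EuclideanSpace ℝ (Fin d),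
            |l * η ((‖x‖ - R) / S)| ^ q * |l * η ((‖y‖ - R) / S)| ^ q /
              ‖x - y‖ ^ ((d : ℝ) - α)) ≤
          C * l ^ (2 * q) * R ^ ((d : ℝ) - 1) * S ^ (2 : ℝ) * Real.log (R / S)) ∧
      (α < 1 →
        (∫ x : EuclideanSpace ℝ (Fin d), ∫ y : EuclideanSpace ℝ (Fin d),
            |l * η ((‖x‖ - R) / S)| ^ q * |l * η ((‖y‖ - R) / S)| ^ q /
              ‖x - y‖ ^ ((d : ℝ) - α)) ≤
          C * l ^ (2 * q) * R ^ ((d : ℝ) - 1) * S ^ (1 + α)) := by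
  have hq : 0 < q := one_pos.trans_le hq1
  have hp : 0 < (d : ℝ) - α := sub_pos.2 hαd
  obtain ⟨M, hM⟩ : ∃ M > 0, ∀ t, |η t| ≤ M := by
    obtain ⟨M, hM⟩ := hηc.exists_bound_of_continuous hη.continuous
    exact ⟨max M 1, lt_max_of_lt_right one_pos, fun t => (hM t).trans (le_max_left _ _)⟩
  obtain ⟨hM0, hM⟩ := hM
  have hηz : ∀ t, 1 ≤ |t| → η t = 0 := by
    intro t ht
    by_contra h
    exact (abs_lt.2 (hηsupp (subset_tsupport _ h))).not_ge ht
  obtain ⟨C, hC, hvol⟩ := exists_volume_shell_inter_ball_le d hd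
  have hG1 : ∀ R S : ℝ, 0 < S → 2 * S ≤ R → ∀ (x : EuclideanSpace ℝ (Fin d)), ∀ t > 0,
      ENNReal.ofReal (volume.real (shell d R S ∩ Metric.ball x t⁻¹) * t ^ ((d : ℝ) - α - 1)) ≤
        ENNReal.ofReal (C * t ^ (-α - 1)) := by
    intro R S hS hR x t ht
    apply ENNReal.ofReal_le_ofReal
    calc _ ≤ C * t⁻¹ ^ (d : ℝ) * t ^ ((d : ℝ) - α - 1) := by
          gcongr
          exact (hvol R S t⁻¹ hS hR (inv_pos.2 ht) x).1
      _ = _ := by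
          rw [inv_rpow ht.le, ← rpow_neg ht.le, mul_assoc, ← rpow_add ht]
          ring_nf
  have hG2 : ∀ R S : ℝ, 0 < S → 2 * S ≤ R → ∀ (x : EuclideanSpace ℝ (Fin d)), ∀ t > 0,
      ENNReal.ofReal (volume.real (shell d R S ∩ Metric.ball x t⁻¹) * t ^ ((d : ℝ) - α - 1)) ≤
        ENNReal.ofReal (C * S * t ^ (-α)) := by
    intro R S hS hR x t ht
    apply ENNReal.ofReal_le_ofReal
    calc _ ≤ C * S * t⁻¹ ^ ((d : ℝ) - 1) * t ^ ((d : ℝ) - α - 1) := by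
          gcongr
          exact (hvol R S t⁻¹ hS hR (inv_pos.2 ht) x).2.1
      _ = _ := by
          rw [inv_rpow ht.le, ← rpow_neg ht.le, mul_assoc, ← rpow_add ht]
          ring_nf
  have hG3 : ∀ R S : ℝ, 0 < S → 2 * S ≤ R → ∀ (x : EuclideanSpace ℝ (Fin d)), ∀ t > 0,
      ENNReal.ofReal (volume.real (shell d R S ∩ Metric.ball x t⁻¹) * t ^ ((d : ℝ) - α - 1)) ≤
        ENNReal.ofReal (C * S * R ^ ((d : ℝ) - 1) * t ^ ((d : ℝ) - α - 1)) := by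
    intro R S hS hR x t ht
    apply ENNReal.ofReal_le_ofReal
    gcongr
    exact (hvol R S t⁻¹ hS hR (inv_pos.2 ht) x).2.2.1
  have hV : ∀ R S : ℝ, 0 < S → 2 * S ≤ R →
      volume.real (shell d R S) ≤ C * S * R ^ ((d : ℝ) - 1) :=
    fun R S hS hR => (hvol R S 1 hS hR one_pos 0).2.2.2
  rcases lt_trichotomy α 1 with hα | rfl | hα
  · have hα1 : 0 < 1 - α := sub_pos.2 hα
    refine ⟨M ^ (2 * q) * (d - α) * (C * (1 / α + 1 / (1 - α)) * C), by positivity,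
      fun l R S hl hS hR => ⟨fun h => absurd h hα.not_gt, fun h => absurd h hα.ne, fun _ => ?_⟩⟩
    refine (coulomb_energy_le hq hαd hM hηz hl hS (by positivity) (hV R S hS hR)
      fun x => lintegral_le_of_lt_one hC.le hS hα0 hα (hG1 R S hS hR x)
        (hG2 R S hS hR x)).trans_eq ?_
    rw [rpow_add hS, rpow_one]
    ring
  · have hl2 : 0 < log 2 := log_pos (by norm_num)
    refine ⟨M ^ (2 * q) * (d - 1) * (C * (1 + (1 + 1 / ((d : ℝ) - 1)) / log 2) * C),
      by positivity, fun l R S hl hS hR =>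
        ⟨fun h => absurd h (lt_irrefl _), fun _ => ?_, fun h => absurd h (lt_irrefl _)⟩⟩
    have hlog : 0 ≤ log (R / S) := by
      apply log_nonneg
      rw [le_div_iff₀ hS]
      linarith
    refine (coulomb_energy_le hq hαd hM hηz hl hS (by positivity) (hV R S hS hR)
      fun x => lintegral_le_of_eq_one hC.le hS hR hαd (fun t ht => ?_) (hG2 R S hS hR x)
        (fun t ht => ?_)).trans_eq ?_
    · have := hG1 R S hS hR x t ht
      rwa [show (-1 - 1 : ℝ) = -2 by norm_num] at this
    · have := hG3 R S hS hR x t ht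
      rwa [show (d : ℝ) - 2 = d - 1 - 1 by ring]
    · rw [rpow_two]
      ring
  · have hα1 : 0 < α - 1 := sub_pos.2 hα
    refine ⟨M ^ (2 * q) * (d - α) * (C * (1 / (d - α) + 1 / (α - 1)) * C), by positivity,
      fun l R S hl hS hR => ⟨fun _ => ?_, fun h => absurd h hα.ne', fun h => absurd h hα.not_gt⟩⟩
    have hR0 : 0 < R := by linarith
    refine (coulomb_energy_le hq hαd hM hηz hl hS (by positivity) (hV R S hS hR)
      fun x => lintegral_le_of_one_lt hC.le hS hR0 hα hαd (hG2 R S hS hR x)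
        (hG3 R S hS hR x)).trans_eq ?_
    rw [rpow_two, show (d : ℝ) + α - 2 = (α - 1) + (d - 1) by ring, rpow_add hR0]
    ring
end
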